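/- Let d ≥ 3 and let D ⊂ ℝ^d be a bounded strongly minimally convex domain. Then the metric space (D, ρ_D) is Gromov hyperbolic: there exists δ ≥ 0 such that for all x, y, z, o ∈ D one has (x|y)_o ≥ min((x|z)_o, (y|z)_o) − δ, where the Gromov products are taken with respect to the minimal distance ρ_D. -/

import Mathlib

/-!
The domain `D` is compared with a hyperbolic filling of its closure. Let `S` be a `C¹` function on
`D` comparable to the distance to the boundary, put `h = √S` and
`G x y = 2 log ((‖x - y‖ + h x ∨ h y) / √(h x * h y))`. The quasi-distance `‖x - y‖ + h x ∨ h y`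
satisfies a Ptolemy-type inequality, so `G` satisfies the four-point condition (`fill_four`), and
the minimal distance `ρ` is to inherit it.

*Upper bounds.* Flat conformal disks show that moving along the gradient of the defining function,
or tangentially by `√S` at height `S`, costs a bounded amount of `ρ` (`BdryData.vertical`,
`BdryData.horizontal`). The hypothesis `d ≥ 3` leaves room to choose the second direction of the
disk tangent to the level sets. Hence `ρ` is coarsely controlled by `G` (`comparison_of_filling`).

*Lower bounds.* There is a bounded function on `D` whose Hessian has positive trace on every
2-plane (`BdryData.exists_psh`). Mean value estimates along conformal harmonic disks then give
`‖v‖ ≤ C √S g_D(x, v)` and a Lipschitz bound for `log S` (`StrongPsh.norm_le_minMetric`,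
`StrongPsh.abs_le_minMetric`). Hence points with `ρ ≤ 1` are at bounded `G` (`HeightData.fill_le`).

*Transfer.* The quasi-intervals of `G` form a slim family of connecting sets. A bisection argument
in the style of the guessing-geodesics lemma (`Comparison.stable`) shows that they stay within
bounded distance of rough geodesics of `ρ`. Points of a quasi-interval of `G` are therefore almost
between its ends for `ρ`, and hyperbolicity passes from `G` to `ρ` (`Comparison.hyperbolic`).
-/

open scoped RealInnerProductSpace ENNReal
open Metric Set Filter

noncomputable section

/-- Euclidean space `ℝ^d`. -/
abbrev Euc (d : ℕ) := EuclideanSpace ℝ (Fin d)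

/-- The open unit disk in `ℝ²`. -/
def unitDisk : Set (Euc 2) := Metric.ball 0 1

/-- Partial derivative of `f` at `z` in the `i`-th coordinate direction. -/
def pd {d : ℕ} (i : Fin 2) (f : Euc 2 → Euc d) (z : Euc 2) : Euc d :=
  fderiv ℝ f z (EuclideanSpace.single i 1)

/-- `f` is a conformal harmonic map on the unit disk: it is `C²`, its (vector)
Laplacian vanishes (equivalently, every component is harmonic), and at each point
its two partial derivatives are orthogonal and of equal norm. -/
def ConformalHarmonicOnDisk {d : ℕ} (f : Euc 2 → Euc d) : Prop :=
  ContDiffOn ℝ 2 f unitDisk ∧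
  (∀ z ∈ unitDisk,
    fderiv ℝ (pd 0 f) z (EuclideanSpace.single 0 1)
      + fderiv ℝ (pd 1 f) z (EuclideanSpace.single 1 1) = 0) ∧
  (∀ z ∈ unitDisk, ‖pd 0 f z‖ = ‖pd 1 f z‖ ∧ ⟪pd 0 f z, pd 1 f z⟫ = 0)

/-- The minimal (Forstnerič–Kalaj) metric of a domain `D ⊆ ℝ^d`:
`g_D(x,v) = inf {1/r : r > 0, f ∈ CH(𝔻, D), f 0 = x, f_x 0 = r • v}`. -/
def minMetric {d : ℕ} (D : Set (Euc d)) (x v : Euc d) : ℝ :=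
  sInf {c : ℝ | ∃ r : ℝ, 0 < r ∧ c = 1 / r ∧
    ∃ f : Euc 2 → Euc d, ConformalHarmonicOnDisk f ∧ (∀ z ∈ unitDisk, f z ∈ D) ∧
      f 0 = x ∧ pd 0 f 0 = r • v}

/-- `γ` is a piecewise `C¹` curve on `[a, b]`. -/
def PiecewiseC1On {d : ℕ} (γ : ℝ → Euc d) (a b : ℝ) : Prop :=
  ContinuousOn γ (Set.Icc a b) ∧
  ∃ (n : ℕ) (t : Fin (n + 2) → ℝ), Monotone t ∧ t 0 = a ∧ t (Fin.last (n + 1)) = b ∧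
    ∀ i : Fin (n + 1), ContDiffOn ℝ 1 γ (Set.Icc (t i.castSucc) (t i.succ))

/-- The minimal pseudodistance `ρ_D`: infimum of minimal lengths of piecewise `C¹`
curves in `D` joining `x` to `y`. -/
def minDist {d : ℕ} (D : Set (Euc d)) (x y : Euc d) : ℝ :=
  sInf {L : ℝ | ∃ γ : ℝ → Euc d, PiecewiseC1On γ 0 1 ∧
    (∀ t ∈ Set.Icc (0:ℝ) 1, γ t ∈ D) ∧ γ 0 = x ∧ γ 1 = y ∧
    L = ∫ t in (0:ℝ)..(1:ℝ), minMetric D (γ t) (deriv γ t)}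

/-- The Gromov product `(x|y)_o` with respect to the minimal pseudodistance of `D`. -/
def gromovProd {d : ℕ} (D : Set (Euc d)) (o x y : Euc d) : ℝ :=
  (minDist D x o + minDist D y o - minDist D x y) / 2

/-- `D` is hyperbolic: the minimal pseudodistance is a genuine distance. -/
def MinHyperbolic {d : ℕ} (D : Set (Euc d)) : Prop :=
  ∀ x ∈ D, ∀ y ∈ D, x ≠ y → 0 < minDist D x y

/-- The Hessian quadratic form of `u` at `x` in direction `v`. -/
def hessQ {d : ℕ} (u : Euc d → ℝ) (x v : Euc d) : ℝ :=
  fderiv ℝ (fun y => fderiv ℝ u y v) x v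

/-- `D` is a bounded domain with `C²` boundary, described by a `C²` defining
function `u` on a neighborhood `U` of `∂D` with nonvanishing differential. -/
def IsC2BoundedDomain {d : ℕ} (D : Set (Euc d)) : Prop :=
  IsOpen D ∧ IsConnected D ∧ Bornology.IsBounded D ∧
  ∃ (U : Set (Euc d)) (u : Euc d → ℝ), IsOpen U ∧ frontier D ⊆ U ∧ ContDiffOn ℝ 2 u U ∧
    D ∩ U = {x | x ∈ U ∧ u x < 0} ∧ frontier D = {x | x ∈ U ∧ u x = 0} ∧
    ∀ x ∈ frontier D, fderiv ℝ u x ≠ 0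

/-- `D` is a bounded strongly minimally convex domain: it has a `C²` defining function
which is strongly minimally plurisubharmonic near `∂D`, i.e. the trace of its Hessian
on every 2-plane (spanned by an orthonormal pair `v, w`) is strictly positive. -/
def IsStronglyMinimallyConvex {d : ℕ} (D : Set (Euc d)) : Prop :=
  IsOpen D ∧ IsConnected D ∧ Bornology.IsBounded D ∧
  ∃ (U : Set (Euc d)) (u : Euc d → ℝ), IsOpen U ∧ frontier D ⊆ U ∧ ContDiffOn ℝ 2 u U ∧
    D ∩ U = {x | x ∈ U ∧ u x < 0} ∧ frontier D = {x | x ∈ U ∧ u x = 0} ∧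
    (∀ x ∈ frontier D, fderiv ℝ u x ≠ 0) ∧
    (∀ x ∈ U, ∀ v w : Euc d, ‖v‖ = 1 → ‖w‖ = 1 → ⟪v, w⟫ = 0 →
      0 < hessQ u x v + hessQ u x w)

/-- `D` is a bounded strongly convex domain: convex, with a `C²` defining function whose
Hessian is positive definite on the tangent space at every boundary point
(equivalently, all principal curvatures of `∂D` w.r.t. the inner normal are positive). -/
def IsStronglyConvexDomain {d : ℕ} (D : Set (Euc d)) : Prop :=
  IsOpen D ∧ IsConnected D ∧ Bornology.IsBounded D ∧ Convex ℝ D ∧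
  ∃ (U : Set (Euc d)) (u : Euc d → ℝ), IsOpen U ∧ frontier D ⊆ U ∧ ContDiffOn ℝ 2 u U ∧
    D ∩ U = {x | x ∈ U ∧ u x < 0} ∧ frontier D = {x | x ∈ U ∧ u x = 0} ∧
    (∀ x ∈ frontier D, fderiv ℝ u x ≠ 0) ∧
    (∀ ξ ∈ frontier D, ∀ w : Euc d, w ≠ 0 → fderiv ℝ u ξ w = 0 → 0 < hessQ u ξ w)

/-- For `x ∈ D` with nearest boundary point `p`, the outer unit normal direction
`n_{π(x)} = (p - x)/‖p - x‖`. -/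
def nvec {d : ℕ} (x p : Euc d) : Euc d := ‖p - x‖⁻¹ • (p - x)

/-- Normal component of `v` at `x` with nearest boundary point `p`. -/
def vN {d : ℕ} (x p v : Euc d) : Euc d := ⟪v, nvec x p⟫ • nvec x p

/-- Tangential component of `v` at `x` with nearest boundary point `p`. -/
def vT {d : ℕ} (x p v : Euc d) : Euc d := v - vN x p v

/-- The intrinsic distance `H` on the boundary `∂D`: infimum of Euclidean lengths of
piecewise `C¹` curves in `∂D` joining two boundary points. -/
def bdist {d : ℕ} (D : Set (Euc d)) (ξ η : Euc d) : ℝ :=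
  sInf {L : ℝ | ∃ α : ℝ → Euc d, PiecewiseC1On α 0 1 ∧
    (∀ t ∈ Set.Icc (0:ℝ) 1, α t ∈ frontier D) ∧ α 0 = ξ ∧ α 1 = η ∧
    L = ∫ t in (0:ℝ)..(1:ℝ), ‖deriv α t‖}

/-- `h(x) = δ_D(x)^{1/2}`. -/
def hfun {d : ℕ} (D : Set (Euc d)) (x : Euc d) : ℝ :=
  Real.sqrt (Metric.infDist x (frontier D))

/-- The length of a curve with respect to the boundary Finsler metric
`F(x,v) = ‖v_N‖/(2 δ_D(x)) + ‖v_T‖/δ_D(x)^{1/2}`. -/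
def Flen {d : ℕ} (D : Set (Euc d)) (π : Euc d → Euc d) (γ : ℝ → Euc d) : ℝ :=
  ∫ t in (0:ℝ)..(1:ℝ),
    (‖vN (γ t) (π (γ t)) (deriv γ t)‖ / (2 * Metric.infDist (γ t) (frontier D))
      + ‖vT (γ t) (π (γ t)) (deriv γ t)‖ / Real.sqrt (Metric.infDist (γ t) (frontier D)))

/-- The filling Finsler metric `F`: the boundary Finsler metric on
`N = {δ_D ≤ ε}` and `c‖v‖` elsewhere. -/
def Fmet {d : ℕ} (D : Set (Euc d)) (π : Euc d → Euc d) (ε c : ℝ) (x v : Euc d) : ℝ :=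
  if Metric.infDist x (frontier D) ≤ ε then
    ‖vN x (π x) v‖ / (2 * Metric.infDist x (frontier D))
      + ‖vT x (π x) v‖ / Real.sqrt (Metric.infDist x (frontier D))
  else c * ‖v‖

/-- The intrinsic distance `d_F` associated to the filling Finsler metric `F`. -/
def dF {d : ℕ} (D : Set (Euc d)) (π : Euc d → Euc d) (ε c : ℝ) (x y : Euc d) : ℝ :=
  sInf {L : ℝ | ∃ γ : ℝ → Euc d, PiecewiseC1On γ 0 1 ∧
    (∀ t ∈ Set.Icc (0:ℝ) 1, γ t ∈ D) ∧ γ 0 = x ∧ γ 1 = y ∧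
    L = ∫ t in (0:ℝ)..(1:ℝ), Fmet D π ε c (γ t) (deriv γ t)}

/-- The hyperbolic filling distance
`d_H(x,y) = 2 log((H(π x, π y) + h(x) ∨ h(y)) / √(h(x) h(y)))`. -/
def dH {d : ℕ} (D : Set (Euc d)) (π : Euc d → Euc d) (x y : Euc d) : ℝ :=
  2 * Real.log ((bdist D (π x) (π y) + max (hfun D x) (hfun D y)) /
    Real.sqrt (hfun D x * hfun D y))

/-- `δ̂_D(x,v)`: the supremum over 2-dimensional linear subspaces `Λ ∋ v` of the
distance (in `ℝ≥0∞`, so `∞` if `x + Λ ⊆ D`) from `x` to `(x + Λ) \ D`. -/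
def deltaHat {d : ℕ} (D : Set (Euc d)) (x v : Euc d) : ℝ≥0∞ :=
  ⨆ (Λ : Submodule ℝ (Euc d)) (_ : Module.finrank ℝ Λ = 2) (_ : v ∈ Λ),
    ⨅ (y : Euc d) (_ : y - x ∈ Λ ∧ y ∉ D), edist x y

/-- The positive parameter at which the ray `t ↦ x + t • v` exits the convex domain `D`
(equal to `0`, by the `sInf ∅ = 0` convention, when the ray stays in `D`,
i.e. when the corresponding chord endpoint is the point at infinity). -/
def chordParam {d : ℕ} (D : Set (Euc d)) (x v : Euc d) : ℝ :=
  sInf {s : ℝ | 0 < s ∧ x + s • v ∉ D}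

/-- The Hilbert Finsler metric `h_D(x,v) = (‖v‖/2)(1/‖x-a‖ + 1/‖x-b‖)` of a convex
domain, with the convention `1/‖x-∞‖ = 0` (here `‖x-b‖ = chordParam D x v • ‖v‖` and
`‖x-a‖ = chordParam D x (-v) • ‖v‖`, and division by zero is zero). -/
def hilbertFinsler {d : ℕ} (D : Set (Euc d)) (x v : Euc d) : ℝ :=
  (1/2) * (1 / chordParam D x v + 1 / chordParam D x (-v))

/- The Hilbert distance of a convex domain: for `x ≠ y`,
`H_D(x,y) = ½ log((‖x-b‖ ‖y-a‖)/(‖x-a‖ ‖y-b‖))` where `a, x, y, b` are aligned on the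
chord through `x, y`, with the convention that ratios involving the point at infinity
(detected by `chordParam = 0`) are equal to `1`. -/
open Classical in
def hilbertDist {d : ℕ} (D : Set (Euc d)) (x y : Euc d) : ℝ :=
  if x = y then 0 else
    (1/2) * Real.log
      ((if chordParam D x (y - x) = 0 then 1
        else chordParam D x (y - x) / (chordParam D x (y - x) - 1)) *
       (if chordParam D x (x - y) = 0 then 1
        else (1 + chordParam D x (x - y)) / chordParam D x (x - y)))

/-! ### A hyperbolicity criterion by stability of quasi-intervals -/

/-- The quasi-interval `{p : G x p + G p y ≤ G x y + K}` between `x` and `y`. -/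
def Eta {X : Type*} (G : X → X → ℝ) (K : ℝ) (x y p : X) : Prop :=
  G x p + G p y ≤ G x y + K

/-- A sequence whose first `N + 1` terms are spaced, up to an additive error `2`, like the
integers `0, …, N`: a discrete rough geodesic. -/
def RoughChain {X : Type*} (ρ : X → X → ℝ) (c : ℕ → X) (N : ℕ) : Prop :=
  ∀ i j : ℕ, i ≤ j → j ≤ N →
    ρ (c i) (c j) ≤ (j : ℝ) - i ∧ (j : ℝ) - i - 2 ≤ ρ (c i) (c j)

/-- The comparison situation: `ρ` is a pseudodistance with discrete rough geodesics, `G` is a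
roughly geodesic, four-point hyperbolic gauge, `ρ` is coarsely Lipschitz in `G`, and points at
`ρ`-distance at most `1` are at bounded `G`-distance. -/
structure Comparison {X : Type*} (ρ G : X → X → ℝ) (K L : ℝ) : Prop where
  K_nonneg : 0 ≤ K
  L_nonneg : 0 ≤ L
  rho_nonneg : ∀ x y, 0 ≤ ρ x y
  rho_self : ∀ x, ρ x x = 0
  rho_symm : ∀ x y, ρ x y = ρ y x
  rho_tri : ∀ x y z, ρ x z ≤ ρ x y + ρ y z
  chain : ∀ x y, ∃ (c : ℕ → X) (N : ℕ), c 0 = x ∧ c N = y ∧ RoughChain ρ c N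
  G_nonneg : ∀ x y, 0 ≤ G x y
  G_symm : ∀ x y, G x y = G y x
  G_self : ∀ x, G x x = 0
  four : ∀ x y z w, G x y + G z w ≤ max (G x z + G y w) (G x w + G y z) + K
  geod : ∀ x y t, 0 ≤ t → t ≤ G x y → ∃ p, G x p ≤ t + K ∧ G p y ≤ G x y - t + K
  upper : ∀ x y, ρ x y ≤ L * G x y + L
  lower : ∀ x y, ρ x y ≤ 1 → G x y ≤ L

namespace Comparison

variable {X : Type*} {ρ G : X → X → ℝ} {K L : ℝ}

lemma eta_split (H : Comparison ρ G K L) {K₁ : ℝ} {x y p : X} (hp : Eta G K₁ x y p) (z : X) :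
    Eta G (K₁ + K) x z p ∨ Eta G (K₁ + K) z y p := by
  have h := H.four p z x y
  have e1 := H.G_symm p x
  have e2 := H.G_symm p z
  have e3 := H.G_symm z x
  unfold Eta at *
  rcases max_cases (G p x + G z y) (G p y + G z x) with ⟨h1, -⟩ | ⟨h1, -⟩
  · right; rw [h1] at h; linarith
  · left; rw [h1] at h; linarith

/-- A coarse quasi-interval lies in a bounded neighbourhood of the quasi-interval with the fixed
constant `2 * K`. -/
lemma eta_close (H : Comparison ρ G K L) {K₁ : ℝ} (hK₁ : 0 ≤ K₁) {x y p : X}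
    (hp : Eta G K₁ x y p) : ∃ q, Eta G (2 * K) x y q ∧ G p q ≤ K₁ + 2 * K := by
  have hxp := H.G_nonneg x p
  have hxy := H.G_nonneg x y
  have hpy := H.G_nonneg p y
  have hK := H.K_nonneg
  obtain ⟨q, hq1, hq2⟩ := H.geod x y (min (G x p) (G x y)) (le_min hxp hxy) (min_le_right _ _)
  refine ⟨q, by unfold Eta; linarith, ?_⟩
  have h := H.four p q x y
  have e1 := H.G_symm p x
  have e2 := H.G_symm q x
  unfold Eta at hp
  rcases max_cases (G p x + G q y) (G p y + G q x) with ⟨h1, -⟩ | ⟨h1, -⟩ <;>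
  rcases min_cases (G x p) (G x y) with ⟨h2, -⟩ | ⟨h2, -⟩ <;>
  · have := min_le_left (G x p) (G x y)
    rw [h1] at h; rw [h2] at hq1 hq2; linarith

/-- The constant controlling slimness of triangles of quasi-intervals. -/
lemma slim (H : Comparison ρ G K L) : ∃ Δ : ℝ, 0 ≤ Δ ∧
    (∀ x y z p, Eta G (2 * K) x y p →
      ∃ q, (Eta G (2 * K) x z q ∨ Eta G (2 * K) z y q) ∧ ρ p q ≤ Δ) ∧
    (∀ x y p, ρ x y ≤ 1 → Eta G (2 * K) x y p → ρ p x ≤ Δ) := by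
  have hK := H.K_nonneg
  have hL := H.L_nonneg
  refine ⟨(L * (5 * K) + L) + (L * (L + 2 * K) + L), by positivity, ?_, ?_⟩
  · intro x y z p hp
    have key : ∀ q, G p q ≤ 5 * K → ρ p q ≤ (L * (5 * K) + L) + (L * (L + 2 * K) + L) := by
      intro q hq
      have := H.upper p q
      have h2 := mul_le_mul_of_nonneg_left hq hL
      have : 0 ≤ L * (L + 2 * K) + L := by positivity
      linarith
    rcases H.eta_split hp z with h | h
    · obtain ⟨q, hq, hq'⟩ := H.eta_close (by linarith) h
      exact ⟨q, Or.inl hq, key q (by linarith)⟩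
    · obtain ⟨q, hq, hq'⟩ := H.eta_close (by linarith) h
      exact ⟨q, Or.inr hq, key q (by linarith)⟩
  · intro x y p hxy hp
    have h1 := H.lower x y hxy
    have h2 : G p x ≤ L + 2 * K := by
      have := H.G_nonneg p y
      have := H.G_symm p x
      unfold Eta at hp; linarith
    have h3 := H.upper p x
    have h4 := mul_le_mul_of_nonneg_left h2 hL
    have : 0 ≤ L * (5 * K) + L := by positivity
    linarith

/-- Repeated bisection: a quasi-interval between the ends of a chain of at most `2 ^ n` unit steps
stays within a distance linear in `n` of the chain. -/
lemma log_close {η : X → X → X → Prop} {Δ : ℝ} (htri : ∀ x y z, ρ x z ≤ ρ x y + ρ y z)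
    (h1 : ∀ x y z p, η x y p → ∃ q, (η x z q ∨ η z y q) ∧ ρ p q ≤ Δ)
    (h2 : ∀ x y p, ρ x y ≤ 1 → η x y p → ρ p x ≤ Δ)
    (c : ℕ → X) (N : ℕ) (hc : RoughChain ρ c N) (n : ℕ) :
    ∀ a b, a ≤ b → b ≤ N → b - a ≤ 2 ^ n → ∀ p, η (c a) (c b) p →
      ∃ i, a ≤ i ∧ i ≤ b ∧ ρ p (c i) ≤ Δ * n + Δ := by
  induction n with
  | zero =>
    intro a b hab hbN hn p hp
    refine ⟨a, le_rfl, hab, ?_⟩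
    have h3 := (hc a b hab hbN).1
    have h4 : (b : ℝ) - a ≤ 1 := by
      have : b ≤ a + 1 := by simp at hn; omega
      have : (b : ℝ) ≤ a + 1 := by exact_mod_cast this
      linarith
    simpa using h2 _ _ _ (h3.trans h4) hp
  | succ n ih =>
    intro a b hab hbN hn p hp
    have hn' : b - a ≤ 2 * 2 ^ n := by rw [pow_succ] at hn; omega
    obtain ⟨q, hq | hq, hpq⟩ := h1 _ _ (c ((a + b) / 2)) p hp
    · obtain ⟨i, hi1, hi2, hi3⟩ := ih a ((a + b) / 2) (by omega) (by omega) (by omega) q hq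
      refine ⟨i, hi1, by omega, (htri _ q _).trans ?_⟩
      push_cast; linarith
    · obtain ⟨i, hi1, hi2, hi3⟩ := ih ((a + b) / 2) b (by omega) (by omega) (by omega) q hq
      refine ⟨i, by omega, hi2, (htri _ q _).trans ?_⟩
      push_cast; linarith

/-- Logarithms grow slower than linear functions, in the form needed to improve the bound. -/
lemma exists_exponent {Δ : ℝ} (hΔ : 0 ≤ Δ) : ∃ C : ℝ, 0 ≤ C ∧ ∀ T : ℝ, 0 ≤ T →
    ∃ k : ℕ, 2 * (2 * T + 2 * Δ + 4) ≤ 2 ^ k ∧ 3 * Δ + Δ * k ≤ T / 2 + C := by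
  obtain ⟨k₀, hk₀⟩ := pow_unbounded_of_one_lt (8 * (Δ + 1) + 4 * Δ + 8) (one_lt_two (α := ℝ))
  refine ⟨3 * Δ + Δ * k₀, by positivity, fun T hT => ⟨k₀ + ⌊T / (2 * (Δ + 1))⌋₊, ?_, ?_⟩⟩
  · set m := ⌊T / (2 * (Δ + 1))⌋₊
    have h1 : T / (2 * (Δ + 1)) < m + 1 := Nat.lt_floor_add_one _
    rw [div_lt_iff₀ (by positivity)] at h1
    have h2 : ((m : ℝ) + 1) ≤ 2 ^ m := by exact_mod_cast Nat.lt_two_pow_self (n := m)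
    rw [pow_add]
    have h3 : (1 : ℝ) ≤ 2 ^ m := one_le_pow₀ (by norm_num)
    have h4 : (8 * (Δ + 1) + 4 * Δ + 8) * 2 ^ m ≤ 2 ^ k₀ * (2 : ℝ) ^ m := by gcongr
    nlinarith
  · have h1 : (⌊T / (2 * (Δ + 1))⌋₊ : ℝ) ≤ T / (2 * (Δ + 1)) := Nat.floor_le (by positivity)
    have h2 : Δ * (T / (2 * (Δ + 1))) ≤ T / 2 := by
      rw [mul_div_assoc', div_le_div_iff₀ (by positivity) (by positivity)]
      nlinarith
    have h3 := mul_le_mul_of_nonneg_left h1 hΔ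
    push_cast
    linarith

/-- Quasi-intervals stay within bounded distance of rough geodesics. -/
lemma stable {η : X → X → X → Prop} {Δ : ℝ} (htri : ∀ x y z, ρ x z ≤ ρ x y + ρ y z)
    (hsymm : ∀ x y, ρ x y = ρ y x) (hself : ∀ x, ρ x x = 0) (hΔ : 0 ≤ Δ)
    (h1 : ∀ x y z p, η x y p → ∃ q, (η x z q ∨ η z y q) ∧ ρ p q ≤ Δ)
    (h2 : ∀ x y p, ρ x y ≤ 1 → η x y p → ρ p x ≤ Δ) :
    ∃ T : ℝ, 0 ≤ T ∧ ∀ (c : ℕ → X) (N : ℕ), RoughChain ρ c N → ∀ p, η (c 0) (c N) p →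
      ∃ i, i ≤ N ∧ ρ p (c i) ≤ T := by
  obtain ⟨C, hC, hexp⟩ := exists_exponent hΔ
  -- `P n T`: quasi-intervals over subchains of at most `n` steps are `T`-close to the subchain
  let P : ℕ → ℝ → Prop := fun n T => ∀ (c : ℕ → X) (N : ℕ), RoughChain ρ c N → ∀ a b, a ≤ b →
    b ≤ N → b - a ≤ n → ∀ p, η (c a) (c b) p → ∃ i, a ≤ i ∧ i ≤ b ∧ ρ p (c i) ≤ T
  have hP0 : ∀ n, P n (Δ * n + Δ) := fun n c N hc a b hab hbN hn p hp =>
    log_close htri h1 h2 c N hc n a b hab hbN (hn.trans Nat.lt_two_pow_self.le) p hp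
  have himp : ∀ n T, 0 ≤ T → P n T → P n (T / 2 + C) := by
    intro n T hT hP c N hc a b hab hbN hn p hp
    obtain ⟨k, hk1, hk2⟩ := hexp T hT
    obtain ⟨i, hai, hib, hi⟩ := hP c N hc a b hab hbN hn p hp
    obtain ⟨R, hR1, hR2⟩ : ∃ R : ℕ, 2 * T + 2 * Δ + 2 < R ∧ (R : ℝ) ≤ 2 * T + 2 * Δ + 4 := by
      refine ⟨⌊2 * T + 2 * Δ + 2⌋₊ + 1, ?_, ?_⟩
      · push_cast; exact Nat.lt_floor_add_one _
      · push_cast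
        have := Nat.floor_le (show 0 ≤ 2 * T + 2 * Δ + 2 by positivity)
        linarith
    have hR3 : 2 * R ≤ 2 ^ k := by
      have : (2 * (R : ℝ)) ≤ 2 ^ k := by linarith
      exact_mod_cast this
    -- discard the part of the chain far to the left of `i`
    have left : ∃ a' q, a ≤ a' ∧ a' ≤ i ∧ i ≤ a' + R ∧ η (c a') (c b) q ∧ ρ p q ≤ Δ := by
      by_cases h : i ≤ a + R
      · exact ⟨a, p, le_rfl, hai, h, hp, by rw [hself]; exact hΔ⟩
      · obtain ⟨q, hq | hq, hpq⟩ := h1 _ _ (c (i - R)) p hp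
        · exfalso
          obtain ⟨j, hj1, hj2, hj3⟩ :=
            hP c N hc a (i - R) (by omega) (by omega) (by omega) q hq
          have h3 := (hc j i (by omega) (by omega)).2
          have h4 : ((j : ℝ) + R) ≤ i := by exact_mod_cast (by omega : j + R ≤ i)
          have h5 := htri (c j) q (c i)
          have h6 := htri q p (c i)
          have h7 := hsymm (c j) q
          have h8 := hsymm q p
          linarith
        · exact ⟨i - R, q, by omega, by omega, by omega, hq, hpq⟩
    obtain ⟨a', q, ha1, ha2, ha3, hq, hpq⟩ := left
    have right : ∃ b' q', i ≤ b' ∧ b' ≤ b ∧ b' ≤ i + R ∧ η (c a') (c b') q' ∧ ρ q q' ≤ Δ := by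
      by_cases h : b ≤ i + R
      · exact ⟨b, q, hib, le_rfl, h, hq, by rw [hself]; exact hΔ⟩
      · obtain ⟨q', hq' | hq', hqq⟩ := h1 _ _ (c (i + R)) q hq
        · exact ⟨i + R, q', by omega, by omega, by omega, hq', hqq⟩
        · exfalso
          obtain ⟨j, hj1, hj2, hj3⟩ :=
            hP c N hc (i + R) b (by omega) (by omega) (by omega) q' hq'
          have h3 := (hc i j (by omega) (by omega)).2
          have h4 : ((i : ℝ) + R) ≤ j := by exact_mod_cast hj1
          have h5 := htri (c i) q (c j)
          have h5' := htri q q' (c j)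
          have h6 := htri (c i) p q
          have h7 := hsymm (c i) p
          linarith
    obtain ⟨b', q', hb1, hb2, hb3, hq', hqq⟩ := right
    obtain ⟨j, hj1, hj2, hj3⟩ := log_close htri h1 h2 c N hc k a' b' (by omega) (by omega)
      (by omega) q' hq'
    refine ⟨j, by omega, by omega, ?_⟩
    have h3 := htri p q (c j)
    have h4 := htri q q' (c j)
    linarith
  -- iterating the improvement makes the bound independent of `n`
  have hiter : ∀ n j : ℕ, P n ((Δ * n + Δ) / 2 ^ j + 2 * C) := by
    intro n j
    induction j with
    | zero =>
      intro c N hc a b hab hbN hn p hp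
      obtain ⟨i, h3, h4, h5⟩ := hP0 n c N hc a b hab hbN hn p hp
      exact ⟨i, h3, h4, by simp only [pow_zero, div_one]; linarith⟩
    | succ j ih =>
      have := himp n _ (by positivity) ih
      convert this using 1
      rw [pow_succ]; field_simp; ring
  refine ⟨1 + 2 * C, by positivity, fun c N hc p hp => ?_⟩
  obtain ⟨j, hj⟩ := pow_unbounded_of_one_lt (Δ * N + Δ) (one_lt_two (α := ℝ))
  obtain ⟨i, -, h4, h5⟩ := hiter N j c N hc 0 N (by omega) le_rfl (by omega) p hp
  refine ⟨i, h4, h5.trans ?_⟩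
  have : (Δ * N + Δ) / 2 ^ j ≤ 1 := (div_le_one (by positivity)).2 hj.le
  linarith

/-- Points of quasi-intervals of `G` are almost between the end points for `ρ`. -/
lemma between (H : Comparison ρ G K L) (K₁ : ℝ) (hK₁ : 0 ≤ K₁) : ∃ C : ℝ, 0 ≤ C ∧
    ∀ x y p, Eta G K₁ x y p → ρ x p + ρ p y ≤ ρ x y + C := by
  obtain ⟨Δ, hΔ, h1, h2⟩ := H.slim
  obtain ⟨T, hT, hst⟩ := stable H.rho_tri H.rho_symm H.rho_self hΔ h1 h2
  have hK := H.K_nonneg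
  have hL := H.L_nonneg
  refine ⟨2 * T + 2 + 2 * (L * (K₁ + 2 * K) + L), by positivity, fun x y p hp => ?_⟩
  obtain ⟨q, hq, hpq⟩ := H.eta_close hK₁ hp
  have h3 : ρ p q ≤ L * (K₁ + 2 * K) + L :=
    (H.upper p q).trans (by have := mul_le_mul_of_nonneg_left hpq hL; linarith)
  obtain ⟨c, N, rfl, rfl, hc⟩ := H.chain x y
  obtain ⟨i, hiN, hi⟩ := hst c N hc q hq
  have h4 := (hc 0 i (by omega) hiN).1
  have h5 := (hc i N hiN le_rfl).1
  have h6 := (hc 0 N (by omega) le_rfl).2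
  have h7 := H.rho_tri (c 0) (c i) p
  have h8 := H.rho_tri (c i) q p
  have h9 := H.rho_tri p q (c N)
  have h10 := H.rho_tri q (c i) (c N)
  have h11 := H.rho_symm (c i) q
  have h12 := H.rho_symm q p
  push_cast at *
  linarith

/-- Every triple has an approximate centre, lying in all three quasi-intervals. -/
lemma center (H : Comparison ρ G K L) (x y o : X) :
    ∃ p, Eta G (6 * K) x y p ∧ Eta G (6 * K) o x p ∧ Eta G (6 * K) o y p := by
  have hK := H.K_nonneg
  have t1 := H.four x y o o
  have t2 := H.four x o y y
  have t3 := H.four y o x x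
  rw [H.G_self] at t1 t2 t3
  have e1 := H.G_symm x o
  have e2 := H.G_symm y o
  have e3 := H.G_symm x y
  have f1 : G x y ≤ G x o + G y o + K := by
    rw [max_self] at t1; linarith
  have f2 : G x o ≤ G x y + G y o + K := by
    rw [max_self] at t2; linarith
  have f3 : G y o ≤ G x y + G x o + K := by
    rw [max_self] at t3; linarith
  have hxy := H.G_nonneg x y
  obtain ⟨t, ht⟩ : ∃ t, t = (G x y + G x o - G y o) / 2 := ⟨_, rfl⟩
  obtain ⟨s, hs0, hs1, hs2, hs3⟩ : ∃ s, 0 ≤ s ∧ s ≤ G x y ∧ s ≤ t + K ∧ t ≤ s + K := by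
    refine ⟨max 0 (min t (G x y)), le_max_left _ _, max_le hxy (min_le_right _ _), ?_, ?_⟩
    · exact max_le (by linarith) ((min_le_left _ _).trans (by linarith))
    · rcases min_cases t (G x y) with ⟨h, -⟩ | ⟨h, -⟩
      · rw [h]; linarith [le_max_right 0 t]
      · rw [h]; linarith [le_max_right 0 (G x y)]
  obtain ⟨p, hp1, hp2⟩ := H.geod x y s hs0 hs1
  have h4 := H.four p o x y
  have g1 := H.G_symm p x
  have g2 := H.G_symm p o
  have hpo : G o p ≤ G y o + t - G x y + 3 * K := by
    rcases max_cases (G p x + G o y) (G p y + G o x) with ⟨h, -⟩ | ⟨h, -⟩ <;>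
    · rw [h] at h4; linarith
  refine ⟨p, ?_, ?_, ?_⟩ <;> unfold Eta <;> linarith

/-- An approximate `G`-centre `p` of `x`, `y`, `o` lies in a quasi-interval from `z` to `x` or to
`y`; as all these quasi-intervals are almost `ρ`-geodesic, the four-point inequality follows. -/
theorem hyperbolic (H : Comparison ρ G K L) : ∃ δ : ℝ, 0 ≤ δ ∧ ∀ x y z o,
    min ((ρ x o + ρ z o - ρ x z) / 2) ((ρ y o + ρ z o - ρ y z) / 2) - δ ≤
      (ρ x o + ρ y o - ρ x y) / 2 := by
  have hK := H.K_nonneg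
  obtain ⟨C, hC, hb⟩ := H.between (7 * K) (by linarith)
  have mono : ∀ {x y p}, Eta G (6 * K) x y p → Eta G (7 * K) x y p := by
    intro x y p h; unfold Eta at *; linarith
  refine ⟨2 * C, by linarith, fun x y z o => ?_⟩
  obtain ⟨p, h1, h2, h3⟩ := H.center x y o
  have b1 := hb _ _ _ (mono h2)
  have b2 := hb _ _ _ (mono h3)
  have s1 := H.rho_symm x o
  have s2 := H.rho_symm y o
  have s3 := H.rho_symm z o
  have s4 := H.rho_symm y z
  have s5 := H.rho_symm p x
  have s6 := H.rho_symm p y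
  have s7 := H.rho_symm p z
  have q1 := H.rho_tri x p y
  have q2 := H.rho_tri o p x
  have q3 := H.rho_tri o p y
  have q4 := H.rho_tri o p z
  rcases H.eta_split h1 z with h | h
  · have b3 := hb x z p (by unfold Eta at *; linarith)
    have := min_le_left ((ρ x o + ρ z o - ρ x z) / 2) ((ρ y o + ρ z o - ρ y z) / 2)
    linarith
  · have b3 := hb z y p (by unfold Eta at *; linarith)
    have := min_le_right ((ρ x o + ρ z o - ρ x z) / 2) ((ρ y o + ρ z o - ρ y z) / 2)
    linarith

end Comparison

/-! ### The hyperbolic filling -/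

/-- The quasi-distance `|x - y| + h x ∨ h y` underlying the hyperbolic filling. -/
def rr {X : Type*} [PseudoMetricSpace X] (h : X → ℝ) (x y : X) : ℝ :=
  dist x y + max (h x) (h y)

/-- The hyperbolic-filling gauge `2 log ((|x - y| + h x ∨ h y) / √(h x h y))`. -/
def fill {X : Type*} [PseudoMetricSpace X] (h : X → ℝ) (x y : X) : ℝ :=
  2 * Real.log (rr h x y) - Real.log (h x) - Real.log (h y)

/-- A quasi-Ptolemaic inequality, valid for every distance. -/
lemma ptolemy {X : Type*} {r : X → X → ℝ} (hpos : ∀ x y, 0 < r x y) (hs : ∀ x y, r x y = r y x)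
    (ht : ∀ x y z, r x z ≤ r x y + r y z) (x y z w : X) :
    r x y * r z w ≤ 4 * (r x z * r y w) ∨ r x y * r z w ≤ 4 * (r x w * r y z) := by
  have key : ∀ a b c d : ℝ, 0 ≤ a → 0 ≤ b → a ≤ 2 * c → b ≤ 2 * d → a * b ≤ 4 * (c * d) := by
    intro a b c d ha hb h1 h2
    calc a * b ≤ (2 * c) * (2 * d) := by gcongr; linarith
      _ = _ := by ring
  have p := hpos x y
  have q := hpos z w
  have a1 := ht x z y
  have a2 := ht x w y
  have b1 := ht z x w
  have b2 := ht z y w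
  have e1 := hs z y
  have e2 := hs w y
  have e3 := hs z x
  -- compare the smaller factor of one product with the smaller factor of the other
  rcases le_total (min (r x z) (r y w)) (min (r x w) (r y z)) with hm | hm
  · right
    have m1 := hm.trans (min_le_left _ _)
    have m2 := hm.trans (min_le_right _ _)
    rcases min_cases (r x z) (r y w) with ⟨h1, -⟩ | ⟨h1, -⟩ <;> rw [h1] at m1 m2
    · rw [mul_comm (r x w)]; exact key _ _ _ _ p.le q.le (by linarith) (by linarith)
    · exact key _ _ _ _ p.le q.le (by linarith) (by linarith)
  · left
    have m1 := hm.trans (min_le_left _ _)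
    have m2 := hm.trans (min_le_right _ _)
    rcases min_cases (r x w) (r y z) with ⟨h1, -⟩ | ⟨h1, -⟩ <;> rw [h1] at m1 m2
    · rw [mul_comm (r x z)]; exact key _ _ _ _ p.le q.le (by linarith) (by linarith)
    · exact key _ _ _ _ p.le q.le (by linarith) (by linarith)

section
variable {X : Type*} [PseudoMetricSpace X] {h : X → ℝ}

lemma rr_symm (x y : X) : rr h x y = rr h y x := by
  unfold rr; rw [dist_comm, max_comm]

lemma rr_pos (hpos : ∀ x, 0 < h x) (x y : X) : 0 < rr h x y :=
  add_pos_of_nonneg_of_pos dist_nonneg (lt_max_of_lt_left (hpos x))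

lemma le_rr_left (x y : X) : h x ≤ rr h x y := by
  unfold rr; have := dist_nonneg (x := x) (y := y); have := le_max_left (h x) (h y); linarith

lemma rr_tri (hpos : ∀ x, 0 < h x) (x y z : X) : rr h x z ≤ rr h x y + rr h y z := by
  unfold rr
  have h1 := dist_triangle x y z
  have h2 : max (h x) (h z) ≤ max (h x) (h y) + max (h y) (h z) := by
    refine max_le ?_ ?_
    · have := le_max_left (h x) (h y); have := le_max_left (h y) (h z); have := hpos y; linarith
    · have := le_max_right (h x) (h y); have := le_max_right (h y) (h z); have := hpos y; linarith
  linarith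

lemma fill_four (hpos : ∀ x, 0 < h x) (x y z w : X) :
    fill h x y + fill h z w ≤
      max (fill h x z + fill h y w) (fill h x w + fill h y z) + 2 * Real.log 4 := by
  have P := rr_pos hpos
  have key : ∀ a b c d : ℝ, 0 < a → 0 < b → 0 < c → 0 < d → a * b ≤ 4 * (c * d) →
      Real.log a + Real.log b ≤ Real.log c + Real.log d + Real.log 4 := by
    intro a b c d ha hb hc hd hh
    rw [← Real.log_mul ha.ne' hb.ne', ← Real.log_mul hc.ne' hd.ne', add_comm,
      ← Real.log_mul (by norm_num) (by positivity)]
    exact Real.log_le_log (by positivity) hh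
  unfold fill
  rcases ptolemy P rr_symm (rr_tri hpos) x y z w with h1 | h1
  · have h2 := key _ _ _ _ (P _ _) (P _ _) (P _ _) (P _ _) h1
    refine le_trans ?_ (add_le_add_left (le_max_left _ _) _)
    linarith
  · have h2 := key _ _ _ _ (P _ _) (P _ _) (P _ _) (P _ _) h1
    refine le_trans ?_ (add_le_add_left (le_max_right _ _) _)
    linarith

lemma log_le_of_le_mul {a b C : ℝ} (ha : 0 < a) (hC : 0 < C) (hb : 0 < b) (hab : a ≤ C * b) :
    Real.log a ≤ Real.log C + Real.log b := by
  rw [← Real.log_mul hC.ne' hb.ne']; exact Real.log_le_log ha hab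

/-- Abstract form of the hyperbolicity criterion. `V` provides points of every larger height above
a given one, `Hor` bounds the distance of points that are close relative to their height. -/
theorem comparison_of_filling {ρ : X → X → ℝ} (hpos : ∀ x, 0 < h x)
    (rho_nonneg : ∀ x y, 0 ≤ ρ x y) (rho_self : ∀ x, ρ x x = 0)
    (rho_symm : ∀ x y, ρ x y = ρ y x) (rho_tri : ∀ x y z, ρ x z ≤ ρ x y + ρ y z)
    (chain : ∀ x y, ∃ (c : ℕ → X) (N : ℕ), c 0 = x ∧ c N = y ∧ RoughChain ρ c N)
    (S C : ℝ) (hC : 1 ≤ C) (hS : ∀ x y, rr h x y ≤ S)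
    (V : ∀ x s, h x ≤ s → s ≤ S → ∃ p, s ≤ C * h p ∧ h p ≤ C * s ∧ dist x p ≤ C * s)
    (Hor : ∀ C₀ : ℝ, 1 ≤ C₀ → ∃ C₁ : ℝ, ∀ x y s, 0 < s → s ≤ C₀ * h x → s ≤ C₀ * h y →
      h x ≤ C₀ * s → h y ≤ C₀ * s → dist x y ≤ C₀ * s → ρ x y ≤ C₁)
    (L₀ : ℝ) (lower : ∀ x y, ρ x y ≤ 1 → fill h x y ≤ L₀) :
    ∃ K L, Comparison ρ (fill h) K L := by
  have P := rr_pos hpos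
  have hlogC : 0 ≤ Real.log C := Real.log_nonneg hC
  have hlog3C : 0 ≤ Real.log (3 * C) := Real.log_nonneg (by linarith)
  have hlog4 : 0 ≤ Real.log 4 := Real.log_nonneg (by norm_num)
  have fsymm : ∀ x y, fill h x y = fill h y x := by
    intro x y; unfold fill; rw [rr_symm]; ring
  have flog : ∀ x y, Real.log (h x) ≤ Real.log (rr h x y) := fun x y =>
    Real.log_le_log (hpos x) (le_rr_left x y)
  have flog' : ∀ x y, Real.log (h y) ≤ Real.log (rr h x y) := fun x y => by
    rw [rr_symm]; exact flog y x
  -- the half of the rough geodesic from `x` upwards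
  have half : ∀ x y t, 0 ≤ t → t ≤ Real.log (rr h x y) - Real.log (h x) →
      ∃ p, fill h x p ≤ t + (2 * Real.log (3 * C) + Real.log C) ∧
        fill h p y ≤ fill h x y - t + (2 * Real.log (3 * C) + Real.log C) := by
    intro x y t ht ht'
    have hx := hpos x
    have hs1 : h x ≤ h x * Real.exp t := le_mul_of_one_le_right hx.le (Real.one_le_exp ht)
    have hs2 : h x * Real.exp t ≤ rr h x y := by
      rw [← Real.log_le_log_iff (by positivity) (P x y), Real.log_mul hx.ne' (by positivity),
        Real.log_exp]
      linarith
    have hlogs : Real.log (h x * Real.exp t) = Real.log (h x) + t := by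
      rw [Real.log_mul hx.ne' (by positivity), Real.log_exp]
    obtain ⟨p, hp1, hp2, hp3⟩ := V x _ hs1 (hs2.trans (hS x y))
    have hspos : 0 < h x * Real.exp t := by positivity
    have hR := P x y
    generalize h x * Real.exp t = s at *
    have hlp := log_le_of_le_mul hspos (by linarith) (hpos p) hp1
    have hsC : s ≤ C * s := le_mul_of_one_le_left hspos.le hC
    have hRC : rr h x y ≤ C * rr h x y := le_mul_of_one_le_left hR.le hC
    have hsR : C * s ≤ C * rr h x y := by gcongr
    refine ⟨p, ?_, ?_⟩
    · have h1 : rr h x p ≤ 3 * C * s := by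
        unfold rr
        have : max (h x) (h p) ≤ C * s := max_le (by linarith) hp2
        have : 0 ≤ C * s := by positivity
        linarith
      have h2 := log_le_of_le_mul (P x p) (by positivity) hspos h1
      unfold fill
      linarith
    · have h1 : rr h p y ≤ 3 * C * rr h x y := by
        have h4 := dist_triangle p x y
        rw [dist_comm p x] at h4
        have h5 : dist x y ≤ rr h x y := by
          unfold rr; have := le_max_left (h x) (h y); linarith
        have h6 : max (h p) (h y) ≤ C * rr h x y :=
          max_le (by linarith) (by rw [rr_symm] at hRC ⊢; linarith [le_rr_left (h := h) y x])
        unfold rr at h5 h6 hRC hsR ⊢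
        linarith
      have h2 := log_le_of_le_mul (P p y) (by positivity) hR h1
      unfold fill
      linarith
  choose! p hp1 hp2 hp3 using V
  -- climbing from `x` to height `R` costs at most logarithmically many steps of bounded length
  obtain ⟨C₁, hC₁⟩ := Hor (4 * C) (by linarith)
  have hC₁0 : ∀ x y s, 0 < s → s ≤ 4 * C * h x → s ≤ 4 * C * h y →
      h x ≤ 4 * C * s → h y ≤ 4 * C * s → dist x y ≤ 4 * C * s → ρ x y ≤ |C₁| :=
    fun x y s a b c d e f => (hC₁ x y s a b c d e f).trans (le_abs_self _)
  have climb : ∀ n : ℕ, ∀ x R, h x ≤ R → R ≤ S → R ≤ 2 ^ n * h x →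
      ρ x (p x R) ≤ |C₁| * (n + 1) := by
    intro n
    have base : ∀ x R, h x ≤ R → R ≤ S → R ≤ 2 * h x → ρ x (p x R) ≤ |C₁| := by
      intro x R h1 h2 h3
      have hx := hpos x
      have q1 := hp1 x R h1 h2
      have q2 := hp2 x R h1 h2
      have q3 := hp3 x R h1 h2
      have hR : 0 < R := by linarith
      have a1 : h x ≤ C * h x := le_mul_of_one_le_left hx.le hC
      have a2 : R ≤ C * R := le_mul_of_one_le_left hR.le hC
      have a3 := hpos (p x R)
      have a4 : 0 < C * h (p x R) := by positivity
      exact hC₁0 x (p x R) R hR (by linarith) (by linarith) (by linarith) (by linarith)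
        (by linarith)
    induction n with
    | zero =>
      intro x R h1 h2 h3
      have := base x R h1 h2 (by have := hpos x; simp at h3; linarith)
      simpa using this
    | succ n ih =>
      intro x R h1 h2 h3
      have hx := hpos x
      have hR : 0 < R := by linarith
      by_cases hh : R ≤ 2 * h x
      · refine (base x R h1 h2 hh).trans (le_mul_of_one_le_right (abs_nonneg _) ?_)
        push_cast; have : (0 : ℝ) ≤ n := Nat.cast_nonneg n; linarith
      · have g1 : h x ≤ R / 2 := by linarith
        have g2 : R / 2 ≤ S := by linarith
        have h4 := ih x (R / 2) g1 g2 (by rw [pow_succ] at h3; linarith)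
        have h5 : ρ (p x (R / 2)) (p x R) ≤ |C₁| := by
          have q1 := hp1 x R h1 h2
          have q2 := hp2 x R h1 h2
          have q3 := hp3 x R h1 h2
          have r1 := hp1 x (R / 2) g1 g2
          have r2 := hp2 x (R / 2) g1 g2
          have r3 := hp3 x (R / 2) g1 g2
          have a2 : 0 < C * R := by positivity
          have a3 := hpos (p x R)
          have a4 : 0 < C * h (p x R) := by positivity
          have a5 := dist_triangle (p x (R / 2)) x (p x R)
          rw [dist_comm _ x] at a5
          exact hC₁0 _ _ R hR (by linarith) (by linarith) (by linarith) (by linarith)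
            (by linarith)
        have := rho_tri x (p x (R / 2)) (p x R)
        push_cast; linarith
  have climb' : ∀ x R, h x ≤ R → R ≤ S →
      ρ x (p x R) ≤ |C₁| * ((Real.log R - Real.log (h x)) / Real.log 2 + 2) := by
    intro x R h1 h2
    have hx := hpos x
    have hR : 0 < R := by linarith
    have hl2 : 0 < Real.log 2 := Real.log_pos (by norm_num)
    have hl : 0 ≤ (Real.log R - Real.log (h x)) / Real.log 2 :=
      div_nonneg (by linarith [Real.log_le_log hx h1]) hl2.le
    refine (climb ⌈(Real.log R - Real.log (h x)) / Real.log 2⌉₊ x R h1 h2 ?_).trans ?_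
    · rw [← Real.log_le_log_iff hR (by positivity), Real.log_mul (by positivity) hx.ne',
        Real.log_pow]
      have := Nat.le_ceil ((Real.log R - Real.log (h x)) / Real.log 2)
      rw [div_le_iff₀ hl2] at this
      linarith
    · refine mul_le_mul_of_nonneg_left ?_ (abs_nonneg _)
      have := (Nat.ceil_lt_add_one hl).le
      linarith
  obtain ⟨C₂, hC₂⟩ := Hor (3 * C) (by linarith)
  have hl2 : 0 < Real.log 2 := Real.log_pos (by norm_num)
  refine ⟨2 * Real.log (3 * C) + Real.log C + 2 * Real.log 4,
    |C₁| / Real.log 2 + (4 * |C₁| + |C₂|) + |L₀|, ?_⟩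
  refine ⟨by positivity, by positivity, rho_nonneg, rho_self, rho_symm, rho_tri, chain, ?_,
    fsymm, ?_, ?_, ?_, ?_, ?_⟩
  · intro x y
    have := flog x y
    have := flog' x y
    unfold fill; linarith
  · intro x; unfold fill rr; simp; ring
  · intro x y z w
    have := fill_four hpos x y z w
    linarith
  · intro x y t ht ht'
    by_cases hh : t ≤ Real.log (rr h x y) - Real.log (h x)
    · obtain ⟨q, hq1, hq2⟩ := half x y t ht hh
      exact ⟨q, by linarith, by linarith⟩
    · obtain ⟨q, hq1, hq2⟩ := half y x (fill h x y - t) (by linarith)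
        (by rw [rr_symm y x]; unfold fill; linarith)
      rw [fsymm y q] at hq1
      rw [fsymm q x, fsymm y x] at hq2
      exact ⟨q, by linarith, by linarith⟩
  · intro x y
    have hR := P x y
    have c1 := climb' x (rr h x y) (le_rr_left x y) (hS x y)
    have hy : h y ≤ rr h x y := by rw [rr_symm]; exact le_rr_left y x
    have c2 := climb' y (rr h x y) hy (hS x y)
    have c3 : ρ (p x (rr h x y)) (p y (rr h x y)) ≤ |C₂| := by
      have q1 := hp1 x _ (le_rr_left x y) (hS x y)
      have q2 := hp2 x _ (le_rr_left x y) (hS x y)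
      have q3 := hp3 x _ (le_rr_left x y) (hS x y)
      have r1 := hp1 y _ hy (hS x y)
      have r2 := hp2 y _ hy (hS x y)
      have r3 := hp3 y _ hy (hS x y)
      have hRC : rr h x y ≤ C * rr h x y := le_mul_of_one_le_left hR.le hC
      have h5 : dist x y ≤ rr h x y := by
        unfold rr; have := le_max_left (h x) (h y); have := hpos x; linarith
      generalize rr h x y = R at *
      have a1 := hpos (p x R)
      have a2 := hpos (p y R)
      have a5 := dist_triangle4 (p x R) x y (p y R)
      rw [dist_comm _ x] at a5
      exact (hC₂ _ _ R hR (by nlinarith) (by nlinarith) (by nlinarith) (by nlinarith)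
        (by nlinarith)).trans (le_abs_self _)
    have t1 := rho_tri x (p x (rr h x y)) y
    have t2 := rho_tri (p x (rr h x y)) (p y (rr h x y)) y
    have t3 := rho_symm (p y (rr h x y)) y
    have hf : 0 ≤ fill h x y := by
      have := flog x y
      have := flog' x y
      unfold fill; linarith
    have e : |C₁| * ((Real.log (rr h x y) - Real.log (h x)) / Real.log 2 + 2) +
        |C₁| * ((Real.log (rr h x y) - Real.log (h y)) / Real.log 2 + 2) =
        |C₁| / Real.log 2 * fill h x y + 4 * |C₁| := by
      unfold fill; field_simp; ring
    have n1 : 0 ≤ (4 * |C₁| + |C₂| + |L₀|) * fill h x y := by positivity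
    have n2 : 0 ≤ |C₁| / Real.log 2 := by positivity
    have n3 := abs_nonneg L₀
    linarith
  · intro x y hxy
    have h1 := lower x y hxy
    have h2 := le_abs_self L₀
    have n2 : 0 ≤ |C₁| / Real.log 2 := by positivity
    have n3 : 0 ≤ 4 * |C₁| + |C₂| := by positivity
    linarith
end

/-! ### Conformal harmonic disks -/

section
variable {d : ℕ}

/-- The standard basis vectors of the source plane. -/
abbrev ee (i : Fin 2) : Euc 2 := EuclideanSpace.single i 1

lemma isOpen_unitDisk : IsOpen unitDisk := Metric.isOpen_ball

lemma smul_mem_unitDisk {s : ℝ} (hs : |s| ≤ 1) {z : Euc 2} (hz : z ∈ unitDisk) :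
    s • z ∈ unitDisk := by
  simp only [unitDisk, mem_ball_zero_iff, norm_smul, Real.norm_eq_abs] at hz ⊢
  nlinarith [norm_nonneg z, abs_nonneg s]

lemma ConformalHarmonicOnDisk.differentiableAt {f : Euc 2 → Euc d}
    (hf : ConformalHarmonicOnDisk f) {z : Euc 2} (hz : z ∈ unitDisk) :
    DifferentiableAt ℝ f z :=
  (hf.1.differentiableOn (by norm_num)).differentiableAt (isOpen_unitDisk.mem_nhds hz)

lemma ConformalHarmonicOnDisk.pd_differentiableAt {f : Euc 2 → Euc d}
    (hf : ConformalHarmonicOnDisk f) (i : Fin 2) {z : Euc 2} (hz : z ∈ unitDisk) :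
    DifferentiableAt ℝ (pd i f) z := by
  have h1 : ContDiffAt ℝ 2 f z := hf.1.contDiffAt (isOpen_unitDisk.mem_nhds hz)
  have h2 : ContDiffAt ℝ 1 (fderiv ℝ f) z := h1.fderiv_right (by norm_num)
  exact (h2.differentiableAt (by norm_num)).clm_apply (differentiableAt_const _)

/-- Conformal harmonic disks are stable under `ζ ↦ s ζ` in the source and similarities `A` in the
target. -/
lemma ConformalHarmonicOnDisk.comp_similarity {f : Euc 2 → Euc d}
    (hf : ConformalHarmonicOnDisk f) {s : ℝ} (hs : |s| ≤ 1) (A : Euc d →L[ℝ] Euc d) {l : ℝ}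
    (hA : ∀ v w, ⟪A v, A w⟫ = l * ⟪v, w⟫) (b c : Euc d) :
    ConformalHarmonicOnDisk (fun z => b + A (f (s • z) - c)) ∧
      pd 0 (fun z => b + A (f (s • z) - c)) 0 = s • A (pd 0 f 0) := by
  have hfd : ∀ z ∈ unitDisk, HasFDerivAt (fun z => b + A (f (s • z) - c))
      (A.comp ((fderiv ℝ f (s • z)).comp (s • ContinuousLinearMap.id ℝ (Euc 2)))) z := by
    intro z hz
    have h1 := (hf.differentiableAt (smul_mem_unitDisk hs hz)).hasFDerivAt
    have h2 : HasFDerivAt (fun z : Euc 2 => s • z) (s • ContinuousLinearMap.id ℝ (Euc 2)) z :=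
      (hasFDerivAt_id z).const_smul s
    exact ((A.hasFDerivAt.comp z ((h1.comp z h2).sub_const c)).const_add b)
  have hpd : ∀ i, ∀ z ∈ unitDisk, pd i (fun z => b + A (f (s • z) - c)) z =
      s • A (pd i f (s • z)) := by
    intro i z hz
    unfold pd; rw [(hfd z hz).fderiv]; simp
  have hpd2 : ∀ i, ∀ z ∈ unitDisk, fderiv ℝ (pd i (fun z => b + A (f (s • z) - c))) z (ee i) =
      (s * s) • A (fderiv ℝ (pd i f) (s • z) (ee i)) := by
    intro i z hz
    have h1 := (hf.pd_differentiableAt i (smul_mem_unitDisk hs hz)).hasFDerivAt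
    have h2 : HasFDerivAt (fun z : Euc 2 => s • z) (s • ContinuousLinearMap.id ℝ (Euc 2)) z :=
      (hasFDerivAt_id z).const_smul s
    have h3 := (A.hasFDerivAt.comp z (h1.comp z h2)).const_smul s
    have h4 : pd i (fun z => b + A (f (s • z) - c)) =ᶠ[nhds z]
        (s • (A ∘ (pd i f ∘ fun z => s • z))) := by
      filter_upwards [isOpen_unitDisk.mem_nhds hz] with w hw
      rw [hpd i w hw]; rfl
    rw [h4.fderiv_eq, h3.fderiv]
    simp [mul_smul]
  have h0 : (0 : Euc 2) ∈ unitDisk := by simp [unitDisk]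
  refine ⟨⟨?_, ?_, ?_⟩, ?_⟩
  · have h1 : ContDiffOn ℝ 2 (fun z : Euc 2 => s • z) unitDisk :=
      (contDiff_const_smul s).contDiffOn
    have h2 := hf.1.comp h1 (fun z hz => smul_mem_unitDisk hs hz)
    exact contDiffOn_const.add (A.contDiff.comp_contDiffOn (h2.sub contDiffOn_const))
  · intro z hz
    have := hf.2.1 _ (smul_mem_unitDisk hs hz)
    have e := hpd2 0 z hz
    have e' := hpd2 1 z hz
    simp only [ee] at e e'
    rw [e, e', ← smul_add, ← map_add, this]; simp
  · intro z hz
    obtain ⟨h1, h2⟩ := hf.2.2 _ (smul_mem_unitDisk hs hz)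
    rw [hpd 0 z hz, hpd 1 z hz]
    constructor
    · rw [norm_smul, norm_smul]
      congr 1
      rw [← sq_eq_sq₀ (norm_nonneg _) (norm_nonneg _), ← real_inner_self_eq_norm_sq,
        ← real_inner_self_eq_norm_sq, hA, hA, real_inner_self_eq_norm_sq,
        real_inner_self_eq_norm_sq, h1]
    · rw [real_inner_smul_left, real_inner_smul_right, hA, h2]; simp
  · simpa using hpd 0 0 h0

lemma conformalHarmonic_affine (x a b : Euc d) (h1 : ‖a‖ = ‖b‖) (h2 : ⟪a, b⟫ = 0) :
    ConformalHarmonicOnDisk (fun z : Euc 2 => x + (z 0 • a + z 1 • b)) ∧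
      pd 0 (fun z : Euc 2 => x + (z 0 • a + z 1 • b)) 0 = a := by
  set T : Euc 2 →L[ℝ] Euc d := (EuclideanSpace.proj (𝕜 := ℝ) 0).smulRight a +
    (EuclideanSpace.proj (𝕜 := ℝ) 1).smulRight b with hT
  have hfe : (fun z : Euc 2 => x + (z 0 • a + z 1 • b)) = fun z => x + T z := by
    ext z; simp [hT]
  have hpd : ∀ i, pd i (fun z => x + T z) = fun _ => T (ee i) := by
    intro i; ext z
    simp [pd, fderiv_const_add, T.fderiv]
  have t0 : T (ee 0) = a := by simp [hT, ee]
  have t1 : T (ee 1) = b := by simp [hT, ee]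
  rw [hfe]
  refine ⟨⟨(contDiff_const.add T.contDiff).contDiffOn, ?_, ?_⟩, ?_⟩
  · intro z _; rw [hpd, hpd]; simp
  · intro z _; rw [hpd, hpd]; simp only [t0, t1]; exact ⟨h1, h2⟩
  · rw [hpd]; exact t0

lemma exists_unit_orthogonal (hd : 3 ≤ d) (v w : Euc d) :
    ∃ n : Euc d, ‖n‖ = 1 ∧ ⟪v, n⟫ = 0 ∧ ⟪w, n⟫ = 0 := by
  have hr : Module.finrank ℝ (Submodule.span ℝ ({v, w} : Set (Euc d))) ≤ 2 := by
    classical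
    have := finrank_span_finset_le_card (R := ℝ) ({v, w} : Finset (Euc d))
    simp only [Finset.coe_insert, Finset.coe_singleton] at this
    exact this.trans Finset.card_le_two
  have hs := Submodule.finrank_add_finrank_orthogonal (Submodule.span ℝ ({v, w} : Set (Euc d)))
  rw [finrank_euclideanSpace_fin] at hs
  have hne : (Submodule.span ℝ ({v, w} : Set (Euc d)))ᗮ ≠ ⊥ := by
    intro h; rw [h, finrank_bot] at hs; omega
  obtain ⟨n, hn, hn0⟩ := Submodule.exists_mem_ne_zero_of_ne_bot hne
  have hn' : ‖n‖ ≠ 0 := norm_ne_zero_iff.2 hn0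
  rw [Submodule.mem_orthogonal] at hn
  refine ⟨‖n‖⁻¹ • n, ?_, ?_, ?_⟩
  · rw [norm_smul, norm_inv, norm_norm, inv_mul_cancel₀ hn']
  · rw [real_inner_smul_right, hn v (Submodule.subset_span (by simp))]; simp
  · rw [real_inner_smul_right, hn w (Submodule.subset_span (by simp))]; simp

/-! ### The minimal metric -/

variable {D : Set (Euc d)}

lemma minMetric_nonneg (x v : Euc d) : 0 ≤ minMetric D x v := by
  apply Real.sInf_nonneg
  rintro c ⟨r, hr, rfl, -⟩
  positivity

lemma minMetric_le {x v : Euc d} {r : ℝ} (hr : 0 < r) {f : Euc 2 → Euc d}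
    (hf : ConformalHarmonicOnDisk f) (hD : ∀ z ∈ unitDisk, f z ∈ D) (h0 : f 0 = x)
    (h1 : pd 0 f 0 = r • v) : minMetric D x v ≤ 1 / r := by
  refine csInf_le ⟨0, ?_⟩ ⟨r, hr, rfl, f, hf, hD, h0, h1⟩
  rintro c ⟨r, hr, rfl, -⟩
  positivity

lemma minMetric_zero {x : Euc d} (hx : x ∈ D) : minMetric D x 0 = 0 := by
  refine le_antisymm (le_of_forall_pos_le_add fun ε hε => ?_) (minMetric_nonneg _ _)
  obtain ⟨hf, h1⟩ := conformalHarmonic_affine x 0 0 rfl (by simp)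
  have := minMetric_le (D := D) (x := x) (v := 0) (r := 1 / ε) (by positivity) hf
    (by intro z _; simpa using hx) (by simp) (by rw [h1]; simp)
  simpa using this

lemma sq_add_sq_lt_of_mem {z : Euc 2} (hz : z ∈ unitDisk) : z 0 ^ 2 + z 1 ^ 2 < 1 := by
  simp only [unitDisk, mem_ball_zero_iff, EuclideanSpace.norm_eq, Fin.sum_univ_two,
    Real.norm_eq_abs, sq_abs] at hz
  rw [Real.sqrt_lt' one_pos] at hz
  simpa using hz

/-- A flat disk of radius `R` through `x`, spanned by `v` and an orthogonal unit vector `w`. -/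
lemma minMetric_le_of_flat {x v w : Euc d} {R : ℝ} (hR : 0 < R) (hw : ‖w‖ = 1)
    (hvw : ⟪v, w⟫ = 0)
    (h : ∀ a b : ℝ, (a * ‖v‖) ^ 2 + b ^ 2 < R ^ 2 → x + (a • v + b • w) ∈ D) :
    minMetric D x v ≤ ‖v‖ / R := by
  by_cases hv : v = 0
  · have hx : x ∈ D := by simpa using h 0 0 (by simp; positivity)
    rw [hv, minMetric_zero hx]; simp
  have hv' : 0 < ‖v‖ := norm_pos_iff.2 hv
  obtain ⟨hf, h1⟩ := conformalHarmonic_affine x ((R / ‖v‖) • v) (R • w)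
    (by rw [norm_smul, norm_smul, hw, norm_div, norm_norm]; field_simp)
    (by rw [real_inner_smul_left, real_inner_smul_right, hvw]; simp)
  have := minMetric_le (D := D) (x := x) (v := v) (r := R / ‖v‖) (by positivity) hf ?_
    (by simp) h1
  · simpa using this
  · intro z hz
    have := h (z 0 * (R / ‖v‖)) (z 1 * R) (by
      have h2 := sq_add_sq_lt_of_mem hz
      have : z 0 * (R / ‖v‖) * ‖v‖ = z 0 * R := by field_simp
      rw [this]
      nlinarith [sq_pos_of_pos hR])
    simpa [mul_smul] using this

lemma minMetric_le_of_ball (hd : 3 ≤ d) {x v : Euc d} {R : ℝ} (hR : 0 < R)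
    (h : ball x R ⊆ D) : minMetric D x v ≤ ‖v‖ / R := by
  obtain ⟨w, hw, hvw, -⟩ := exists_unit_orthogonal hd v v
  refine minMetric_le_of_flat hR hw hvw fun a b hab => h ?_
  rw [mem_ball, dist_eq_norm, add_sub_cancel_left]
  refine lt_of_pow_lt_pow_left₀ 2 hR.le ?_
  have e : ‖a • v + b • w‖ ^ 2 = (a * ‖v‖) ^ 2 + b ^ 2 := by
    rw [norm_add_sq_real, real_inner_smul_left, real_inner_smul_right, hvw, norm_smul, norm_smul,
      hw, Real.norm_eq_abs, Real.norm_eq_abs, mul_pow, mul_pow, sq_abs, sq_abs]; ring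
  rw [e]; exact hab

lemma minMetric_set_nonempty (hd : 3 ≤ d) (hD : IsOpen D) {x : Euc d} (hx : x ∈ D) (v : Euc d) :
    {c : ℝ | ∃ r : ℝ, 0 < r ∧ c = 1 / r ∧
    ∃ f : Euc 2 → Euc d, ConformalHarmonicOnDisk f ∧ (∀ z ∈ unitDisk, f z ∈ D) ∧
      f 0 = x ∧ pd 0 f 0 = r • v}.Nonempty := by
  by_cases hv : v = 0
  · obtain ⟨hf, h1⟩ := conformalHarmonic_affine x 0 0 rfl (by simp)
    exact ⟨1 / 1, 1, one_pos, rfl, _, hf, by intro z _; simpa using hx, by simp, by rw [h1, hv]; simp⟩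
  obtain ⟨R, hR, hb⟩ := Metric.isOpen_iff.1 hD x hx
  obtain ⟨w, hw, hvw, -⟩ := exists_unit_orthogonal hd v v
  have hv' : 0 < ‖v‖ := norm_pos_iff.2 hv
  obtain ⟨hf, h1⟩ := conformalHarmonic_affine x ((R / ‖v‖) • v) (R • w)
    (by rw [norm_smul, norm_smul, hw, norm_div, norm_norm]; field_simp)
    (by rw [real_inner_smul_left, real_inner_smul_right, hvw]; simp)
  refine ⟨_, R / ‖v‖, by positivity, rfl, _, hf, ?_, by simp, h1⟩
  intro z hz
  apply hb
  rw [mem_ball, dist_eq_norm, add_sub_cancel_left]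
  refine lt_of_pow_lt_pow_left₀ 2 hR.le ?_
  rw [norm_add_sq_real, real_inner_smul_left, real_inner_smul_right, real_inner_smul_left,
    real_inner_smul_right, hvw]
  simp only [norm_smul, hw, Real.norm_eq_abs, abs_of_pos hR, abs_div, abs_norm]
  have h2 := sq_add_sq_lt_of_mem hz
  have : |z 0| * (R / ‖v‖ * ‖v‖) = |z 0| * R := by field_simp
  rw [this, mul_pow, mul_pow, sq_abs, sq_abs]
  nlinarith [sq_pos_of_pos hR]

lemma minMetric_smul (x v : Euc d) {c : ℝ} (hc : 0 < c) :
    minMetric D x (c • v) = c * minMetric D x v := by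
  unfold minMetric
  rw [← smul_eq_mul, ← Real.sInf_smul_of_nonneg hc.le]
  congr 1
  ext a
  rw [Set.mem_smul_set]
  constructor
  · rintro ⟨r, hr, rfl, f, h1, h2, h3, h4⟩
    exact ⟨1 / (r * c), ⟨r * c, by positivity, rfl, f, h1, h2, h3, by rw [h4, mul_smul]⟩,
      by rw [smul_eq_mul]; field_simp⟩
  · rintro ⟨_, ⟨r, hr, rfl, f, h1, h2, h3, h4⟩, rfl⟩
    exact ⟨r / c, by positivity, by rw [smul_eq_mul]; field_simp, f, h1, h2, h3,
      by rw [h4, smul_smul]; congr 1; field_simp⟩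

lemma minMetric_neg_le (hd : 3 ≤ d) (hD : IsOpen D) {x : Euc d} (hx : x ∈ D) (v : Euc d) :
    minMetric D x (-v) ≤ minMetric D x v := by
  refine le_csInf (minMetric_set_nonempty hd hD hx v) ?_
  rintro _ ⟨r, hr, rfl, f, h1, h2, h3, h4⟩
  obtain ⟨g1, g2⟩ := h1.comp_similarity (s := -1) (by simp) (ContinuousLinearMap.id ℝ _) (l := 1)
    (by simp) x x
  refine minMetric_le hr g1 (fun z hz => ?_) (by simp [h3]) (by rw [g2]; simp [h4])
  simpa using h2 _ (smul_mem_unitDisk (s := -1) (by simp) hz)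

lemma minMetric_neg (hd : 3 ≤ d) (hD : IsOpen D) {x : Euc d} (hx : x ∈ D) (v : Euc d) :
    minMetric D x (-v) = minMetric D x v :=
  le_antisymm (minMetric_neg_le hd hD hx v)
    (by simpa using minMetric_neg_le hd hD hx (-v))

/-- Derivative estimates for all disks centred at `x` are lower bounds for the metric. -/
lemma norm_le_mul_minMetric (hd : 3 ≤ d) (hD : IsOpen D) {x : Euc d} (hx : x ∈ D)
    {F : Type*} [NormedAddCommGroup F] [NormedSpace ℝ F] (T : Euc d →L[ℝ] F) {K : ℝ} (hK : 0 ≤ K)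
    (h : ∀ f : Euc 2 → Euc d, ConformalHarmonicOnDisk f → (∀ z ∈ unitDisk, f z ∈ D) → f 0 = x →
      ‖T (pd 0 f 0)‖ ≤ K) (v : Euc d) : ‖T v‖ ≤ K * minMetric D x v := by
  have key : ∀ K', 0 < K' → K ≤ K' → ‖T v‖ ≤ K' * minMetric D x v := by
    intro K' hK' hKK
    rw [mul_comm, ← div_le_iff₀ hK']
    refine le_csInf (minMetric_set_nonempty hd hD hx v) ?_
    rintro _ ⟨r, hr, rfl, f, h1, h2, h3, h4⟩
    have := (h f h1 h2 h3).trans hKK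
    rw [h4, map_smul, norm_smul, Real.norm_eq_abs, abs_of_pos hr] at this
    rw [div_le_div_iff₀ hK' hr]; linarith
  rcases hK.eq_or_lt with rfl | hK
  · refine le_of_forall_pos_le_add fun ε hε => ?_
    have hm := minMetric_nonneg (D := D) x v
    have := key (ε / (minMetric D x v + 1)) (by positivity) (by positivity)
    refine this.trans ?_
    rw [zero_mul, zero_add, div_mul_eq_mul_div, div_le_iff₀ (by positivity)]
    nlinarith
  · exact key K hK le_rfl
end

/-! ### Upper semicontinuity of the minimal metric -/

section
variable {d : ℕ} {D : Set (Euc d)}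

/-- The reflection in the hyperplane orthogonal to `w` (the identity for `w = 0`). -/
def rf (w : Euc d) : Euc d →L[ℝ] Euc d :=
  ContinuousLinearMap.id ℝ _ - (2 / ⟪w, w⟫) • (innerSL ℝ w).smulRight w

lemma rf_apply (w y : Euc d) : rf w y = y - (2 * ⟪w, y⟫ / ⟪w, w⟫) • w := by
  simp only [rf, sub_apply, ContinuousLinearMap.id_apply,
    smul_apply, ContinuousLinearMap.smulRight_apply, innerSL_apply_apply,
    smul_smul]
  congr 2; ring

lemma inner_rf (w a b : Euc d) : ⟪rf w a, rf w b⟫ = ⟪a, b⟫ := by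
  by_cases hw : w = 0
  · simp [rf_apply, hw]
  have hw' : ⟪w, w⟫ ≠ (0 : ℝ) := by simpa using hw
  rw [rf_apply, rf_apply]
  simp only [inner_sub_left, inner_sub_right, real_inner_smul_left, real_inner_smul_right]
  rw [real_inner_comm w a]
  field_simp
  ring

lemma rf_self {v : Euc d} (hv : v ≠ 0) : rf v v = -v := by
  have hw' : ⟪v, v⟫ ≠ (0 : ℝ) := by simpa using hv
  rw [rf_apply, mul_div_cancel_right₀ _ hw', two_smul]; abel

/-- The composition of two reflections, scaled: a similarity taking `v` to `v'` and depending
continuously on `v'`. -/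
def simil (v v' : Euc d) : Euc d →L[ℝ] Euc d :=
  (‖v'‖ / ‖v‖) • (rf (v + (‖v‖ / ‖v'‖) • v')).comp (rf v)

lemma inner_simil (v v' a b : Euc d) :
    ⟪simil v v' a, simil v v' b⟫ = (‖v'‖ / ‖v‖) ^ 2 * ⟪a, b⟫ := by
  simp only [simil, smul_apply, ContinuousLinearMap.comp_apply,
    real_inner_smul_left, real_inner_smul_right, inner_rf]
  ring

lemma simil_apply_self {v v' : Euc d} (hv : v ≠ 0) (hv' : v' ≠ 0)
    (h : v + (‖v‖ / ‖v'‖) • v' ≠ 0) : simil v v' v = v' := by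
  have n1 : ‖v‖ ≠ 0 := norm_ne_zero_iff.2 hv
  have n2 : ‖v'‖ ≠ 0 := norm_ne_zero_iff.2 hv'
  simp only [simil, smul_apply, ContinuousLinearMap.comp_apply, rf_self hv]
  have key : rf (v + (‖v‖ / ‖v'‖) • v') (-v) = (‖v‖ / ‖v'‖) • v' := by
    have hne : ⟪v + (‖v‖ / ‖v'‖) • v', v + (‖v‖ / ‖v'‖) • v'⟫ ≠ (0 : ℝ) := by simpa using h
    have e : 2 * ⟪v + (‖v‖ / ‖v'‖) • v', -v⟫ =
        -⟪v + (‖v‖ / ‖v'‖) • v', v + (‖v‖ / ‖v'‖) • v'⟫ := by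
      simp only [inner_add_left, inner_add_right, real_inner_smul_left, real_inner_smul_right,
        inner_neg_right]
      rw [real_inner_comm v v', real_inner_self_eq_norm_sq, real_inner_self_eq_norm_sq]
      field_simp; ring
    rw [rf_apply, e, neg_div, div_self hne]
    simp
  rw [key, smul_smul]
  have : ‖v'‖ / ‖v‖ * (‖v‖ / ‖v'‖) = 1 := by field_simp
  rw [this, one_smul]

lemma simil_self {v : Euc d} (hv : v ≠ 0) (y : Euc d) : simil v v y = y := by
  have n1 : ‖v‖ ≠ 0 := norm_ne_zero_iff.2 hv
  have hw' : ⟪v, v⟫ ≠ (0 : ℝ) := by simpa using hv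
  simp only [simil, ContinuousLinearMap.comp_apply, div_self n1,
    one_smul, rf_apply]
  simp only [inner_sub_right, real_inner_smul_right, ← two_smul ℝ v, real_inner_smul_left]
  rw [smul_smul, sub_sub, ← add_smul]
  have : 2 * ⟪v, y⟫ / ⟪v, v⟫ + 2 * (2 * ⟪v, y⟫ - 2 * ⟪v, y⟫ / ⟪v, v⟫ * (2 * ⟪v, v⟫)) /
    (2 * (2 * ⟪v, v⟫)) * 2 = (0:ℝ) := by field_simp; ring
  rw [this]; simp

lemma tendsto_simil {v : Euc d} (hv : v ≠ 0) (x y : Euc d) :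
    Tendsto (fun p : (Euc d × Euc d) × Euc d => p.1.1 + simil v p.1.2 (p.2 - x))
      (nhds ((x, v), y)) (nhds y) := by
  have n1 : ‖v‖ ≠ 0 := norm_ne_zero_iff.2 hv
  have h : ContinuousAt (fun p : (Euc d × Euc d) × Euc d => p.1.1 + simil v p.1.2 (p.2 - x))
      ((x, v), y) := by
    simp only [simil, smul_apply, ContinuousLinearMap.comp_apply, rf_apply]
    have c1 : ContinuousAt (fun p : (Euc d × Euc d) × Euc d => ‖p.1.2‖) ((x, v), y) := by fun_prop
    have c2 : ContinuousAt (fun p : (Euc d × Euc d) × Euc d => v + (‖v‖ / ‖p.1.2‖) • p.1.2)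
        ((x, v), y) :=
      continuousAt_const.add ((continuousAt_const.div c1 n1).smul (by fun_prop))
    have c3 : ContinuousAt (fun p : (Euc d × Euc d) × Euc d =>
        p.2 - x - (2 * ⟪v, p.2 - x⟫ / ⟪v, v⟫) • v) ((x, v), y) := by
      have : ContinuousAt (fun p : (Euc d × Euc d) × Euc d => p.2 - x) ((x, v), y) := by fun_prop
      refine this.sub (ContinuousAt.fun_smul ?_ continuousAt_const)
      exact (continuousAt_const.mul (continuousAt_const.inner this)).div_const _
    refine ContinuousAt.add (by fun_prop) (ContinuousAt.fun_smul (c1.div_const _) (c3.sub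
      (ContinuousAt.fun_smul ((continuousAt_const.mul (c2.inner c3)).div (c2.inner c2) ?_) c2)))
    simp only [div_self n1, one_smul, ← two_smul ℝ v]
    simp [hv]
  have := h.tendsto
  simpa [simil_self hv] using this

/-- Upper semicontinuity of the minimal metric: disks can be moved. -/
lemma minMetric_usc (hd : 3 ≤ d) (hD : IsOpen D) {x v : Euc d} (hx : x ∈ D) {c : ℝ}
    (hc : minMetric D x v < c) :
    ∀ᶠ p : Euc d × Euc d in nhds (x, v), minMetric D p.1 p.2 < c := by
  by_cases hv : v = 0
  · subst hv
    rw [minMetric_zero hx] at hc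
    obtain ⟨R, hR, hb⟩ := Metric.isOpen_iff.1 hD x hx
    have h1 : ∀ᶠ p : Euc d × Euc d in nhds (x, 0), p.1 ∈ ball x (R / 2) :=
      continuousAt_fst.eventually (ball_mem_nhds x (half_pos hR))
    have h2 : ∀ᶠ p : Euc d × Euc d in nhds (x, 0), p.2 ∈ ball 0 (c * (R / 2)) :=
      continuousAt_snd.eventually (ball_mem_nhds (0 : Euc d) (by positivity))
    filter_upwards [h1, h2] with p hp1 hp2
    have hsub : ball p.1 (R / 2) ⊆ D := by
      refine Subset.trans (ball_subset_ball' ?_) hb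
      rw [mem_ball] at hp1; linarith
    refine (minMetric_le_of_ball hd (half_pos hR) hsub).trans_lt ?_
    rw [div_lt_iff₀ (half_pos hR)]
    simpa using hp2
  · obtain ⟨_, ⟨r, hr, rfl, f, h1, h2, h3, h4⟩, hrc⟩ :=
      exists_lt_of_csInf_lt (minMetric_set_nonempty hd hD hx v) hc
    -- shrink the disk slightly so that its image is relatively compact in `D`
    obtain ⟨s, hs0, hs1, hsc⟩ : ∃ s : ℝ, 0 < s ∧ s < 1 ∧ 1 / (s * r) < c := by
      have hcpos : 0 < c := lt_trans (by positivity) hrc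
      rw [div_lt_iff₀ hr] at hrc
      have : 1 / (c * r) < 1 := by rw [div_lt_one (by positivity)]; exact hrc
      obtain ⟨s, hs, hs'⟩ := exists_between this
      have hs0 : 0 < s := lt_trans (by positivity) hs
      refine ⟨s, hs0, hs', ?_⟩
      rw [div_lt_iff₀ (by positivity)] at hs ⊢
      linarith
    have hK : IsCompact (f '' closedBall 0 s) := by
      refine (isCompact_closedBall _ _).image_of_continuousOn (h1.1.continuousOn.mono ?_)
      exact closedBall_subset_ball hs1
    have hKD : f '' closedBall 0 s ⊆ D := by
      rintro _ ⟨z, hz, rfl⟩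
      exact h2 z (closedBall_subset_ball hs1 hz)
    have ev1 : ∀ᶠ p : Euc d × Euc d in nhds (x, v), ∀ y ∈ f '' closedBall 0 s,
        p.1 + simil v p.2 (y - x) ∈ D := by
      refine hK.eventually_forall_of_forall_eventually fun y hy => ?_
      exact (tendsto_simil hv x y).eventually (hD.mem_nhds (hKD hy))
    have ev2 : ∀ᶠ p : Euc d × Euc d in nhds (x, v), p.2 ≠ 0 :=
      continuousAt_snd.eventually_ne hv
    have ev3 : ∀ᶠ p : Euc d × Euc d in nhds (x, v), v + (‖v‖ / ‖p.2‖) • p.2 ≠ 0 := by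
      have n1 : ‖v‖ ≠ 0 := norm_ne_zero_iff.2 hv
      have : ContinuousAt (fun p : Euc d × Euc d => v + (‖v‖ / ‖p.2‖) • p.2) (x, v) :=
        continuousAt_const.add (ContinuousAt.fun_smul
          (ContinuousAt.div (f := fun _ : Euc d × Euc d => ‖v‖) (g := fun p => ‖p.2‖)
            continuousAt_const (by fun_prop) n1) (by fun_prop))
      refine this.eventually_ne ?_
      simp only [div_self n1, one_smul, ← two_smul ℝ v]
      simp [hv]
    filter_upwards [ev1, ev2, ev3] with p hp1 hp2 hp3
    obtain ⟨g1, g2⟩ := h1.comp_similarity (s := s) (by rw [abs_of_pos hs0]; exact hs1.le)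
      (simil v p.2) (inner_simil v p.2) p.1 x
    refine (minMetric_le (by positivity) g1 (fun z hz => hp1 _ ⟨_, ?_, rfl⟩) (by simp [h3])
      ?_).trans_lt hsc
    · rw [mem_closedBall_zero_iff, norm_smul, Real.norm_eq_abs, abs_of_pos hs0]
      have : ‖z‖ < 1 := by simpa [unitDisk] using hz
      nlinarith
    · rw [g2, h4, map_smul, simil_apply_self hv hp2 hp3, smul_smul]
end

/-! ### Piecewise `C¹` curves -/

section
variable {d : ℕ} {D : Set (Euc d)}

/-- Inductive form of the notion of a piecewise `C¹` curve on `[a, b]`. -/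
inductive PW (γ : ℝ → Euc d) : ℝ → ℝ → Prop
  | base {a b : ℝ} : a ≤ b → ContDiffOn ℝ 1 γ (Icc a b) → PW γ a b
  | step {a b c : ℝ} : PW γ a b → b ≤ c → ContDiffOn ℝ 1 γ (Icc b c) → PW γ a c

variable {γ γ' : ℝ → Euc d} {a b c : ℝ}

lemma PW.le (h : PW γ a b) : a ≤ b := by
  induction h with
  | base h _ => exact h
  | step _ h _ ih => exact ih.trans h

lemma PW.continuousOn (h : PW γ a b) : ContinuousOn γ (Icc a b) := by
  induction h with
  | base h h2 => exact h2.continuousOn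
  | step h1 h h2 ih =>
    rw [← Icc_union_Icc_eq_Icc h1.le h]
    exact ih.union_of_isClosed h2.continuousOn isClosed_Icc isClosed_Icc

lemma PW.trans (h : PW γ a b) (h' : PW γ b c) : PW γ a c := by
  induction h' with
  | base h1 h2 => exact h.step h1 h2
  | step _ h1 h2 ih => exact ih.step h1 h2

lemma PW.congr (h : PW γ a b) (he : EqOn γ' γ (Icc a b)) : PW γ' a b := by
  induction h with
  | base h1 h2 => exact .base h1 (h2.congr he)
  | step h0 h1 h2 ih =>
    exact .step (ih (he.mono (Icc_subset_Icc_right h1))) h1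
      (h2.congr (he.mono (Icc_subset_Icc_left h0.le)))

lemma PW.mono (h : PW γ a b) {a' b' : ℝ} (h1 : a ≤ a') (h2 : a' ≤ b') (h3 : b' ≤ b) :
    PW γ a' b' := by
  induction h generalizing a' b' with
  | base h4 h5 => exact .base h2 (h5.mono (Icc_subset_Icc h1 h3))
  | @step b c h0 h4 h5 ih =>
    rcases le_total b' b with hb | hb
    · exact ih h1 h2 hb
    rcases le_total b a' with ha | ha
    · exact .base h2 (h5.mono (Icc_subset_Icc ha h3))
    · exact .step (ih h1 ha le_rfl) hb (h5.mono (Icc_subset_Icc_right h3))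

lemma PW.comp_affine (h : PW γ a b) {k : ℝ} (hk : 0 < k) (l : ℝ) :
    PW (fun t => γ (k * t + l)) ((a - l) / k) ((b - l) / k) := by
  have base : ∀ a b, a ≤ b → ContDiffOn ℝ 1 γ (Icc a b) → (a - l) / k ≤ (b - l) / k ∧
      ContDiffOn ℝ 1 (fun t => γ (k * t + l)) (Icc ((a - l) / k) ((b - l) / k)) := by
    intro a b h1 h2
    refine ⟨by gcongr, h2.comp (t := Icc a b) (by fun_prop) ?_⟩
    rintro t ⟨ht1, ht2⟩
    rw [div_le_iff₀ hk] at ht1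
    rw [le_div_iff₀ hk] at ht2
    exact ⟨by linarith, by linarith⟩
  induction h with
  | base h1 h2 => exact .base (base _ _ h1 h2).1 (base _ _ h1 h2).2
  | step h0 h1 h2 ih => exact .step ih (base _ _ h1 h2).1 (base _ _ h1 h2).2

lemma PW.comp_neg (h : PW γ a b) : PW (fun t => γ (-t)) (-b) (-a) := by
  have base : ∀ a b, a ≤ b → ContDiffOn ℝ 1 γ (Icc a b) → PW (fun t => γ (-t)) (-b) (-a) := by
    intro a b h1 h2
    refine .base (by linarith) (h2.comp (t := Icc a b) (by fun_prop) ?_)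
    rintro t ⟨ht1, ht2⟩
    exact ⟨by linarith, by linarith⟩
  induction h with
  | base h1 h2 => exact base _ _ h1 h2
  | step h0 h1 h2 ih => exact (base _ _ h1 h2).trans ih

lemma PiecewiseC1On.pw (h : PiecewiseC1On γ a b) : PW γ a b := by
  obtain ⟨-, n, t, ht, h0, h1, h2⟩ := h
  have key : ∀ k : ℕ, ∀ hk : k < n + 1, PW γ (t 0) (t (⟨k, hk⟩ : Fin (n + 1)).succ) := by
    intro k
    induction k with
    | zero => intro hk; exact .base (ht (Fin.zero_le _)) (h2 ⟨0, hk⟩)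
    | succ k ih =>
      intro hk
      exact (ih (by omega)).step (ht (by simp [Fin.le_def])) (h2 ⟨k + 1, hk⟩)
  have := key n (by omega)
  rw [h0] at this
  rw [← h1]
  exact this

lemma PW.piecewise (h : PW γ a b) : PiecewiseC1On γ a b := by
  refine ⟨h.continuousOn, ?_⟩
  have key : ∃ (n : ℕ) (t : ℕ → ℝ), Monotone t ∧ t 0 = a ∧ t (n + 1) = b ∧
      ∀ i < n + 1, ContDiffOn ℝ 1 γ (Icc (t i) (t (i + 1))) := by
    induction h with
    | @base b h1 h2 =>
      refine ⟨0, fun k => if k = 0 then a else b, ?_, by simp, by simp, ?_⟩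
      · apply monotone_nat_of_le_succ
        intro k
        by_cases hk : k = 0 <;> simp [hk, h1]
      · intro i hi
        have : i = 0 := by omega
        simpa [this] using h2
    | @step b c h0 h1 h2 ih =>
      obtain ⟨n, t, ht, t0, t1, ht2⟩ := ih
      refine ⟨n + 1, fun k => if k ≤ n + 1 then t k else c, ?_, by simp [t0], by simp, ?_⟩
      · apply monotone_nat_of_le_succ
        intro k
        by_cases hk : k + 1 ≤ n + 1
        · have : k ≤ n + 1 := by omega
          simp only [hk, this, if_true]; exact ht (by omega)
        · by_cases hk' : k ≤ n + 1
          · simp only [hk, hk', if_true, if_false]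
            exact (ht hk').trans (t1.le.trans h1)
          · simp [hk, hk']
      · intro i hi
        by_cases hk : i + 1 ≤ n + 1
        · have : i ≤ n + 1 := by omega
          simp only [hk, this, if_true]; exact ht2 i (by omega)
        · have : i = n + 1 := by omega
          subst this
          simpa [t1] using h2
  obtain ⟨n, t, ht, t0, t1, ht2⟩ := key
  exact ⟨n, fun i => t i, fun i j hij => ht hij, by simpa using t0, by simpa using t1,
    fun i => by simpa using ht2 i i.2⟩

/-! ### Lengths of curves -/

/-- The minimal length of the restriction of `γ` to `[a, b]`. -/
def len (D : Set (Euc d)) (γ : ℝ → Euc d) (a b : ℝ) : ℝ :=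
  ∫ t in a..b, minMetric D (γ t) (deriv γ t)

lemma deriv_eq_of_eqOn_Ioo (he : EqOn γ' γ (Ioo a b)) {t : ℝ} (ht : t ∈ Ioo a b) :
    deriv γ' t = deriv γ t :=
  EventuallyEq.deriv_eq (by filter_upwards [isOpen_Ioo.mem_nhds ht] with s hs using he hs)

lemma len_congr (hab : a ≤ b) (he : EqOn γ' γ (Ioo a b)) : len D γ' a b = len D γ a b :=
  intervalIntegral.integral_congr_Ioo_of_le hab fun t ht => by
    simp only [he ht, deriv_eq_of_eqOn_Ioo he ht]

lemma len_nonneg (hab : a ≤ b) : 0 ≤ len D γ a b :=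
  intervalIntegral.integral_nonneg hab fun _ _ => minMetric_nonneg _ _

/-- The infinitesimal length is integrable, by upper semicontinuity and compactness. -/
lemma intervalIntegrable_of_contDiffOn (hd : 3 ≤ d) (hD : IsOpen D) (hab : a ≤ b)
    (h : ContDiffOn ℝ 1 γ (Icc a b)) (hm : ∀ t ∈ Icc a b, γ t ∈ D) :
    IntervalIntegrable (fun t => minMetric D (γ t) (deriv γ t)) MeasureTheory.volume a b := by
  rcases hab.eq_or_lt with rfl | hab'
  · simp
  have hc : ContinuousOn (derivWithin γ (Icc a b)) (Icc a b) :=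
    h.continuousOn_derivWithin (uniqueDiffOn_Icc hab') (by norm_num)
  -- the curve of velocities, as a continuous function on the line
  set Γ : ℝ → Euc d × Euc d := fun t => (γ (projIcc a b hab t),
    derivWithin γ (Icc a b) (projIcc a b hab t)) with hΓ
  have hΓc : Continuous Γ := by
    refine Continuous.prodMk ?_ ?_
    · exact (continuousOn_iff_continuous_domRestrict.1 h.continuousOn).comp continuous_projIcc
    · exact (continuousOn_iff_continuous_domRestrict.1 hc).comp continuous_projIcc
  have hmeas : Measurable fun t => minMetric D (Γ t).1 (Γ t).2 := by
    refine measurable_of_Iio fun r => IsOpen.measurableSet ?_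
    rw [isOpen_iff_mem_nhds]
    intro t ht
    exact hΓc.continuousAt.eventually
      (minMetric_usc hd hD (hm _ (projIcc a b hab t).2) ht)
  obtain ⟨R, hR, hRD⟩ := (isCompact_Icc.image_of_continuousOn
    h.continuousOn).exists_thickening_subset_open hD (by rintro _ ⟨t, ht, rfl⟩; exact hm t ht)
  obtain ⟨B, hB⟩ := (isCompact_Icc.image_of_continuousOn hc).isBounded.exists_norm_le
  have hbound : ∀ t, ‖minMetric D (Γ t).1 (Γ t).2‖ ≤ B / R := by
    intro t
    rw [Real.norm_eq_abs, abs_of_nonneg (minMetric_nonneg _ _)]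
    refine (minMetric_le_of_ball hd hR ?_).trans ?_
    · refine Subset.trans ?_ hRD
      exact ball_subset_thickening (mem_image_of_mem _ (projIcc a b hab t).2) R
    · gcongr
      exact hB _ (mem_image_of_mem _ (projIcc a b hab t).2)
  have hInt : IntervalIntegrable (fun t => minMetric D (Γ t).1 (Γ t).2)
      MeasureTheory.volume a b := by
    rw [intervalIntegrable_iff]
    exact MeasureTheory.Measure.integrableOn_of_bounded (M := B / R) (by simp)
      hmeas.aestronglyMeasurable (Eventually.of_forall hbound)
  refine hInt.congr_ae ?_
  rw [uIoc_of_le hab, ← MeasureTheory.restrict_Ioo_eq_restrict_Ioc]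
  filter_upwards [MeasureTheory.self_mem_ae_restrict measurableSet_Ioo] with t ht
  have ht' : t ∈ Icc a b := Ioo_subset_Icc_self ht
  simp only [hΓ, projIcc_of_mem hab ht']
  rw [derivWithin_of_mem_nhds (Icc_mem_nhds ht.1 ht.2)]

lemma PW.intervalIntegrable (hd : 3 ≤ d) (hD : IsOpen D) (h : PW γ a b)
    (hm : ∀ t ∈ Icc a b, γ t ∈ D) :
    IntervalIntegrable (fun t => minMetric D (γ t) (deriv γ t)) MeasureTheory.volume a b := by
  induction h with
  | base h1 h2 => exact intervalIntegrable_of_contDiffOn hd hD h1 h2 hm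
  | step h0 h1 h2 ih =>
    exact (ih fun t ht => hm t ⟨ht.1, ht.2.trans h1⟩).trans
      (intervalIntegrable_of_contDiffOn hd hD h1 h2 fun t ht => hm t ⟨h0.le.trans ht.1, ht.2⟩)

lemma PW.len_add (hd : 3 ≤ d) (hD : IsOpen D) (h : PW γ a b) (h' : PW γ b c)
    (hm : ∀ t ∈ Icc a c, γ t ∈ D) : len D γ a b + len D γ b c = len D γ a c :=
  intervalIntegral.integral_add_adjacent_intervals
    (h.intervalIntegrable hd hD fun t ht => hm t ⟨ht.1, ht.2.trans h'.le⟩)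
    (h'.intervalIntegrable hd hD fun t ht => hm t ⟨h.le.trans ht.1, ht.2⟩)

lemma len_comp_affine {k : ℝ} (hk : 0 < k) (l : ℝ) :
    len D (fun t => γ (k * t + l)) ((a - l) / k) ((b - l) / k) = len D γ a b := by
  have e : ∀ t, deriv (fun t => γ (k * t + l)) t = k • deriv γ (k * t + l) := by
    intro t
    have h1 := deriv_comp_mul_left k (fun s => γ (s + l)) t
    rw [deriv_comp_add_const] at h1
    exact h1
  unfold len
  simp only [e, minMetric_smul _ _ hk, intervalIntegral.integral_const_mul]
  rw [intervalIntegral.integral_comp_mul_add (fun s => minMetric D (γ s) (deriv γ s)) hk.ne']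
  have h1 : k * ((a - l) / k) + l = a := by field_simp; ring
  have h2 : k * ((b - l) / k) + l = b := by field_simp; ring
  rw [h1, h2, smul_eq_mul, ← mul_assoc, mul_inv_cancel₀ hk.ne', one_mul]

lemma len_comp_neg (hd : 3 ≤ d) (hD : IsOpen D) (hab : a ≤ b) (hm : ∀ t ∈ Icc a b, γ t ∈ D) :
    len D (fun t => γ (-t)) (-b) (-a) = len D γ a b := by
  unfold len
  have : ∫ t in -b..-a, minMetric D (γ (-t)) (deriv (fun t => γ (-t)) t) =
      ∫ t in -b..-a, minMetric D (γ (-t)) (deriv γ (-t)) := by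
    refine intervalIntegral.integral_congr fun t ht => ?_
    rw [uIcc_of_le (by linarith)] at ht
    simp only [deriv_comp_neg]
    exact minMetric_neg hd hD (hm _ ⟨by linarith [ht.2], by linarith [ht.1]⟩) _
  rw [this, intervalIntegral.integral_comp_neg (fun s => minMetric D (γ s) (deriv γ s))]
  simp

/-- `x` and `y` are joined in `D` by a piecewise `C¹` curve of minimal length `ℓ`. -/
def MJoined (D : Set (Euc d)) (x y : Euc d) (ℓ : ℝ) : Prop :=
  ∃ (γ : ℝ → Euc d) (a b : ℝ), PW γ a b ∧ (∀ t ∈ Icc a b, γ t ∈ D) ∧ γ a = x ∧ γ b = y ∧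
    len D γ a b = ℓ

lemma MJoined.nonneg {x y : Euc d} {ℓ : ℝ} (h : MJoined D x y ℓ) : 0 ≤ ℓ := by
  obtain ⟨γ, a, b, h, -, -, -, rfl⟩ := h
  exact len_nonneg h.le

lemma MJoined.symm (hd : 3 ≤ d) (hD : IsOpen D) {x y : Euc d} {ℓ : ℝ} (h : MJoined D x y ℓ) :
    MJoined D y x ℓ := by
  obtain ⟨γ, a, b, h, hm, rfl, rfl, rfl⟩ := h
  refine ⟨fun t => γ (-t), -b, -a, h.comp_neg, fun t ht => hm _ ?_, by simp, by simp,
    len_comp_neg hd hD h.le hm⟩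
  exact ⟨by linarith [ht.2], by linarith [ht.1]⟩

lemma MJoined.trans (hd : 3 ≤ d) (hD : IsOpen D) {x y z : Euc d} {ℓ ℓ' : ℝ} (h : MJoined D x y ℓ)
    (h' : MJoined D y z ℓ') : MJoined D x z (ℓ + ℓ') := by
  obtain ⟨γ, a, b, h, hm, rfl, rfl, rfl⟩ := h
  obtain ⟨β, a', b', h', hm', e, rfl, rfl⟩ := h'
  set σ : ℝ → Euc d := fun t => if t ≤ b then γ t else β (1 * t + (a' - b)) with hσ
  have e1 : EqOn σ γ (Icc a b) := fun t ht => by simp [hσ, ht.2]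
  have e2 : EqOn σ (fun t => β (1 * t + (a' - b))) (Icc b (b + b' - a')) := by
    intro t ht
    rcases ht.1.eq_or_lt with rfl | hlt
    · simp [hσ, e]
    · simp [hσ, hlt.not_ge]
  have s1 : PW σ a b := h.congr e1
  have h2 := h'.comp_affine one_pos (a' - b)
  have l2 := len_comp_affine (D := D) (γ := β) (a := a') (b := b') one_pos (a' - b)
  rw [show (a' - (a' - b)) / 1 = b by ring, show (b' - (a' - b)) / 1 = b + b' - a' by ring]
    at h2 l2
  have s2 : PW σ b (b + b' - a') := h2.congr e2
  have hmσ : ∀ t ∈ Icc a (b + b' - a'), σ t ∈ D := by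
    intro t ht
    rcases le_total t b with hb | hb
    · rw [e1 ⟨ht.1, hb⟩]; exact hm _ ⟨ht.1, hb⟩
    · rw [e2 ⟨hb, ht.2⟩]; exact hm' _ ⟨by linarith, by linarith [ht.2]⟩
  refine ⟨σ, a, b + b' - a', s1.trans s2, hmσ, e1 ⟨le_rfl, h.le⟩, ?_, ?_⟩
  · rw [e2 ⟨s2.le, le_rfl⟩]; simp only; congr 1; ring
  · rw [← s1.len_add hd hD s2 hmσ, len_congr h.le (e1.mono Ioo_subset_Icc_self),
      len_congr s2.le (e2.mono Ioo_subset_Icc_self), l2]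

lemma MJoined.refl {x : Euc d} (hx : x ∈ D) : MJoined D x x 0 :=
  ⟨fun _ => x, 0, 1, .base zero_le_one contDiffOn_const, fun _ _ => hx, rfl, rfl,
    by simp [len, minMetric_zero hx]⟩

lemma joined_iff {x y : Euc d} {ℓ : ℝ} : MJoined D x y ℓ ↔
    ∃ γ : ℝ → Euc d, PiecewiseC1On γ 0 1 ∧
      (∀ t ∈ Set.Icc (0:ℝ) 1, γ t ∈ D) ∧ γ 0 = x ∧ γ 1 = y ∧
      ℓ = ∫ t in (0:ℝ)..(1:ℝ), minMetric D (γ t) (deriv γ t) := by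
  constructor
  · intro h
    have : ∃ γ, PW γ 0 1 ∧ (∀ t ∈ Icc (0:ℝ) 1, γ t ∈ D) ∧ γ 0 = x ∧ γ 1 = y ∧
        len D γ 0 1 = ℓ := by
      obtain ⟨γ, a, b, h, hm, rfl, rfl, rfl⟩ := h
      rcases h.le.eq_or_lt with rfl | hab
      · have hx : γ a ∈ D := hm a ⟨le_rfl, le_rfl⟩
        exact ⟨fun _ => γ a, .base zero_le_one contDiffOn_const, fun _ _ => hx, rfl, rfl,
          by simp [len, minMetric_zero hx]⟩
      · have hk : 0 < b - a := by linarith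
        have h2 := h.comp_affine hk a
        have l2 := len_comp_affine (D := D) (γ := γ) (a := a) (b := b) hk a
        rw [sub_self, zero_div, div_self hk.ne'] at h2 l2
        refine ⟨_, h2, fun t ht => hm _ ⟨?_, ?_⟩, by simp, by simp, l2⟩
        · nlinarith [ht.1]
        · nlinarith [ht.2]
    obtain ⟨γ, h1, h2, h3, h4, h5⟩ := this
    exact ⟨γ, h1.piecewise, h2, h3, h4, h5.symm⟩
  · rintro ⟨γ, h1, h2, h3, h4, h5⟩
    exact ⟨γ, 0, 1, h1.pw, h2, h3, h4, h5.symm⟩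

/-- A segment along which the metric is bounded. -/
lemma joined_segment (hd : 3 ≤ d) (hD : IsOpen D) {x y : Euc d} {B : ℝ}
    (hm : ∀ t ∈ Icc (0:ℝ) 1, x + t • (y - x) ∈ D)
    (hB : ∀ t ∈ Icc (0:ℝ) 1, minMetric D (x + t • (y - x)) (y - x) ≤ B) :
    ∃ ℓ ≤ B, MJoined D x y ℓ := by
  have hpw : PW (fun t : ℝ => x + t • (y - x)) 0 1 :=
    .base zero_le_one (by fun_prop)
  refine ⟨len D (fun t : ℝ => x + t • (y - x)) 0 1, ?_, _, 0, 1, hpw, hm, by simp, by simp, rfl⟩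
  have hder : ∀ t, deriv (fun t : ℝ => x + t • (y - x)) t = y - x := by
    intro t
    have : HasDerivAt (fun t : ℝ => x + t • (y - x)) ((1:ℝ) • (y - x)) t :=
      ((hasDerivAt_id t).smul_const (y - x)).const_add x
    rw [this.deriv, one_smul]
  have h2 : len D (fun t : ℝ => x + t • (y - x)) 0 1 ≤ ∫ _ in (0:ℝ)..1, B := by
    refine intervalIntegral.integral_mono_on zero_le_one (hpw.intervalIntegrable hd hD hm)
      (by simp) fun t ht => ?_
    rw [hder]; exact hB t ht
  simpa using h2

/-! ### The minimal pseudodistance -/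

lemma minDist_le {x y : Euc d} {ℓ : ℝ} (h : MJoined D x y ℓ) : minDist D x y ≤ ℓ := by
  refine csInf_le ⟨0, ?_⟩ (joined_iff.1 h)
  intro ℓ' h'
  exact (joined_iff.2 h').nonneg

lemma minDist_nonneg (x y : Euc d) : 0 ≤ minDist D x y :=
  Real.sInf_nonneg fun _ h' => (joined_iff.2 h').nonneg

lemma eventually_joined (hd : 3 ≤ d) (hD : IsOpen D) {x : Euc d} (hx : x ∈ D) :
    ∀ᶠ y in nhds x, ∃ ℓ ≤ 1, MJoined D x y ℓ := by
  obtain ⟨R, hR, hb⟩ := Metric.isOpen_iff.1 hD x hx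
  filter_upwards [ball_mem_nhds x (half_pos hR)] with y hy
  rw [mem_ball, dist_eq_norm] at hy
  have hmem : ∀ t ∈ Icc (0:ℝ) 1, ball (x + t • (y - x)) (R / 2) ⊆ D := by
    intro t ht
    refine Subset.trans (ball_subset_ball' ?_) hb
    rw [dist_eq_norm, add_sub_cancel_left, norm_smul, Real.norm_eq_abs, abs_of_nonneg ht.1]
    nlinarith [ht.2, norm_nonneg (y - x)]
  refine joined_segment hd hD (fun t ht => hmem t ht (mem_ball_self (half_pos hR))) fun t ht => ?_
  refine (minMetric_le_of_ball hd (half_pos hR) (hmem t ht)).trans ?_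
  rw [div_le_one (half_pos hR)]; exact hy.le

lemma exists_joined (hd : 3 ≤ d) (hD : IsOpen D) (hc : IsConnected D) {x y : Euc d} (hx : x ∈ D)
    (hy : y ∈ D) : ∃ ℓ, MJoined D x y ℓ := by
  refine hc.isPreconnected.induction₂ (fun x y => ∃ ℓ, MJoined D x y ℓ) ?_ ?_ ?_ hx hy
  · intro x hx
    refine nhdsWithin_le_nhds ?_
    filter_upwards [eventually_joined hd hD hx] with y hy
    exact ⟨hy.choose, hy.choose_spec.2⟩
  · rintro x y z - - - ⟨ℓ, h⟩ ⟨ℓ', h'⟩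
    exact ⟨_, h.trans hd hD h'⟩
  · rintro x y - - ⟨ℓ, h⟩
    exact ⟨_, h.symm hd hD⟩

lemma exists_joined_lt (hd : 3 ≤ d) (hD : IsOpen D) (hc : IsConnected D) {x y : Euc d}
    (hx : x ∈ D) (hy : y ∈ D) {r : ℝ} (hr : minDist D x y < r) : ∃ ℓ < r, MJoined D x y ℓ := by
  obtain ⟨ℓ, h⟩ := exists_joined hd hD hc hx hy
  obtain ⟨ℓ', h1, h2⟩ := exists_lt_of_csInf_lt ⟨ℓ, joined_iff.1 h⟩ hr
  exact ⟨ℓ', h2, joined_iff.2 h1⟩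

lemma minDist_self {x : Euc d} (hx : x ∈ D) : minDist D x x = 0 :=
  le_antisymm (minDist_le (MJoined.refl hx)) (minDist_nonneg _ _)

lemma minDist_symm (hd : 3 ≤ d) (hD : IsOpen D) (x y : Euc d) :
    minDist D x y = minDist D y x := by
  unfold minDist
  congr 1
  ext ℓ
  exact ⟨fun h => joined_iff.1 ((joined_iff.2 h).symm hd hD),
    fun h => joined_iff.1 ((joined_iff.2 h).symm hd hD)⟩

lemma minDist_triangle (hd : 3 ≤ d) (hD : IsOpen D) (hc : IsConnected D) {x y z : Euc d}
    (hx : x ∈ D) (hy : y ∈ D) (hz : z ∈ D) :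
    minDist D x z ≤ minDist D x y + minDist D y z := by
  refine le_of_forall_pos_le_add fun ε hε => ?_
  obtain ⟨ℓ, h1, h2⟩ := exists_joined_lt hd hD hc hx hy (r := minDist D x y + ε / 2) (by linarith)
  obtain ⟨ℓ', h1', h2'⟩ := exists_joined_lt hd hD hc hy hz (r := minDist D y z + ε / 2)
    (by linarith)
  have := minDist_le (h2.trans hd hD h2')
  linarith

lemma minDist_bounded_on_compact (hd : 3 ≤ d) (hD : IsOpen D) (hc : IsConnected D) {o : Euc d}
    (ho : o ∈ D) {K : Set (Euc d)} (hK : IsCompact K) (hKD : K ⊆ D) :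
    ∃ C, ∀ x ∈ K, minDist D o x ≤ C := by
  refine hK.induction_on (p := fun K => ∃ C, ∀ x ∈ K, minDist D o x ≤ C) ⟨0, by simp⟩ ?_ ?_ ?_
  · rintro s t hst ⟨C, hC⟩
    exact ⟨C, fun x hx => hC x (hst hx)⟩
  · rintro s t ⟨C, hC⟩ ⟨C', hC'⟩
    refine ⟨max C C', ?_⟩
    rintro x (hx | hx)
    · exact (hC x hx).trans (le_max_left _ _)
    · exact (hC' x hx).trans (le_max_right _ _)
  · intro x hx
    obtain ⟨ℓ, hℓ⟩ := exists_joined hd hD hc ho (hKD hx)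
    refine ⟨_, mem_nhdsWithin_of_mem_nhds (eventually_joined hd hD (hKD hx)), ℓ + 1, ?_⟩
    rintro y ⟨ℓ', h1, h2⟩
    have := minDist_le (hℓ.trans hd hD h2)
    linarith

/-- Near-minimizing curves, cut at unit steps, are rough chains. -/
lemma exists_roughChain (hd : 3 ≤ d) (hD : IsOpen D) (hc : IsConnected D) (x y : D) :
    ∃ (c : ℕ → D) (N : ℕ), c 0 = x ∧ c N = y ∧
      RoughChain (fun a b : D => minDist D a b) c N := by
  obtain ⟨ℓ, hℓ, γ, a, b, h, hm, e1, e2, e3⟩ := exists_joined_lt hd hD hc x.2 y.2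
    (r := minDist D x y + 1) (by linarith)
  have hab := h.le
  have hInt := h.intervalIntegrable hd hD hm
  have hℓ0 : 0 ≤ ℓ := by rw [← e3]; exact len_nonneg hab
  have hcont : ContinuousOn (fun t => len D γ a t) (Icc a b) := by
    have := intervalIntegral.continuousOn_primitive_interval (μ := MeasureTheory.volume)
      (a := a) (b := b) (f := fun t => minMetric D (γ t) (deriv γ t))
      (by rw [intervalIntegrable_iff_integrableOn_Icc_of_le hab] at hInt; rwa [uIcc_of_le hab])
    rwa [uIcc_of_le hab] at this
  have hadd : ∀ s t, a ≤ s → s ≤ t → t ≤ b → len D γ a s + len D γ s t = len D γ a t :=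
    fun s t h1 h2 h3 => (h.mono le_rfl h1 (h2.trans h3)).len_add hd hD (h.mono h1 h2 h3)
      fun u hu => hm u ⟨hu.1, hu.2.trans h3⟩
  have hdist : ∀ s t, a ≤ s → s ≤ t → t ≤ b →
      minDist D (γ s) (γ t) ≤ len D γ a t - len D γ a s := by
    intro s t h1 h2 h3
    have := minDist_le ⟨γ, s, t, h.mono h1 h2 h3, fun u hu => hm u ⟨h1.trans hu.1, hu.2.trans h3⟩,
      rfl, rfl, rfl⟩
    linarith [hadd s t h1 h2 h3]
  have ha0 : len D γ a a = 0 := by simp [len]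
  have hex : ∀ i : ℕ, (i : ℝ) ≤ ℓ → ∃ t ∈ Icc a b, len D γ a t = i := by
    intro i hi
    have := intermediate_value_Icc hab hcont
    rw [ha0, e3] at this
    exact this ⟨Nat.cast_nonneg i, hi⟩
  choose! t ht ht' using hex
  set N := ⌊ℓ⌋₊ + 1 with hN
  have hN1 : ∀ i < N, (i : ℝ) ≤ ℓ := fun i hi => by
    have : i ≤ ⌊ℓ⌋₊ := by omega
    exact (Nat.cast_le.2 this).trans (Nat.floor_le hℓ0)
  have hN2 : ℓ < N := by rw [hN]; push_cast; exact Nat.lt_floor_add_one ℓ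
  have hN3 : (N : ℝ) ≤ ℓ + 1 := by rw [hN]; push_cast; linarith [Nat.floor_le hℓ0]
  set τ : ℕ → ℝ := fun i => if i = 0 then a else if i < N then t i else b with hτ
  have τmem : ∀ i, τ i ∈ Icc a b := by
    intro i
    simp only [hτ]
    split_ifs with h1 h2
    · exact ⟨le_rfl, hab⟩
    · exact ht i (hN1 i h2)
    · exact ⟨hab, le_rfl⟩
  have τlen : ∀ i < N, len D γ a (τ i) = i := by
    intro i hi
    simp only [hτ]
    split_ifs with h1
    · simp [h1, ha0]
    · exact ht' i (hN1 i hi)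
  have τ0 : τ 0 = a := by simp [hτ]
  have τN : τ N = b := by simp [hτ, hN]
  have τmono : ∀ i j, i ≤ j → j ≤ N → τ i ≤ τ j := by
    intro i j hij hj
    rcases hij.eq_or_lt with rfl | hij
    · exact le_rfl
    rcases hj.eq_or_lt with rfl | hj
    · rw [τN]; exact (τmem i).2
    by_contra hlt
    have h1 := hadd (τ j) (τ i) (τmem j).1 (not_le.1 hlt).le (τmem i).2
    rw [τlen i (hij.trans hj), τlen j hj] at h1
    have h2 : 0 ≤ len D γ (τ j) (τ i) := len_nonneg (not_le.1 hlt).le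
    have : (i : ℝ) < j := Nat.cast_lt.2 hij
    linarith
  have hup : ∀ i j, i ≤ j → j ≤ N → minDist D (γ (τ i)) (γ (τ j)) ≤ (j : ℝ) - i := by
    intro i j hij hj
    have h1 := hdist _ _ (τmem i).1 (τmono i j hij hj) (τmem j).2
    rcases hij.eq_or_lt with rfl | hij
    · linarith
    rw [τlen i (hij.trans_le hj)] at h1
    rcases hj.eq_or_lt with rfl | hj
    · rw [τN, e3] at h1; rw [τN]; linarith
    · rw [τlen j hj] at h1; exact h1
  refine ⟨fun i => ⟨γ (τ i), hm _ (τmem i)⟩, N, Subtype.ext (by simp [τ0, e1]),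
    Subtype.ext (by simp [τN, e2]), fun i j hij hj => ⟨hup i j hij hj, ?_⟩⟩
  simp only
  have hiD := hm _ (τmem i)
  have hjD := hm _ (τmem j)
  have t1 := minDist_triangle hd hD hc x.2 hiD y.2
  have t2 := minDist_triangle hd hD hc hiD hjD y.2
  have u1 : minDist D x (γ (τ i)) ≤ i := by
    have := hup 0 i (Nat.zero_le _) (hij.trans hj)
    rw [τ0, e1] at this; simpa using this
  rcases hj.eq_or_lt with rfl | hj
  · rw [τN, e2] at t2 ⊢
    rw [minDist_self y.2] at t2
    linarith
  · have u2 := hdist _ _ (τmem j).1 (τmem j).2 le_rfl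
    rw [e2, e3, τlen j hj] at u2
    linarith

lemma norm_sub_le_len_of_contDiffOn (hd : 3 ≤ d) (hD : IsOpen D) {F : Type*}
    [NormedAddCommGroup F] [NormedSpace ℝ F] [CompleteSpace F] {Φ : Euc d → F}
    (hΦ : ContDiffOn ℝ 1 Φ D) {K : ℝ} (h1 : a ≤ b) (h2 : ContDiffOn ℝ 1 γ (Icc a b))
    (hm : ∀ t ∈ Icc a b, γ t ∈ D)
    (hK : ∀ t ∈ Icc a b, ∀ v, ‖fderiv ℝ Φ (γ t) v‖ ≤ K * minMetric D (γ t) v) :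
    ‖Φ (γ b) - Φ (γ a)‖ ≤ K * len D γ a b := by
  have hc : ContDiffOn ℝ 1 (Φ ∘ γ) (Icc a b) := hΦ.comp h2 hm
  have e := intervalIntegral.integral_deriv_of_contDiffOn_Icc hc h1
  have e' : Φ (γ b) - Φ (γ a) = ∫ t in a..b, deriv (Φ ∘ γ) t := e.symm
  have hInt := intervalIntegrable_of_contDiffOn hd hD h1 h2 hm
  rw [e', len, ← intervalIntegral.integral_const_mul]
  refine intervalIntegral.norm_integral_le_of_norm_le h1 ?_ (hInt.const_mul K)
  filter_upwards [MeasureTheory.Measure.ae_ne MeasureTheory.volume b] with t htb ht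
  have ht' : t ∈ Ioo a b := ⟨ht.1, lt_of_le_of_ne ht.2 htb⟩
  have ht'' := Ioo_subset_Icc_self ht'
  have d1 : DifferentiableAt ℝ γ t :=
    (h2.differentiableOn (by norm_num) t ht'').differentiableAt (Icc_mem_nhds ht'.1 ht'.2)
  have d2 : DifferentiableAt ℝ Φ (γ t) :=
    (hΦ.differentiableOn (by norm_num)).differentiableAt (hD.mem_nhds (hm t ht''))
  rw [fderiv_comp_deriv t d2 d1]
  exact hK t ht'' _

/-- A `C¹` map whose differential is bounded by the metric is Lipschitz along curves. -/
lemma norm_sub_le_len (hd : 3 ≤ d) (hD : IsOpen D) {F : Type*} [NormedAddCommGroup F]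
    [NormedSpace ℝ F] [CompleteSpace F] {Φ : Euc d → F} (hΦ : ContDiffOn ℝ 1 Φ D) {K : ℝ}
    (h : PW γ a b) (hm : ∀ t ∈ Icc a b, γ t ∈ D)
    (hK : ∀ t ∈ Icc a b, ∀ v, ‖fderiv ℝ Φ (γ t) v‖ ≤ K * minMetric D (γ t) v) :
    ‖Φ (γ b) - Φ (γ a)‖ ≤ K * len D γ a b := by
  induction h with
  | base h1 h2 => exact norm_sub_le_len_of_contDiffOn hd hD hΦ h1 h2 hm hK
  | @step b c h0 h1 h2 ih =>
    have l := h0.len_add hd hD (.base h1 h2) hm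
    have i1 := ih (fun t ht => hm t ⟨ht.1, ht.2.trans h1⟩)
      (fun t ht => hK t ⟨ht.1, ht.2.trans h1⟩)
    have i2 := norm_sub_le_len_of_contDiffOn hd hD hΦ h1 h2
      (fun t ht => hm t ⟨h0.le.trans ht.1, ht.2⟩) (fun t ht => hK t ⟨h0.le.trans ht.1, ht.2⟩)
    rw [← l, mul_add]
    have := norm_sub_le_norm_sub_add_norm_sub (Φ (γ c)) (Φ (γ b)) (Φ (γ a))
    linarith
end

/-! ### The maximum principle and the sub-mean value property -/

section
open Complex

/-- `k` is twice differentiable at `0` with second derivative `a`. -/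
def D2 (k : ℝ → ℝ) (a : ℝ) : Prop :=
  ∃ k' : ℝ → ℝ, (∀ᶠ t in nhds 0, HasDerivAt k (k' t) t) ∧ HasDerivAt k' a 0

lemma D2.add {k l : ℝ → ℝ} {a b : ℝ} (hk : D2 k a) (hl : D2 l b) :
    D2 (fun t => k t + l t) (a + b) := by
  obtain ⟨k', h1, h2⟩ := hk
  obtain ⟨l', h3, h4⟩ := hl
  refine ⟨fun t => k' t + l' t, ?_, h2.add h4⟩
  filter_upwards [h1, h3] with t ht ht'
  exact ht.add ht'

lemma D2.const_mul {k : ℝ → ℝ} {a : ℝ} (hk : D2 k a) (c : ℝ) :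
    D2 (fun t => c * k t) (c * a) := by
  obtain ⟨k', h1, h2⟩ := hk
  refine ⟨fun t => c * k' t, ?_, h2.const_mul c⟩
  filter_upwards [h1] with t ht
  exact ht.const_mul c

lemma D2.const (c : ℝ) : D2 (fun _ => c) 0 :=
  ⟨fun _ => 0, Eventually.of_forall fun t => hasDerivAt_const t c, hasDerivAt_const 0 0⟩

lemma D2.nonpos {k : ℝ → ℝ} {a : ℝ} (hk : D2 k a) (hm : IsLocalMax k 0) : a ≤ 0 := by
  obtain ⟨k', h1, h2⟩ := hk
  by_contra! ha
  have e1 : deriv k =ᶠ[nhds 0] k' := by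
    filter_upwards [h1] with t ht using ht.deriv
  have hd : deriv k 0 = 0 := hm.deriv_eq_zero
  have hdd : deriv (deriv k) 0 = a := by rw [e1.deriv_eq, h2.deriv]
  have hmin : IsLocalMin k 0 :=
    isLocalMin_of_deriv_deriv_pos (by rw [hdd]; exact ha) hd h1.self_of_nhds.continuousAt
  have hc : k =ᶠ[nhds 0] fun _ => k 0 := by
    filter_upwards [hm, hmin] with t h3 h4
    exact le_antisymm h3 h4
  have hc' : deriv k =ᶠ[nhds 0] fun _ => 0 := by
    filter_upwards [hc.eventuallyEq_nhds] with t ht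
    rw [ht.deriv_eq]; simp
  rw [hc'.deriv_eq] at hdd
  simp at hdd
  linarith

/-- The Laplacian of `σ` at `z` exists coordinatewise and equals `l`. -/
def LapAt (σ : ℂ → ℝ) (z : ℂ) (l : ℝ) : Prop :=
  ∃ a b : ℝ, D2 (fun t : ℝ => σ (z + t * 1)) a ∧ D2 (fun t : ℝ => σ (z + t * I)) b ∧ a + b = l

lemma LapAt.add {σ τ : ℂ → ℝ} {z : ℂ} {l m : ℝ} (h : LapAt σ z l) (h' : LapAt τ z m) :
    LapAt (fun w => σ w + τ w) z (l + m) := by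
  obtain ⟨a, b, h1, h2, h3⟩ := h
  obtain ⟨a', b', h1', h2', h3'⟩ := h'
  exact ⟨_, _, h1.add h1', h2.add h2', by linarith⟩

lemma LapAt.const_mul {σ : ℂ → ℝ} {z : ℂ} {l : ℝ} (h : LapAt σ z l) (c : ℝ) :
    LapAt (fun w => c * σ w) z (c * l) := by
  obtain ⟨a, b, h1, h2, h3⟩ := h
  exact ⟨_, _, h1.const_mul c, h2.const_mul c, by rw [← h3]; ring⟩

lemma LapAt.const (z : ℂ) (c : ℝ) : LapAt (fun _ => c) z 0 :=
  ⟨0, 0, D2.const c, D2.const c, by simp⟩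

/-- Weak maximum principle, with lower test functions of positive Laplacian. -/
lemma max_principle {W : ℂ → ℝ} {r : ℝ} (hr : 0 < r) (hW : ContinuousOn W (closedBall 0 r))
    (hb : ∀ z ∈ sphere (0 : ℂ) r, W z ≤ 0)
    (ht : ∀ z ∈ ball (0 : ℂ) r, ∃ σ : ℂ → ℝ, (∀ᶠ w in nhds z, σ w ≤ W w) ∧ σ z = W z ∧
      ∃ l > 0, LapAt σ z l) {z : ℂ} (hz : z ∈ closedBall 0 r) : W z ≤ 0 := by
  obtain ⟨z₀, hz₀, hmax⟩ := (isCompact_closedBall (0 : ℂ) r).exists_isMaxOn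
    ⟨0, mem_closedBall_self hr.le⟩ hW
  refine (hmax hz).trans ?_
  by_cases hs : z₀ ∈ sphere (0 : ℂ) r
  · exact hb z₀ hs
  have hz₁ : z₀ ∈ ball (0 : ℂ) r := by
    simp only [mem_sphere_iff_norm, mem_closedBall, mem_ball, dist_zero_right, sub_zero] at *
    exact lt_of_le_of_ne hz₀ hs
  obtain ⟨σ, h1, h2, l, hl, a, b, ha, hb', hab⟩ := ht z₀ hz₁
  have hloc : IsLocalMax σ z₀ := by
    filter_upwards [h1, isOpen_ball.mem_nhds hz₁] with w hw hw'
    rw [h2]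
    exact hw.trans (hmax (ball_subset_closedBall hw'))
  have hdir : ∀ e : ℂ, IsLocalMax (fun t : ℝ => σ (z₀ + t * e)) 0 := by
    intro e
    have hc : Tendsto (fun t : ℝ => z₀ + t * e) (nhds 0) (nhds z₀) := by
      have : Continuous fun t : ℝ => z₀ + t * e := by fun_prop
      simpa using this.tendsto 0
    have := hc.eventually hloc
    simpa [IsLocalMax, IsMaxFilter] using this
  have := ha.nonpos (hdir 1)
  have := hb'.nonpos (hdir I)
  exfalso; linarith

/-- Trigonometric polynomials are dense: a continuous function on a circle is uniformly close to the
real part of a complex polynomial. -/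
lemma exists_polynomial_near {g : ℂ → ℝ} {r : ℝ} (hr : 0 < r) (hg : ContinuousOn g (sphere 0 r))
    {ε : ℝ} (hε : 0 < ε) :
    ∃ p : Polynomial ℂ, ∀ z ∈ sphere (0 : ℂ) r, |g z - (p.eval z).re| ≤ ε := by
  have : Fact (0 < 2 * Real.pi) := ⟨by positivity⟩
  have hmem : ∀ θ : AddCircle (2 * Real.pi), (r : ℂ) * (AddCircle.toCircle θ : ℂ) ∈
      sphere (0 : ℂ) r := by
    intro θ; simp [abs_of_pos hr, Circle.norm_coe]
  let G : C(AddCircle (2 * Real.pi), ℂ) :=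
    ⟨fun θ => (g (r * AddCircle.toCircle θ) : ℂ), by
      refine continuous_ofReal.comp (hg.comp_continuous ?_ hmem)
      exact continuous_const.mul (continuous_subtype_val.comp AddCircle.continuous_toCircle)⟩
  have hG : G ∈ (Submodule.span ℂ (range (@fourier (2 * Real.pi)))).topologicalClosure := by
    rw [span_fourier_closure_eq_top]; trivial
  obtain ⟨k, hk, hdist⟩ := Metric.mem_closure_iff.1 hG ε hε
  have hform : ∃ p q : Polynomial ℂ, ∀ θ, k θ = p.eval ((r : ℂ) * AddCircle.toCircle θ) +
      (starRingEnd ℂ) (q.eval ((r : ℂ) * AddCircle.toCircle θ)) := by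
    clear hdist
    induction hk using Submodule.span_induction with
    | mem x hx =>
      obtain ⟨n, rfl⟩ := hx
      have hr' : (r : ℂ) ≠ 0 := by exact_mod_cast hr.ne'
      obtain ⟨m, rfl | rfl⟩ := n.eq_nat_or_neg
      · refine ⟨Polynomial.C (((r : ℂ) ^ m)⁻¹) * Polynomial.X ^ m, 0, fun θ => ?_⟩
        simp only [fourier_apply, AddCircle.toCircle_zsmul]
        simp [mul_pow, hr']
      · refine ⟨0, Polynomial.C (((r : ℂ) ^ m)⁻¹) * Polynomial.X ^ m, fun θ => ?_⟩
        simp only [fourier_apply, AddCircle.toCircle_zsmul]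
        simp [mul_pow, hr', ← Circle.coe_inv_eq_conj]
    | zero => exact ⟨0, 0, by simp⟩
    | add x y _ _ hx hy =>
      obtain ⟨p, q, h⟩ := hx
      obtain ⟨p', q', h'⟩ := hy
      refine ⟨p + p', q + q', fun θ => ?_⟩
      simp [h, h']; ring
    | smul c x _ hx =>
      obtain ⟨p, q, h⟩ := hx
      refine ⟨Polynomial.C c * p, Polynomial.C ((starRingEnd ℂ) c) * q, fun θ => ?_⟩
      simp [h]; ring
  obtain ⟨p, q, hpq⟩ := hform
  refine ⟨p + q, fun z hz => ?_⟩
  obtain ⟨θ, rfl⟩ : ∃ θ : AddCircle (2 * Real.pi), (r : ℂ) * (AddCircle.toCircle θ : ℂ) = z := by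
    refine ⟨(arg z : ℝ), ?_⟩
    rw [AddCircle.toCircle_apply_mk, div_self (by positivity), one_mul, Circle.coe_exp]
    have h := norm_mul_exp_arg_mul_I z
    rwa [show ‖z‖ = r by simpa using hz] at h
  have h1 : ‖(G - k) θ‖ ≤ ε := by
    refine ((G - k).norm_coe_le_norm θ).trans ?_
    rw [← dist_eq_norm]; exact hdist.le
  have h2 : ((G - k) θ).re = g (r * AddCircle.toCircle θ) -
      ((p + q).eval ((r : ℂ) * AddCircle.toCircle θ)).re := by
    rw [ContinuousMap.sub_apply, hpq θ]
    simp [G]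
  rw [← h2]
  exact (abs_re_le_norm _).trans h1

lemma hasDerivAt_polynomial_line (p : Polynomial ℂ) (z e : ℂ) (t : ℝ) :
    HasDerivAt (fun t : ℝ => (e * p.eval (z + t * e)).re)
      ((e * (e * p.derivative.eval (z + t * e))).re) t := by
  have h1 : HasDerivAt (fun s : ℂ => e * p.eval (z + s * e))
      (e * (p.derivative.eval (z + t * e) * e)) (t : ℂ) := by
    have h2 : HasDerivAt (fun s : ℂ => z + s * e) e (t : ℂ) := by
      simpa using ((hasDerivAt_id (t : ℂ)).mul_const e).const_add z
    exact ((p.hasDerivAt _).comp (t : ℂ) h2).const_mul e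
  have := h1.real_of_complex
  convert this using 2; ring

lemma lapAt_re_polynomial (p : Polynomial ℂ) (z : ℂ) : LapAt (fun w => (p.eval w).re) z 0 := by
  have key : ∀ e : ℂ, D2 (fun t : ℝ => (p.eval (z + t * e)).re)
      ((e * (e * p.derivative.derivative.eval z)).re) := by
    intro e
    refine ⟨fun t => (e * p.derivative.eval (z + t * e)).re, Eventually.of_forall fun t => ?_, ?_⟩
    · have h2 : HasDerivAt (fun s : ℂ => z + s * e) e (t : ℂ) := by
        simpa using ((hasDerivAt_id (t : ℂ)).mul_const e).const_add z
      have := ((p.hasDerivAt _).comp (t : ℂ) h2).real_of_complex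
      rw [mul_comm _ e] at this
      exact this
    · simpa using hasDerivAt_polynomial_line p.derivative z e 0
  refine ⟨_, _, key 1, key I, ?_⟩
  rw [← mul_assoc I I, I_mul_I]; simp

lemma lapAt_normSq (z : ℂ) : LapAt (fun w => normSq w) z 4 := by
  refine ⟨2, 2, ⟨fun t => 2 * (z.re + t), Eventually.of_forall fun t => ?_, ?_⟩,
    ⟨fun t => 2 * (z.im + t), Eventually.of_forall fun t => ?_, ?_⟩, by norm_num⟩
  · simp only [normSq_apply, add_re, add_im, mul_one, ofReal_re, ofReal_im, add_zero]
    have h := ((hasDerivAt_id t).const_add z.re)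
    have := (h.mul h).add_const (z.im * z.im)
    refine this.congr_deriv ?_
    simp; ring
  · simpa using ((hasDerivAt_id (0 : ℝ)).const_add z.re).const_mul 2
  · simp only [normSq_apply, add_re, add_im, mul_re, mul_im, I_re, I_im, ofReal_re, ofReal_im,
      mul_zero, mul_one, sub_zero, add_zero]
    have h := ((hasDerivAt_id t).const_add z.im)
    have := (h.mul h).const_add (z.re * z.re)
    refine this.congr_deriv ?_
    simp; ring
  · simpa using ((hasDerivAt_id (0 : ℝ)).const_add z.im).const_mul 2

lemma circleIntegrable_of_continuousOn_sphere {g : ℂ → ℝ} {r : ℝ} (hr : 0 < r)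
    (hg : ContinuousOn g (sphere 0 r)) : CircleIntegrable g 0 r :=
  hg.circleIntegrable hr.le

lemma circleAverage_re_polynomial (p : Polynomial ℂ) (r : ℝ) :
    Real.circleAverage (fun z => (p.eval z).re) 0 r = (p.eval 0).re := by
  have h := InnerProductSpace.HarmonicOnNhd.circleAverage_eq (f := fun z => (p.eval z).re)
    (c := 0) (R := r) (fun z _ => ?_)
  · exact h
  · exact (AnalyticAt.harmonicAt_re (p.differentiable.analyticAt z))

/-- Sub-mean value property of continuous functions admitting lower test functions of nonnegative
Laplacian at every point. -/
lemma le_circleAverage {G : ℂ → ℝ} {r : ℝ} (hr : 0 < r) (hG : ContinuousOn G (closedBall 0 r))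
    (ht : ∀ z ∈ ball (0 : ℂ) r, ∃ σ : ℂ → ℝ, (∀ᶠ w in nhds z, σ w ≤ G w) ∧ σ z = G z ∧
      ∃ l ≥ 0, LapAt σ z l) : G 0 ≤ Real.circleAverage G 0 r := by
  have hGs : ContinuousOn G (sphere 0 r) := hG.mono sphere_subset_closedBall
  have key : ∀ ε > 0, G 0 ≤ Real.circleAverage G 0 r + (2 + r ^ 2) * ε := by
    intro ε hε
    obtain ⟨p, hp⟩ := exists_polynomial_near hr hGs hε
    have hpc : Continuous fun z : ℂ => (p.eval z).re := continuous_re.comp p.continuous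
    have h1 : G 0 + ((-1) * (p.eval 0).re + (ε * normSq (0:ℂ) + (-ε - ε * r ^ 2))) ≤ 0 := by
      refine max_principle (W := fun z => G z + ((-1) * (p.eval z).re +
        (ε * normSq z + (-ε - ε * r ^ 2)))) hr ?_ ?_ ?_ (mem_closedBall_self hr.le)
      · exact hG.add (by have := continuous_normSq; fun_prop)
      · intro z hz
        have h2 := abs_le.1 (hp z hz)
        have h3 : normSq z = r ^ 2 := by
          rw [normSq_eq_norm_sq, show ‖z‖ = r by simpa using hz]
        simp only [h3]; linarith [h2.2]
      · intro z hz
        obtain ⟨σ, h2, h3, l, hl, h4⟩ := ht z hz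
        refine ⟨fun z => σ z + ((-1) * (p.eval z).re + (ε * normSq z + (-ε - ε * r ^ 2))), ?_, ?_,
          _, ?_, h4.add (((lapAt_re_polynomial p z).const_mul (-1)).add
            (((lapAt_normSq z).const_mul ε).add (LapAt.const z _)))⟩
        · filter_upwards [h2] with w hw; linarith
        · simp [h3]
        · simp; linarith
    have h2 : (p.eval 0).re ≤ Real.circleAverage G 0 r + ε := by
      rw [← circleAverage_re_polynomial p r, ← Real.circleAverage_const ε 0 r,
        ← Real.circleAverage_fun_add (hGs.circleIntegrable hr.le)
          (continuousOn_const.circleIntegrable hr.le)]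
      refine Real.circleAverage_mono (hpc.continuousOn.circleIntegrable hr.le)
        ((hGs.add continuousOn_const).circleIntegrable hr.le) fun z hz => ?_
      rw [abs_of_pos hr] at hz
      have := abs_le.1 (hp z hz)
      linarith [this.1]
    simp only [map_zero] at h1
    nlinarith
  refine le_of_forall_pos_le_add fun η hη => ?_
  have h := key (η / (2 + r ^ 2)) (by positivity)
  rwa [mul_div_cancel₀ _ (by positivity)] at h

/-- Gradient estimate for harmonic functions in terms of the mean of their modulus, from the Poisson
formula and the Harnack bounds on the Poisson kernel. -/
lemma abs_deriv_le_circleAverage {L : ℂ → ℝ} {r : ℝ} (hr : 0 < r)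
    (hL : InnerProductSpace.HarmonicOnNhd L (closedBall 0 r)) {a : ℝ}
    (ha : HasDerivAt (fun t : ℝ => L t) a 0) :
    |a| ≤ 4 / r * Real.circleAverage (fun z => |L z|) 0 r := by
  have hLs : ContinuousOn L (sphere 0 r) := hL.continuousOn.mono sphere_subset_closedBall
  have hLa : CircleIntegrable (fun z => |L z|) 0 r := hLs.abs.circleIntegrable hr.le
  have hA : 0 ≤ Real.circleAverage (fun z => |L z|) 0 r :=
    Real.circleAverage_nonneg_of_nonneg fun z _ => abs_nonneg _
  refine ha.le_of_lip' (by positivity) ?_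
  have hsm : ∀ᶠ t : ℝ in nhds 0, |t| < r / 2 := by
    filter_upwards [Metric.ball_mem_nhds (0 : ℝ) (half_pos hr)] with t ht
    simpa using ht
  filter_upwards [hsm] with t ht
  have hw : (t : ℂ) ∈ ball (0 : ℂ) r := by simp; linarith
  have h1 := hL.circleAverage_re_herglotzRieszKernel_smul hw
  have h2 : Real.circleAverage L 0 r = L 0 :=
    InnerProductSpace.HarmonicOnNhd.circleAverage_eq (by rwa [abs_of_pos hr])
  set P : ℂ → ℝ := Complex.re ∘ herglotzRieszKernel 0 (t : ℂ) with hP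
  have hPc : ContinuousOn P (sphere 0 r) := by
    have := continuousOn_herglotzRieszKernel_sphere hw
    exact continuous_re.comp_continuousOn (by simpa [abs_of_pos hr] using this)
  have hPL : ContinuousOn (P • L) (sphere 0 r) := hPc.smul hLs
  have hbd : ∀ z ∈ sphere (0 : ℂ) r, |P z - 1| ≤ 4 / r * |t| := by
    intro z hz
    have h3 := re_herglotzRieszKernel_le hz hw
    have h4 := le_re_herglotzRieszKernel hz hw
    have h5 : P z = ((z - 0 + ((t : ℂ) - 0)) / ((z - 0) - ((t : ℂ) - 0))).re := by
      simp [hP, herglotzRieszKernel_def]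
    rw [← h5] at h3 h4
    simp only [sub_zero, norm_real, Real.norm_eq_abs] at h3 h4
    have ht0 := abs_nonneg t
    rw [le_div_iff₀ (by linarith)] at h3
    rw [div_le_iff₀ (by linarith)] at h4
    have h6 : (4 / r * |t|) * r = 4 * |t| := by field_simp
    have h7 : 0 ≤ 4 / r * |t| := by positivity
    rw [abs_le]
    constructor <;> by_contra! h
    · nlinarith
    · nlinarith
  calc ‖L t - L 0‖ = |Real.circleAverage (P • L - L) 0 r| := by
        rw [Real.circleAverage_sub (hPL.circleIntegrable hr.le) (hLs.circleIntegrable hr.le), h1, h2]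
        rfl
    _ ≤ Real.circleAverage (|P • L - L|) 0 r := Real.abs_circleAverage_le_circleAverage_abs
    _ ≤ Real.circleAverage (fun z => (4 / r * |t|) • |L z|) 0 r := by
        refine Real.circleAverage_mono ((hPL.sub hLs).abs.circleIntegrable hr.le)
          ((hLs.abs.fun_const_smul _).circleIntegrable hr.le) fun z hz => ?_
        rw [abs_of_pos hr] at hz
        have : (P • L - L) z = (P z - 1) * L z := by simp; ring
        rw [Pi.abs_apply, this, abs_mul, smul_eq_mul]
        exact mul_le_mul_of_nonneg_right (hbd z hz) (abs_nonneg _)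
    _ = 4 / r * Real.circleAverage (fun z => |L z|) 0 r * ‖t - 0‖ := by
        rw [Real.circleAverage_fun_smul]; simp; ring

end

/-! ### Mean value estimates along conformal harmonic disks -/

section
variable {d : ℕ} {D : Set (Euc d)}

/-- The isometry `ℂ ≃ ℝ²`, used to apply complex analysis to conformal harmonic disks. -/
def ci : ℂ →L[ℝ] Euc 2 :=
  (Complex.orthonormalBasisOneI.repr.toContinuousLinearEquiv : ℂ →L[ℝ] Euc 2)

lemma ci_norm (z : ℂ) : ‖ci z‖ = ‖z‖ := Complex.orthonormalBasisOneI.repr.norm_map z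

lemma ci_one : ci 1 = ee 0 := by
  have := Complex.orthonormalBasisOneI.repr_self 0
  simpa [ci] using this

lemma ci_I : ci Complex.I = ee 1 := by
  have := Complex.orthonormalBasisOneI.repr_self 1
  simpa [ci] using this

lemma ci_mem {z : ℂ} (hz : ‖z‖ < 1) : ci z ∈ unitDisk := by
  simpa [unitDisk, ci_norm] using hz

lemma hessQ_eq {Q : Euc d → ℝ} {y : Euc d} (hQ : ContDiffAt ℝ 2 Q y) (v : Euc d) :
    hessQ Q y v = fderiv ℝ (fderiv ℝ Q) y v v := by
  have h : DifferentiableAt ℝ (fderiv ℝ Q) y :=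
    (hQ.fderiv_right (m := 1) (by norm_num)).differentiableAt (by norm_num)
  unfold hessQ
  rw [fderiv_clm_apply h (differentiableAt_const v)]
  simp

lemma ConformalHarmonicOnDisk.contDiffAt {f : Euc 2 → Euc d} (hf : ConformalHarmonicOnDisk f)
    {z : Euc 2} (hz : z ∈ unitDisk) : ContDiffAt ℝ 2 f z :=
  hf.1.contDiffAt (isOpen_unitDisk.mem_nhds hz)

/-- Second derivative of `Q ∘ f` along a coordinate line of the disk. -/
lemma D2_comp {f : Euc 2 → Euc d} (hf : ConformalHarmonicOnDisk f) {Q : Euc d → ℝ} {ζ : Euc 2}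
    (hζ : ζ ∈ unitDisk) (hQ : ContDiffAt ℝ 2 Q (f ζ)) (i : Fin 2) :
    D2 (fun t : ℝ => Q (f (ζ + t • ee i)))
      (hessQ Q (f ζ) (pd i f ζ) + fderiv ℝ Q (f ζ) (fderiv ℝ (pd i f) ζ (ee i))) := by
  have hline : ∀ t : ℝ, HasDerivAt (fun t : ℝ => ζ + t • ee i) (ee i) t := fun t => by
    simpa using ((hasDerivAt_id t).smul_const (ee i)).const_add ζ
  have hcl : Tendsto (fun t : ℝ => ζ + t • ee i) (nhds 0) (nhds ζ) := by
    simpa using (hline 0).continuousAt.tendsto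
  have hfc : ContinuousAt f ζ := (hf.differentiableAt hζ).continuousAt
  refine ⟨fun t => fderiv ℝ Q (f (ζ + t • ee i)) (pd i f (ζ + t • ee i)), ?_, ?_⟩
  · have h1 : ∀ᶠ y in nhds (f ζ), ContDiffAt ℝ 2 Q y := hQ.eventually (by simp)
    filter_upwards [hcl.eventually (isOpen_unitDisk.mem_nhds hζ),
      (hfc.tendsto.comp hcl).eventually h1] with t ht1 ht2
    have h2 := (hf.differentiableAt ht1).hasFDerivAt.comp_hasDerivAt t (hline t)
    have h3 := (ht2.differentiableAt (by norm_num)).hasFDerivAt.comp_hasDerivAt t h2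
    exact h3
  · have hdQ : DifferentiableAt ℝ (fderiv ℝ Q) (f ζ) :=
      (hQ.fderiv_right (m := 1) (by norm_num)).differentiableAt (by norm_num)
    have hl0 := hline 0
    have e0 : ζ + (0 : ℝ) • ee i = ζ := by simp
    have h2 : HasDerivAt (fun t : ℝ => f (ζ + t • ee i)) (pd i f ζ) 0 := by
      have := (hf.differentiableAt hζ).hasFDerivAt
      rw [← e0] at this
      have := this.comp_hasDerivAt (0 : ℝ) hl0
      rw [e0] at this
      exact this
    have h3 : HasDerivAt (fun t : ℝ => fderiv ℝ Q (f (ζ + t • ee i)))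
        (fderiv ℝ (fderiv ℝ Q) (f ζ) (pd i f ζ)) 0 := by
      have := hdQ.hasFDerivAt
      rw [← e0] at this
      have := this.comp_hasDerivAt (0 : ℝ) h2
      rw [e0] at this
      exact this
    have h4 : HasDerivAt (fun t : ℝ => pd i f (ζ + t • ee i)) (fderiv ℝ (pd i f) ζ (ee i)) 0 := by
      have := (hf.pd_differentiableAt i hζ).hasFDerivAt
      rw [← e0] at this
      have := this.comp_hasDerivAt (0 : ℝ) hl0
      rw [e0] at this
      exact this
    have h5 := h3.clm_apply h4
    rw [e0] at h5
    rw [hessQ_eq hQ]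
    exact h5

/-- Along a conformal harmonic disk the Laplacian of `Q ∘ f` is the trace of the Hessian of `Q` on
the tangent plane, up to the conformal factor. -/
lemma lapAt_comp {f : Euc 2 → Euc d} (hf : ConformalHarmonicOnDisk f) {Q : Euc d → ℝ} {z : ℂ}
    (hz : ‖z‖ < 1) (hQ : ContDiffAt ℝ 2 Q (f (ci z))) :
    LapAt (fun w => Q (f (ci w))) z
      (hessQ Q (f (ci z)) (pd 0 f (ci z)) + hessQ Q (f (ci z)) (pd 1 f (ci z))) := by
  have h0 := D2_comp hf (ci_mem hz) hQ 0
  have h1 := D2_comp hf (ci_mem hz) hQ 1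
  have e0 : ∀ t : ℝ, ci z + t • ee 0 = ci (z + t * 1) := fun t => by
    rw [← ci_one, ← map_smul, ← map_add]; simp
  have e1 : ∀ t : ℝ, ci z + t • ee 1 = ci (z + t * Complex.I) := fun t => by
    rw [← ci_I, ← map_smul, ← map_add]; simp
  simp only [e0] at h0
  simp only [e1] at h1
  refine ⟨_, _, h0, h1, ?_⟩
  · have h2 := hf.2.1 (ci z) (ci_mem hz)
    have h3 := congrArg (fderiv ℝ Q (f (ci z))) h2
    rw [map_add, map_zero] at h3
    linarith

lemma harmonicOnNhd_comp {f : Euc 2 → Euc d} (hf : ConformalHarmonicOnDisk f)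
    (T : Euc d →L[ℝ] ℝ) (x : Euc d) :
    InnerProductSpace.HarmonicOnNhd (fun z : ℂ => T (f (ci z) - x)) (ball 0 1) := by
  set k : ℂ → ℝ := fun z : ℂ => T (f (ci z) - x) with hk
  have hmem : ∀ z ∈ ball (0 : ℂ) 1, ci z ∈ unitDisk := fun z hz => ci_mem (by simpa using hz)
  have hkc : ∀ z ∈ ball (0 : ℂ) 1, ContDiffAt ℝ 2 k z := fun z hz => by
    have h1 : ContDiffAt ℝ 2 (fun z : ℂ => f (ci z)) z :=
      (hf.contDiffAt (hmem z hz)).comp z ci.contDiff.contDiffAt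
    exact T.contDiff.contDiffAt.comp z (h1.sub contDiffAt_const)
  have hk1 : ∀ z ∈ ball (0 : ℂ) 1, ∀ e, fderiv ℝ k z e = T (fderiv ℝ f (ci z) (ci e)) := by
    intro z hz e
    have h1 := (hf.differentiableAt (hmem z hz)).hasFDerivAt.comp z ci.hasFDerivAt
    have h2 := T.hasFDerivAt.comp z (h1.sub_const x)
    have h3 : HasFDerivAt k _ z := h2
    rw [h3.fderiv]; rfl
  have hk2 : ∀ z ∈ ball (0 : ℂ) 1, ∀ e i, ci e = ee i →
      fderiv ℝ (fderiv ℝ k) z e e = T (fderiv ℝ (pd i f) (ci z) (ee i)) := by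
    intro z hz e i hei
    have h1 : DifferentiableAt ℝ (fderiv ℝ k) z :=
      ((hkc z hz).fderiv_right (m := 1) (by norm_num)).differentiableAt (by norm_num)
    have h2 : fderiv ℝ (fun w => fderiv ℝ k w e) z e = fderiv ℝ (fderiv ℝ k) z e e := by
      rw [fderiv_clm_apply h1 (differentiableAt_const e)]; simp
    have h3 : (fun w => fderiv ℝ k w e) =ᶠ[nhds z] fun w => T (pd i f (ci w)) := by
      filter_upwards [isOpen_ball.mem_nhds hz] with w hw
      rw [hk1 w hw, hei]; rfl
    have h4 := T.hasFDerivAt.comp z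
      ((hf.pd_differentiableAt i (hmem z hz)).hasFDerivAt.comp z ci.hasFDerivAt)
    have h5 : HasFDerivAt (fun w => T (pd i f (ci w))) _ z := h4
    rw [← h2, h3.fderiv_eq, h5.fderiv]
    simp [hei]
  intro z hz
  refine ⟨hkc z hz, ?_⟩
  filter_upwards [isOpen_ball.mem_nhds hz] with w hw
  rw [InnerProductSpace.laplacian_eq_iteratedFDeriv_complexPlane]
  beta_reduce
  rw [iteratedFDeriv_two_apply, iteratedFDeriv_two_apply]
  have h0 := hk2 w hw 1 0 ci_one
  have h1 := hk2 w hw Complex.I 1 ci_I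
  simp only [Matrix.cons_val_zero, Matrix.cons_val_one]
  rw [h0, h1, ← map_add, hf.2.1 _ (hmem w hw)]
  simp

/-- `φ` is a negative continuous function on `D` whose Hessian, in the viscosity sense, has trace at
least `4 * c` on every orthonormal pair. -/
structure StrongPsh (D : Set (Euc d)) (φ : Euc d → ℝ) (c : ℝ) : Prop where
  pos : 0 < c
  cont : ContinuousOn φ D
  neg : ∀ y ∈ D, φ y < 0
  test : ∀ y ∈ D, ∃ Q : Euc d → ℝ, ContDiffAt ℝ 2 Q y ∧ (∀ᶠ w in nhds y, Q w ≤ φ w) ∧ Q y = φ y ∧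
    ∀ v w : Euc d, ‖v‖ = ‖w‖ → ⟪v, w⟫ = 0 → 4 * c * ‖v‖ ^ 2 ≤ hessQ Q y v + hessQ Q y w

lemma hessQ_norm_sq (x y v : Euc d) (a b : ℝ) :
    hessQ (fun y => a * (‖y - x‖ ^ 2 - b)) y v = 2 * a * ‖v‖ ^ 2 := by
  have h1 : ∀ y, HasFDerivAt (fun y : Euc d => a * (‖y - x‖ ^ 2 - b))
      (a • ((2 : ℕ) • (innerSL ℝ (y - x)))) y := by
    intro y
    have h := ((hasFDerivAt_id y).sub_const x).norm_sq
    have h' := (h.sub_const b).const_mul a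
    refine h'.congr_fderiv ?_
    ext v; simp
  have h2 : (fun y => fderiv ℝ (fun y : Euc d => a * (‖y - x‖ ^ 2 - b)) y v) =
      fun y => (2 * a) * ⟪v, y - x⟫ := by
    ext y; rw [(h1 y).fderiv]
    simp only [smul_apply, innerSL_apply_apply, nsmul_eq_mul, smul_eq_mul]
    rw [real_inner_comm]; push_cast; ring
  unfold hessQ
  rw [h2]
  have h3 : HasFDerivAt (fun y : Euc d => (2 * a) * ⟪v, y - x⟫) ((2 * a) • innerSL ℝ v) y :=
    ((innerSL ℝ v).hasFDerivAt.comp y ((hasFDerivAt_id y).sub_const x)).const_mul (2 * a)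
  rw [h3.fderiv]
  simp

lemma contDiff_norm_sq_sub (x : Euc d) (a b : ℝ) :
    ContDiff ℝ 2 (fun y : Euc d => a * (‖y - x‖ ^ 2 - b)) :=
  contDiff_const.mul (((contDiff_norm_sq ℝ).comp (contDiff_id.sub contDiff_const)).sub contDiff_const)

lemma hessQ_add {Q R : Euc d → ℝ} {y : Euc d} (hQ : ContDiffAt ℝ 2 Q y) (hR : ContDiffAt ℝ 2 R y)
    (v : Euc d) : hessQ (fun y => Q y + R y) y v = hessQ Q y v + hessQ R y v := by
  have hd : ∀ {S : Euc d → ℝ}, ContDiffAt ℝ 2 S y → DifferentiableAt ℝ (fun y => fderiv ℝ S y v) y :=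
    fun hS => ((hS.fderiv_right (m := 1) (by norm_num)).differentiableAt (by norm_num)).clm_apply
      (differentiableAt_const v)
  have h1 : (fun z => fderiv ℝ (fun y => Q y + R y) z v) =ᶠ[nhds y]
      fun z => fderiv ℝ Q z v + fderiv ℝ R z v := by
    filter_upwards [hQ.eventually (by simp), hR.eventually (by simp)] with z h1 h2
    rw [fderiv_fun_add (h1.differentiableAt (by norm_num)) (h2.differentiableAt (by norm_num))]
    rfl
  unfold hessQ
  rw [h1.fderiv_eq, fderiv_fun_add (hd hQ) (hd hR)]
  rfl

variable {φ : Euc d → ℝ} {c : ℝ} {f : Euc 2 → Euc d}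

lemma continuousOn_disk (hf : ConformalHarmonicOnDisk f) :
    ContinuousOn (fun z : ℂ => f (ci z)) (ball 0 1) :=
  hf.1.continuousOn.comp ci.continuous.continuousOn
    fun z hz => ci_mem (by simpa using hz)

lemma closedBall_half_subset : closedBall (0 : ℂ) (1 / 2) ⊆ ball 0 1 :=
  closedBall_subset_ball (by norm_num)

/-- The mean square displacement of a disk centred at `x` is controlled by `-φ x`. -/
lemma StrongPsh.circleAverage_le (hφ : StrongPsh D φ c) (hf : ConformalHarmonicOnDisk f)
    (hfD : ∀ z ∈ unitDisk, f z ∈ D) :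
    Real.circleAverage (fun z => ‖f (ci z) - f 0‖ ^ 2) 0 (1 / 2) ≤ -φ (f 0) / c := by
  set x := f 0 with hx
  have hr : (0 : ℝ) < 1 / 2 := by norm_num
  have hfc := (continuousOn_disk hf).mono closedBall_half_subset
  have hmem : ∀ z ∈ closedBall (0 : ℂ) (1 / 2), f (ci z) ∈ D := fun z hz =>
    hfD _ (ci_mem (by simpa using closedBall_half_subset hz))
  have hφc : ContinuousOn (fun z : ℂ => φ (f (ci z))) (closedBall 0 (1 / 2)) :=
    hφ.cont.comp hfc hmem
  have hsq : ContinuousOn (fun z : ℂ => -c * (‖f (ci z) - x‖ ^ 2 - 0)) (closedBall 0 (1 / 2)) :=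
    continuousOn_const.mul ((((hfc.sub continuousOn_const).norm).pow 2).sub continuousOn_const)
  have h1 := le_circleAverage (G := fun z => φ (f (ci z)) + -c * (‖f (ci z) - x‖ ^ 2 - 0)) hr
    (hφc.add hsq) (by
      intro z hz
      have hz1 : ‖z‖ < 1 := by
        have : ‖z‖ < 1 / 2 := by simpa using hz
        linarith
      obtain ⟨Q, hQ, hle, heq, hh⟩ := hφ.test _ (hfD _ (ci_mem hz1))
      have hR : ContDiffAt ℝ 2 (fun y : Euc d => -c * (‖y - x‖ ^ 2 - 0)) (f (ci z)) :=
        (contDiff_norm_sq_sub x (-c) 0).contDiffAt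
      refine ⟨fun w => Q (f (ci w)) + -c * (‖f (ci w) - x‖ ^ 2 - 0), ?_, ?_, _, ?_,
        lapAt_comp (Q := fun y => Q y + -c * (‖y - x‖ ^ 2 - 0)) hf hz1 (hQ.add hR)⟩
      · have hc : ContinuousAt (fun z : ℂ => f (ci z)) z :=
          (continuousOn_disk hf).continuousAt (isOpen_ball.mem_nhds (by simpa using hz1))
        filter_upwards [hc.tendsto.eventually hle] with w hw
        linarith
      · simp [heq]
      · obtain ⟨h2, h3⟩ := hf.2.2 _ (ci_mem hz1)
        rw [hessQ_add hQ hR, hessQ_add hQ hR, hessQ_norm_sq, hessQ_norm_sq, ← h2]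
        have := hh _ _ h2 h3
        show 0 ≤ _
        linarith)
  have hs : sphere (0 : ℂ) (1 / 2) ⊆ closedBall 0 (1 / 2) := sphere_subset_closedBall
  have hsq' : ContinuousOn (fun z : ℂ => ‖f (ci z) - x‖ ^ 2) (closedBall 0 (1 / 2)) :=
    ((hfc.sub continuousOn_const).norm).pow 2
  have h2 : Real.circleAverage (fun z => φ (f (ci z)) + -c * (‖f (ci z) - x‖ ^ 2 - 0)) 0 (1 / 2) ≤
      -c * Real.circleAverage (fun z => ‖f (ci z) - x‖ ^ 2) 0 (1 / 2) := by
    rw [← smul_eq_mul (-c), ← Real.circleAverage_fun_smul]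
    refine Real.circleAverage_mono (((hφc.add hsq).mono hs).circleIntegrable hr.le)
      (((continuousOn_const.mul hsq').mono hs).circleIntegrable hr.le) fun z hz => ?_
    rw [abs_of_pos hr] at hz
    have := hφ.neg _ (hmem z (hs hz))
    simp only [smul_eq_mul]; linarith
  have h3 := h1.trans h2
  simp only [map_zero, ← hx, sub_self, norm_zero] at h3
  rw [le_div_iff₀ hφ.pos]
  linarith

lemma abs_pd_le (hf : ConformalHarmonicOnDisk f) (T : Euc d →L[ℝ] ℝ) :
    |T (pd 0 f 0)| ≤ 8 * Real.circleAverage (fun z => |T (f (ci z) - f 0)|) 0 (1 / 2) := by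
  have h := abs_deriv_le_circleAverage (r := 1 / 2) (by norm_num)
    ((harmonicOnNhd_comp hf T (f 0)).mono closedBall_half_subset) (a := T (pd 0 f 0)) ?_
  · norm_num at h ⊢; exact h
  · have h0 : (0 : Euc 2) ∈ unitDisk := by simp [unitDisk]
    have h1 : HasDerivAt (fun t : ℝ => ci (t : ℂ)) (ee 0) 0 := by
      rw [← ci_one]
      exact ci.hasFDerivAt.comp_hasDerivAt (0 : ℝ) Complex.ofRealCLM.hasDerivAt
    have h2 := (hf.differentiableAt h0).hasFDerivAt
    have h3 : HasDerivAt (fun t : ℝ => f (ci (t : ℂ))) (pd 0 f 0) 0 :=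
      HasFDerivAt.comp_hasDerivAt_of_eq (0 : ℝ) h2 h1 (by simp)
    exact T.hasFDerivAt.comp_hasDerivAt (0 : ℝ) (h3.sub_const (f 0))

lemma StrongPsh.norm_pd_le (hφ : StrongPsh D φ c) (hf : ConformalHarmonicOnDisk f)
    (hfD : ∀ z ∈ unitDisk, f z ∈ D) : ‖pd 0 f 0‖ ≤ 8 * √(-φ (f 0) / c) := by
  set a := pd 0 f 0 with ha
  by_cases ha0 : a = 0
  · rw [ha0, norm_zero]; positivity
  have hn : 0 < ‖a‖ := norm_pos_iff.2 ha0
  have h0 : (0 : Euc 2) ∈ unitDisk := by simp [unitDisk]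
  have hq : 0 < -φ (f 0) / c := div_pos (by linarith [hφ.neg _ (hfD _ h0)]) hφ.pos
  set s := √(-φ (f 0) / c) with hs
  have hs0 : 0 < s := Real.sqrt_pos.2 hq
  have hss : s ^ 2 = -φ (f 0) / c := Real.sq_sqrt hq.le
  obtain ⟨T, hT⟩ : ∃ T : Euc d →L[ℝ] ℝ, ∀ y, T y = ⟪a, y⟫ := ⟨innerSL ℝ a, fun _ => rfl⟩
  have h1 := abs_pd_le hf T
  have h2 := hφ.circleAverage_le hf hfD
  have hfc := (continuousOn_disk hf).mono (sphere_subset_closedBall.trans closedBall_half_subset)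
  obtain ⟨F, hF⟩ : ∃ F : ℂ → Euc d, ∀ z, f (ci z) = F z := ⟨_, fun _ => rfl⟩
  simp only [hF] at h1 h2 hfc
  have h3 : Real.circleAverage (fun z => |T (F z - f 0)|) 0 (1 / 2) ≤
      Real.circleAverage (fun z => (‖a‖ / (2 * s)) • ‖F z - f 0‖ ^ 2 + ‖a‖ * s / 2) 0 (1 / 2) := by
    refine Real.circleAverage_mono (ContinuousOn.circleIntegrable (by norm_num) (by fun_prop))
      (ContinuousOn.circleIntegrable (by norm_num) (by fun_prop)) fun z _ => ?_
    set q := ‖F z - f 0‖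
    have h4 : |T (F z - f 0)| ≤ ‖a‖ * q := by
      rw [hT]; exact abs_real_inner_le_norm _ _
    refine h4.trans ?_
    have : (‖a‖ / (2 * s)) • q ^ 2 + ‖a‖ * s / 2 - ‖a‖ * q = ‖a‖ / (2 * s) * (q - s) ^ 2 := by
      simp only [smul_eq_mul]; field_simp; ring
    have h5 : 0 ≤ ‖a‖ / (2 * s) * (q - s) ^ 2 := by positivity
    linarith
  rw [Real.circleAverage_fun_add (ContinuousOn.circleIntegrable (by norm_num) (by fun_prop))
    (ContinuousOn.circleIntegrable (by norm_num) (by fun_prop)), Real.circleAverage_fun_smul,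
    Real.circleAverage_const] at h3
  rw [← hss] at h2
  have h4 : |T a| = ‖a‖ * ‖a‖ := by
    rw [hT, real_inner_self_eq_norm_mul_norm, abs_of_nonneg (by positivity)]
  rw [← ha, h4] at h1
  have h5 : (‖a‖ / (2 * s)) • Real.circleAverage (fun z => ‖F z - f 0‖ ^ 2) 0 (1 / 2) ≤
      ‖a‖ / (2 * s) * s ^ 2 := mul_le_mul_of_nonneg_left h2 (by positivity)
  have h6 : ‖a‖ / (2 * s) * s ^ 2 = ‖a‖ * s / 2 := by field_simp
  have h7 : ‖a‖ * ‖a‖ ≤ ‖a‖ * (8 * s) := by linarith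
  exact le_of_mul_le_mul_left h7 hn

/-- If `T (y - x) ≤ N + K |y - x|²` on `D`, then the mean of `|T (f - x)|` over a circle is controlled
by `N` and the mean square displacement, because `T (f - x)` has mean zero. -/
lemma StrongPsh.abs_pd_le_of_quadratic (hφ : StrongPsh D φ c) (hf : ConformalHarmonicOnDisk f)
    (hfD : ∀ z ∈ unitDisk, f z ∈ D) (T : Euc d →L[ℝ] ℝ) {N K : ℝ} (hN : 0 ≤ N) (hK : 0 ≤ K)
    (h : ∀ y ∈ D, T (y - f 0) ≤ N + K * ‖y - f 0‖ ^ 2) :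
    |T (pd 0 f 0)| ≤ 16 * (N + K * (-φ (f 0) / c)) := by
  have h1 := abs_pd_le hf T
  have h2 := hφ.circleAverage_le hf hfD
  have hfc := (continuousOn_disk hf).mono (sphere_subset_closedBall.trans closedBall_half_subset)
  have h0 : Real.circleAverage (fun z => T (f (ci z) - f 0)) 0 (1 / 2) = 0 := by
    rw [InnerProductSpace.HarmonicOnNhd.circleAverage_eq]
    · simp
    · rw [abs_of_pos (by norm_num)]
      exact (harmonicOnNhd_comp hf T (f 0)).mono closedBall_half_subset
  obtain ⟨F, hF⟩ : ∃ F : ℂ → Euc d, ∀ z, f (ci z) = F z := ⟨_, fun _ => rfl⟩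
  simp only [hF] at h1 h2 h0 hfc
  have hfD' : ∀ z ∈ sphere (0 : ℂ) (1 / 2), F z ∈ D := fun z hz => hF z ▸ hfD _ (ci_mem (z := z)
      (by simpa using closedBall_half_subset (sphere_subset_closedBall hz)))
  have h3 : Real.circleAverage (fun z => |T (F z - f 0)|) 0 (1 / 2) ≤
      Real.circleAverage (fun z => (2 * N + (2 * K) • ‖F z - f 0‖ ^ 2) - T (F z - f 0))
        0 (1 / 2) := by
    refine Real.circleAverage_mono (ContinuousOn.circleIntegrable (by norm_num) (by fun_prop))
      (ContinuousOn.circleIntegrable (by norm_num) (by fun_prop)) fun z hz => ?_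
    rw [abs_of_pos (by norm_num)] at hz
    have h4 := h _ (hfD' z hz)
    have h5 : 0 ≤ K * ‖F z - f 0‖ ^ 2 := by positivity
    simp only [smul_eq_mul]
    rcases abs_cases (T (F z - f 0)) with ⟨h6, _⟩ | ⟨h6, _⟩ <;> rw [h6] <;> linarith
  rw [Real.circleAverage_fun_sub (ContinuousOn.circleIntegrable (by norm_num) (by fun_prop))
    (ContinuousOn.circleIntegrable (by norm_num) (by fun_prop)),
    Real.circleAverage_fun_add (ContinuousOn.circleIntegrable (by norm_num) (by fun_prop))
    (ContinuousOn.circleIntegrable (by norm_num) (by fun_prop)), Real.circleAverage_fun_smul,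
    Real.circleAverage_const, h0] at h3
  have h4 := mul_le_mul_of_nonneg_left h2 hK
  simp only [smul_eq_mul] at h3
  linarith

lemma StrongPsh.norm_le_minMetric (hd : 3 ≤ d) (hD : IsOpen D) (hφ : StrongPsh D φ c) {x : Euc d}
    (hx : x ∈ D) (v : Euc d) : ‖v‖ ≤ 8 * √(-φ x / c) * minMetric D x v := by
  refine norm_le_mul_minMetric hd hD hx (ContinuousLinearMap.id ℝ _) (by positivity) ?_ v
  rintro f hf hfD rfl
  exact hφ.norm_pd_le hf hfD

lemma StrongPsh.abs_le_minMetric (hd : 3 ≤ d) (hD : IsOpen D) (hφ : StrongPsh D φ c) {x : Euc d}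
    (hx : x ∈ D) (T : Euc d →L[ℝ] ℝ) {N K : ℝ} (hN : 0 ≤ N) (hK : 0 ≤ K)
    (h : ∀ y ∈ D, T (y - x) ≤ N + K * ‖y - x‖ ^ 2) (v : Euc d) :
    |T v| ≤ 16 * (N + K * (-φ x / c)) * minMetric D x v := by
  have : 0 ≤ -φ x / c := div_nonneg (by linarith [hφ.neg _ hx]) hφ.pos.le
  refine norm_le_mul_minMetric hd hD hx T (by positivity) ?_ v
  rintro f hf hfD rfl
  exact hφ.abs_pd_le_of_quadratic hf hfD T hN hK h

end

/-! ### The defining function near the boundary -/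

section
variable {d : ℕ} {D : Set (Euc d)}

/-- Uniform control of a defining function `u` on the `ε`-neighbourhood of the boundary. -/
structure BdryData (D : Set (Euc d)) (u : Euc d → ℝ) (ε m M c₀ : ℝ) : Prop where
  isOpen : IsOpen D
  conn : IsConnected D
  bdd : Bornology.IsBounded D
  ε_pos : 0 < ε
  ε_le : ε ≤ 1
  m_pos : 0 < m
  M_pos : 0 < M
  small : M * ε ≤ m / 2
  c₀_pos : 0 < c₀
  smooth : ∀ p ∈ frontier D, ∀ a ∈ ball p ε, ContDiffAt ℝ 2 u a
  sign : ∀ p ∈ frontier D, ∀ a ∈ ball p ε, a ∈ D ↔ u a < 0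
  zero : ∀ p ∈ frontier D, u p = 0
  grad_lower : ∀ p ∈ frontier D, ∀ a ∈ ball p ε, m ≤ ‖fderiv ℝ u a‖
  grad_upper : ∀ p ∈ frontier D, ∀ a ∈ ball p ε, ‖fderiv ℝ u a‖ ≤ M
  taylor : ∀ p ∈ frontier D, ∀ a ∈ ball p ε, ∀ b ∈ ball p ε,
    |u b - u a - fderiv ℝ u a (b - a)| ≤ M * ‖b - a‖ ^ 2
  hess : ∀ p ∈ frontier D, ∀ a ∈ ball p ε, ∀ v w : Euc d, ‖v‖ = 1 → ‖w‖ = 1 → ⟪v, w⟫ = 0 →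
    c₀ ≤ hessQ u a v + hessQ u a w

lemma isCompact_frontier_of_bounded (hb : Bornology.IsBounded D) : IsCompact (frontier D) :=
  (hb.closure.subset frontier_subset_closure).isCompact_closure.of_isClosed_subset isClosed_frontier
    subset_closure

lemma exists_bdryData (hD : IsStronglyMinimallyConvex D) :
    ∃ u ε m M c₀, BdryData D u ε m M c₀ := by
  obtain ⟨hO, hc, hb, U, u, hU, hKU, hu, hsgn, hfr, hdu, hh⟩ := hD
  have hKc : IsCompact (frontier D) := isCompact_frontier_of_bounded hb
  have hcd : ∀ x ∈ U, ContDiffAt ℝ 2 u x := fun x hx => hu.contDiffAt (hU.mem_nhds hx)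
  have hd1 : ContDiffOn ℝ 1 (fderiv ℝ u) U := hu.fderiv_of_isOpen hU (by norm_num)
  have hd2 : ContinuousOn (fderiv ℝ (fderiv ℝ u)) U := hd1.continuousOn_fderiv_of_isOpen hU (by norm_num)
  have hU' : IsOpen (U ∩ {x | fderiv ℝ u x ≠ 0}) :=
    hd1.continuousOn.isOpen_inter_preimage hU isOpen_ne
  obtain ⟨ε₀, hε₀, hN⟩ := hKc.exists_cthickening_subset_open hU'
    (fun x hx => ⟨hKU hx, hdu x hx⟩)
  set N := cthickening ε₀ (frontier D) with hNdef
  have hNc : IsCompact N := hKc.cthickening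
  have hNU : N ⊆ U := fun x hx => (hN hx).1
  obtain ⟨m, hm, hmN⟩ := hNc.exists_forall_le' ((hd1.continuousOn.mono hNU).norm) (a := 0)
    fun x hx => norm_pos_iff.2 (hN hx).2
  obtain ⟨M₁, hM₁⟩ := (hNc.image_of_continuousOn ((hd1.continuousOn.mono hNU).norm)).bddAbove
  have hn2 : ContinuousOn (fun x => ‖fderiv ℝ (fderiv ℝ u) x‖) N := by
    intro x hx
    have h1 : Tendsto (fderiv ℝ (fderiv ℝ u)) (nhdsWithin x N) (nhds (fderiv ℝ (fderiv ℝ u) x)) :=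
      hd2.mono hNU x hx
    exact Tendsto.norm (E := Euc d →L[ℝ] Euc d →L[ℝ] ℝ) h1
  obtain ⟨M₂, hM₂⟩ := (hNc.image_of_continuousOn hn2).bddAbove
  set M := max 1 (max M₁ M₂) with hM
  have hM1 : 1 ≤ M := le_max_left _ _
  have hMa : ∀ x ∈ N, ‖fderiv ℝ u x‖ ≤ M := fun x hx =>
    (hM₁ (mem_image_of_mem _ hx)).trans ((le_max_left _ _).trans (le_max_right _ _))
  have hMb : ∀ x ∈ N, ‖fderiv ℝ (fderiv ℝ u) x‖ ≤ M := fun x hx =>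
    (hM₂ (mem_image_of_mem _ hx)).trans ((le_max_right _ _).trans (le_max_right _ _))
  have hbN : ∀ p ∈ frontier D, ball p ε₀ ⊆ N := fun p hp x hx =>
    mem_cthickening_of_dist_le x p ε₀ _ hp (mem_ball.1 hx).le
  have hlip : ∀ p ∈ frontier D, ∀ a ∈ ball p ε₀, ∀ b ∈ ball p ε₀,
      ‖fderiv ℝ u b - fderiv ℝ u a‖ ≤ M * ‖b - a‖ := by
    intro p hp a ha b hb'
    refine (convex_ball p ε₀).norm_image_sub_le_of_norm_fderiv_le (𝕜 := ℝ) (fun x hx => ?_)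
      (fun x hx => hMb x (hbN p hp hx)) ha hb'
    exact ((hcd x (hNU (hbN p hp hx))).fderiv_right (m := 1) (by norm_num)).differentiableAt
      (by norm_num)
  have htay : ∀ p ∈ frontier D, ∀ a ∈ ball p ε₀, ∀ b ∈ ball p ε₀,
      |u b - u a - fderiv ℝ u a (b - a)| ≤ M * ‖b - a‖ ^ 2 := by
    intro p hp a ha b hb'
    have hseg : segment ℝ a b ⊆ ball p ε₀ := (convex_ball p ε₀).segment_subset ha hb'
    have := (convex_segment a b).norm_image_sub_le_of_norm_hasFDerivWithin_le' (𝕜 := ℝ) (f := u)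
      (f' := fun x => fderiv ℝ u x) (φ := fderiv ℝ u a) (C := M * ‖b - a‖)
      (fun x hx => ((hcd x (hNU (hbN p hp (hseg hx)))).differentiableAt
        (by norm_num)).hasFDerivAt.hasFDerivWithinAt)
      (fun x hx => ?_) (left_mem_segment ℝ a b) (right_mem_segment ℝ a b)
    · calc _ ≤ _ := this
        _ = _ := by ring
    · refine (hlip p hp a ha x (hseg hx)).trans ?_
      refine mul_le_mul_of_nonneg_left ?_ (by linarith)
      obtain ⟨s, t, hs, ht, hst, rfl⟩ := hx
      have : s • a + t • b - a = t • (b - a) := by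
        rw [show s = 1 - t by linarith]; module
      rw [this, norm_smul, Real.norm_of_nonneg ht]
      nlinarith [norm_nonneg (b - a)]
  obtain ⟨c₀, hc₀, hhN⟩ : ∃ c₀ > 0, ∀ x ∈ N, ∀ v w : Euc d, ‖v‖ = 1 → ‖w‖ = 1 → ⟪v, w⟫ = 0 →
      c₀ ≤ hessQ u x v + hessQ u x w := by
    have hS : IsCompact {q : Euc d × Euc d × Euc d | q.1 ∈ N ∧ (q.2.1 ∈ sphere (0 : Euc d) 1 ∧
        q.2.2 ∈ sphere (0 : Euc d) 1) ∧ ⟪q.2.1, q.2.2⟫ = 0} := by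
      have h1 := hNc.prod ((isCompact_sphere (0 : Euc d) 1).prod (isCompact_sphere (0 : Euc d) 1))
      have h2 : IsClosed {q : Euc d × Euc d × Euc d | ⟪q.2.1, q.2.2⟫ = 0} :=
        isClosed_eq (by fun_prop) continuous_const
      refine (h1.inter_right h2).of_isClosed_subset ?_ ?_
      · convert (h1.isClosed.inter h2) using 1
        ext q; simp only [mem_ofPred_eq, mem_inter_iff, mem_prod]; tauto
      · rintro q ⟨h3, h4, h5⟩; exact ⟨⟨h3, h4⟩, h5⟩
    obtain ⟨c₀, hc₀, hle⟩ := hS.exists_forall_le' (f := fun q => fderiv ℝ (fderiv ℝ u) q.1 q.2.1 q.2.1 +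
        fderiv ℝ (fderiv ℝ u) q.1 q.2.2 q.2.2) (a := 0) (by
        have h1 : ContinuousOn (fun q : Euc d × Euc d × Euc d => fderiv ℝ (fderiv ℝ u) q.1)
            {q : Euc d × Euc d × Euc d | q.1 ∈ N ∧ (q.2.1 ∈ sphere (0 : Euc d) 1 ∧
              q.2.2 ∈ sphere (0 : Euc d) 1) ∧ ⟪q.2.1, q.2.2⟫ = 0} :=
          (hd2.mono hNU).comp continuousOn_fst fun q hq => hq.1
        have h2 := continuousOn_fst.comp (s := {q : Euc d × Euc d × Euc d | q.1 ∈ N ∧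
          (q.2.1 ∈ sphere (0 : Euc d) 1 ∧ q.2.2 ∈ sphere (0 : Euc d) 1) ∧ ⟪q.2.1, q.2.2⟫ = 0})
          (continuousOn_snd (α := Euc d) (β := Euc d × Euc d)) (mapsTo_univ _ _)
        have h3 := continuousOn_snd.comp (s := {q : Euc d × Euc d × Euc d | q.1 ∈ N ∧
          (q.2.1 ∈ sphere (0 : Euc d) 1 ∧ q.2.2 ∈ sphere (0 : Euc d) 1) ∧ ⟪q.2.1, q.2.2⟫ = 0})
          (continuousOn_snd (α := Euc d) (β := Euc d × Euc d)) (mapsTo_univ _ _)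
        exact ((h1.clm_apply h2).clm_apply h2).add ((h1.clm_apply h3).clm_apply h3))
      (by
        rintro ⟨x, v, w⟩ ⟨h3, ⟨h4, h5⟩, h6⟩
        have := hh x (hNU h3) v w (by simpa using h4) (by simpa using h5) h6
        rwa [hessQ_eq (hcd x (hNU h3)), hessQ_eq (hcd x (hNU h3))] at this)
    refine ⟨c₀, hc₀, fun x hx v w hv hw hvw => ?_⟩
    rw [hessQ_eq (hcd x (hNU hx)), hessQ_eq (hcd x (hNU hx))]
    exact hle (x, v, w) ⟨hx, ⟨by simpa using hv, by simpa using hw⟩, hvw⟩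
  have hM0 : 0 < M := by linarith
  set ε := min ε₀ (min 1 (m / 2 / M)) with hε
  have hεε : ε ≤ ε₀ := min_le_left _ _
  have hin : ∀ p : Euc d, ball p ε ⊆ ball p ε₀ := fun p => ball_subset_ball hεε
  have hεp : 0 < ε := lt_min hε₀ (lt_min one_pos (by positivity))
  refine ⟨u, ε, m, M, c₀, hO, hc, hb, hεp, (min_le_right _ _).trans (min_le_left _ _), hm,
    hM0, ?_, hc₀, ?_, ?_, ?_, ?_, ?_, ?_, ?_⟩
  · have : ε ≤ m / 2 / M := (min_le_right _ _).trans (min_le_right _ _)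
    rw [le_div_iff₀ hM0] at this; linarith
  · exact fun p hp a ha => hcd a (hNU (hbN p hp (hin p ha)))
  · intro p hp a ha
    have haU := hNU (hbN p hp (hin p ha))
    have := Set.ext_iff.1 hsgn a
    simp only [mem_inter_iff, mem_ofPred_eq] at this
    tauto
  · intro p hp; rw [hfr] at hp; exact hp.2
  · exact fun p hp a ha => hmN a (hbN p hp (hin p ha))
  · exact fun p hp a ha => hMa a (hbN p hp (hin p ha))
  · exact fun p hp a ha b hb' => htay p hp a (hin p ha) b (hin p hb')
  · exact fun p hp a ha => hhN a (hbN p hp (hin p ha))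

/-- Distance to the complement of `D`. -/
def bd (D : Set (Euc d)) (x : Euc d) : ℝ := infDist x Dᶜ

lemma bd_nonneg (x : Euc d) : 0 ≤ bd D x := infDist_nonneg

lemma continuous_bd : Continuous (bd D) := continuous_infDist_pt _

lemma bd_le_add (x y : Euc d) : bd D y ≤ bd D x + dist y x := infDist_le_infDist_add_dist

lemma ball_bd_subset (x : Euc d) : ball x (bd D x) ⊆ D := by
  intro y hy
  by_contra hyD
  have : bd D x ≤ dist x y := infDist_le_dist_of_mem hyD
  rw [mem_ball, dist_comm] at hy
  linarith

variable {u : Euc d → ℝ} {ε m M c₀ : ℝ}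

lemma BdryData.compl_nonempty (hd : 3 ≤ d) (h : BdryData D u ε m M c₀) : Dᶜ.Nonempty := by
  rw [nonempty_compl]
  rintro rfl
  have : Nontrivial (Euc d) := by
    obtain ⟨n, hn, -⟩ := exists_unit_orthogonal hd 0 0
    exact ⟨n, 0, by rintro rfl; simp at hn⟩
  exact NormedSpace.unbounded_univ ℝ (Euc d) h.bdd

lemma BdryData.bd_pos (hd : 3 ≤ d) (h : BdryData D u ε m M c₀) {x : Euc d} (hx : x ∈ D) :
    0 < bd D x :=
  (h.isOpen.isClosed_compl.notMem_iff_infDist_pos (h.compl_nonempty hd)).1 (by simpa using hx)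

lemma BdryData.exists_nearest (hd : 3 ≤ d) (h : BdryData D u ε m M c₀) {x : Euc d} (hx : x ∈ D) :
    ∃ p ∈ frontier D, dist x p = bd D x := by
  obtain ⟨p, hp, hxp⟩ := h.isOpen.isClosed_compl.exists_infDist_eq_dist (h.compl_nonempty hd) x
  refine ⟨p, ?_, hxp.symm⟩
  rw [h.isOpen.frontier_eq]
  refine ⟨closure_mono (ball_bd_subset x) ?_, hp⟩
  rw [closure_ball x (h.bd_pos hd hx).ne', mem_closedBall, dist_comm]
  exact hxp.ge

/-- The unit vector along the gradient of `u`. -/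
lemma BdryData.exists_normal (h : BdryData D u ε m M c₀) {p a : Euc d} (hp : p ∈ frontier D)
    (ha : a ∈ ball p ε) : ∃ n : Euc d, ‖n‖ = 1 ∧ m ≤ fderiv ℝ u a n := by
  set T := fderiv ℝ u a
  set g := (InnerProductSpace.toDual ℝ (Euc d)).symm T with hg
  have hgn : ‖g‖ = ‖T‖ := by rw [hg, LinearIsometryEquiv.norm_map]
  have hT : m ≤ ‖T‖ := h.grad_lower p hp a ha
  have hpos : 0 < ‖g‖ := by rw [hgn]; linarith [h.m_pos]
  have hTg : T g = ‖g‖ * ‖g‖ := by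
    rw [← InnerProductSpace.toDual_symm_apply (𝕜 := ℝ) (x := g) (y := T), ← hg,
      real_inner_self_eq_norm_mul_norm]
  refine ⟨‖g‖⁻¹ • g, by rw [norm_smul, norm_inv, norm_norm, inv_mul_cancel₀ hpos.ne'], ?_⟩
  rw [map_smul, smul_eq_mul, hTg, ← mul_assoc, inv_mul_cancel₀ hpos.ne', one_mul, hgn]
  exact hT

lemma BdryData.neg_u_le (hd : 3 ≤ d) (h : BdryData D u ε m M c₀) {x : Euc d} (hx : x ∈ D)
    (hxε : bd D x < ε) : -u x ≤ 2 * M * bd D x := by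
  obtain ⟨p, hp, hxp⟩ := h.exists_nearest hd hx
  have h1 := (abs_le.1 (h.taylor p hp p (mem_ball_self h.ε_pos) x (by rw [mem_ball, hxp]; exact hxε))).1
  rw [h.zero p hp, ← dist_eq_norm, hxp] at h1
  have h2 : |fderiv ℝ u p (x - p)| ≤ M * bd D x := by
    rw [← hxp, dist_eq_norm]
    exact ((fderiv ℝ u p).le_opNorm _).trans
      (mul_le_mul_of_nonneg_right (h.grad_upper p hp p (mem_ball_self h.ε_pos)) (norm_nonneg _))
  have h3 := (abs_le.1 h2).1
  have h4 := bd_nonneg (D := D) x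
  have : M * bd D x ^ 2 ≤ M * bd D x := by
    have := h.ε_le; have := h.M_pos
    exact mul_le_mul_of_nonneg_left (by nlinarith) h.M_pos.le
  linarith

lemma BdryData.le_neg_u (hd : 3 ≤ d) (h : BdryData D u ε m M c₀) {x : Euc d} (hx : x ∈ D)
    (hxε : bd D x < ε / 2) : m / 4 * bd D x ≤ -u x := by
  obtain ⟨p, hp, hxp⟩ := h.exists_nearest hd hx
  have hpos := h.bd_pos hd hx
  have hxb : x ∈ ball p ε := by rw [mem_ball, hxp]; linarith
  obtain ⟨n, hn, hmn⟩ := h.exists_normal hp hxb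
  set t := bd D x / 2 with ht
  have hnt : ‖x + t • n - x‖ = t := by
    rw [add_sub_cancel_left, norm_smul, hn, mul_one, Real.norm_of_nonneg (by positivity)]
  have hyb : x + t • n ∈ ball p ε := by
    rw [mem_ball]
    have : dist (x + t • n) p ≤ dist (x + t • n) x + dist x p := dist_triangle _ _ _
    have h' : dist (x + t • n) x = t := by rw [dist_eq_norm, hnt]
    linarith
  have hyD : x + t • n ∈ D := ball_bd_subset x (by rw [mem_ball, dist_eq_norm, hnt]; linarith)
  have h1 := (h.sign p hp _ hyb).1 hyD
  have h2 := (abs_le.1 (h.taylor p hp x hxb _ hyb)).1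
  rw [hnt, add_sub_cancel_left, map_smul, smul_eq_mul] at h2
  have h3 : t * m ≤ t * fderiv ℝ u x n := mul_le_mul_of_nonneg_left hmn (by positivity)
  have h4 : M * t ≤ m / 2 := by
    have : M * t ≤ M * ε := mul_le_mul_of_nonneg_left (by linarith) h.M_pos.le
    linarith [h.small]
  have h5 : M * t ^ 2 ≤ m / 2 * t := by
    rw [pow_two, ← mul_assoc]; exact mul_le_mul_of_nonneg_right h4 (by positivity)
  have : m / 4 * bd D x = m / 2 * t := by rw [ht]; ring
  linarith

/-- Moving inwards along the gradient decreases `u` at a definite rate. -/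
lemma BdryData.inward (h : BdryData D u ε m M c₀) {p x n : Euc d} (hp : p ∈ frontier D)
    (hx : x ∈ ball p ε) (hn : ‖n‖ = 1) (hmn : m ≤ fderiv ℝ u x n) {t : ℝ} (ht : 0 ≤ t) (htε : t ≤ ε)
    (hb : x - t • n ∈ ball p ε) : u (x - t • n) ≤ u x - m / 2 * t := by
  have h2 := (abs_le.1 (h.taylor p hp x hx _ hb)).2
  have hnt : ‖x - t • n - x‖ = t := by
    rw [sub_sub_cancel_left, norm_neg, norm_smul, hn, mul_one, Real.norm_of_nonneg ht]
  rw [hnt, sub_sub_cancel_left, map_neg, map_smul, smul_eq_mul] at h2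
  have h3 : t * m ≤ t * fderiv ℝ u x n := mul_le_mul_of_nonneg_left hmn ht
  have h4 : M * t ≤ m / 2 := by
    have : M * t ≤ M * ε := mul_le_mul_of_nonneg_left htε h.M_pos.le
    linarith [h.small]
  have h5 : M * t ^ 2 ≤ m / 2 * t := by
    rw [pow_two, ← mul_assoc]; exact mul_le_mul_of_nonneg_right h4 ht
  linarith

end

/-! ### A bounded strongly plurisubharmonic function and the lower bounds on the metric -/

section
variable {d : ℕ} {D : Set (Euc d)} {u : Euc d → ℝ} {ε m M c₀ : ℝ}

lemma BdryData.near (hd : 3 ≤ d) (h : BdryData D u ε m M c₀) {x : Euc d} (hx : x ∈ D)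
    (hxε : bd D x < ε / 4) : ∃ p ∈ frontier D, dist x p = bd D x ∧ x ∈ ball p ε ∧
      ∀ y, dist y x < 3 * ε / 4 → y ∈ ball p ε := by
  obtain ⟨p, hp, hxp⟩ := h.exists_nearest hd hx
  have := h.ε_pos
  refine ⟨p, hp, hxp, by rw [mem_ball]; linarith, fun y hy => ?_⟩
  rw [mem_ball]
  linarith [dist_triangle y x p]

lemma BdryData.contDiffAt (hd : 3 ≤ d) (h : BdryData D u ε m M c₀) {x : Euc d} (hx : x ∈ D)
    (hxε : bd D x < ε / 4) : ContDiffAt ℝ 2 u x := by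
  obtain ⟨p, hp, -, hb, -⟩ := h.near hd hx hxε
  exact h.smooth p hp x hb

lemma BdryData.u_neg (hd : 3 ≤ d) (h : BdryData D u ε m M c₀) {x : Euc d} (hx : x ∈ D)
    (hxε : bd D x < ε / 4) : u x < 0 := by
  obtain ⟨p, hp, -, hb, -⟩ := h.near hd hx hxε
  exact (h.sign p hp x hb).1 hx

lemma BdryData.hess_scaled (hd : 3 ≤ d) (h : BdryData D u ε m M c₀) {x : Euc d} (hx : x ∈ D)
    (hxε : bd D x < ε / 4) {v w : Euc d} (hvw : ‖v‖ = ‖w‖) (ho : ⟪v, w⟫ = 0) :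
    c₀ * ‖v‖ ^ 2 ≤ hessQ u x v + hessQ u x w := by
  have hC := h.contDiffAt hd hx hxε
  obtain ⟨p, hp, -, hb, -⟩ := h.near hd hx hxε
  rcases eq_or_ne v 0 with rfl | hv
  · have hw : w = 0 := by rw [← norm_eq_zero, ← hvw, norm_zero]
    subst hw
    simp [hessQ_eq hC]
  have hv0 : 0 < ‖v‖ := norm_pos_iff.2 hv
  have h1 := h.hess p hp x hb (‖v‖⁻¹ • v) (‖v‖⁻¹ • w)
    (by rw [norm_smul, norm_inv, norm_norm, inv_mul_cancel₀ hv0.ne'])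
    (by rw [norm_smul, norm_inv, norm_norm, ← hvw, inv_mul_cancel₀ hv0.ne'])
    (by rw [real_inner_smul_left, real_inner_smul_right, ho, mul_zero, mul_zero])
  rw [hessQ_eq hC, hessQ_eq hC] at h1 ⊢
  simp only [map_smul, smul_apply, smul_eq_mul] at h1
  have h2 := mul_le_mul_of_nonneg_right h1 (sq_nonneg ‖v‖)
  refine h2.trans_eq ?_
  field_simp

/-- The glued function is `max u q` near the boundary and `q` inside, where `q` is a small
multiple of `‖y‖ ^ 2 - B`. -/
lemma BdryData.exists_psh (hd : 3 ≤ d) (h : BdryData D u ε m M c₀) :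
    ∃ φ c, StrongPsh D φ c ∧ ∀ x ∈ D, -φ x ≤ (2 * M + m) * bd D x := by
  obtain ⟨R, hR⟩ := h.bdd.exists_norm_le
  set B := R ^ 2 + 1 with hB
  have hB0 : 0 < B := by positivity
  have hm := h.m_pos
  have hε := h.ε_pos
  have hM := h.M_pos
  have hc₀ := h.c₀_pos
  set e := ε / 4 with he
  have he0 : 0 < e := by positivity
  set η := m / 4 * (e / 2) / (2 * B) with hη
  have hη0 : 0 < η := by positivity
  have hηB : η * B < m / 4 * (e / 2) := by
    have : η * B = m / 4 * (e / 2) / 2 := by rw [hη]; field_simp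
    rw [this]; exact half_lt_self (by positivity)
  set q : Euc d → ℝ := fun y => η * (‖y - 0‖ ^ 2 - B) with hq
  have hqc : ContDiff ℝ 2 q := contDiff_norm_sq_sub 0 η B
  have hqneg : ∀ y ∈ D, q y < 0 := by
    intro y hy
    have h1 := hR y hy
    have h2 : ‖y‖ ^ 2 ≤ R ^ 2 := pow_le_pow_left₀ (norm_nonneg _) h1 2
    simp only [hq, sub_zero]
    exact mul_neg_of_pos_of_neg hη0 (by linarith)
  have hqlow : ∀ y, -(η * B) ≤ q y := by
    intro y
    simp only [hq, sub_zero]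
    nlinarith [mul_nonneg hη0.le (sq_nonneg ‖y‖)]
  have huq : ∀ y ∈ D, e / 2 ≤ bd D y → bd D y < e → u y < q y := by
    intro y hy h1 h2
    have h3 := h.le_neg_u hd hy (by rw [he] at h2; linarith)
    have h4 : m / 4 * (e / 2) ≤ m / 4 * bd D y := mul_le_mul_of_nonneg_left h1 (by positivity)
    linarith [hqlow y]
  set φ : Euc d → ℝ := fun y => if bd D y < e then max (u y) (q y) else q y with hφ
  have hφnear : ∀ y, bd D y < e → φ y = max (u y) (q y) := fun y hy => by simp only [hφ, if_pos hy]
  have hφin : ∀ y ∈ D, e / 2 ≤ bd D y → φ y = q y := by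
    intro y hy h1
    by_cases h2 : bd D y < e
    · rw [hφnear y h2, max_eq_right (huq y hy h1 h2).le]
    · simp only [hφ, if_neg h2]
  have hqφ : ∀ y, q y ≤ φ y := by
    intro y
    by_cases h2 : bd D y < e
    · rw [hφnear y h2]; exact le_max_right _ _
    · simp only [hφ, if_neg h2, le_refl]
  have hnear_ev : ∀ y, bd D y < e → ∀ᶠ z in nhds y, φ z = max (u z) (q z) := by
    intro y hy
    filter_upwards [(continuous_bd (D := D)).continuousAt.eventually_lt_const hy] with z hz
    exact hφnear z hz
  refine ⟨φ, min (c₀ / 4) η, ⟨by positivity, ?_, ?_, ?_⟩, ?_⟩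
  · intro y hy
    refine ContinuousAt.continuousWithinAt ?_
    by_cases h2 : bd D y < e
    · have hu : ContinuousAt u y := (h.contDiffAt hd hy h2).continuousAt
      exact ContinuousAt.congr (hu.max hqc.continuous.continuousAt)
        ((hnear_ev y h2).mono fun z hz => hz.symm)
    · refine hqc.continuous.continuousAt.congr ?_
      filter_upwards [(continuous_bd (D := D)).continuousAt.eventually_const_lt
        (show e / 2 < bd D y by linarith), h.isOpen.mem_nhds hy] with z hz hzD
      exact (hφin z hzD hz.le).symm
  · intro y hy
    by_cases h2 : bd D y < e
    · rw [hφnear y h2]; exact max_lt (h.u_neg hd hy h2) (hqneg y hy)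
    · rw [hφin y hy (by linarith)]; exact hqneg y hy
  · intro y hy
    by_cases h2 : bd D y < e ∧ q y ≤ u y
    · refine ⟨u, h.contDiffAt hd hy h2.1, ?_, ?_, ?_⟩
      · filter_upwards [hnear_ev y h2.1] with z hz
        rw [hz]; exact le_max_left _ _
      · rw [hφnear y h2.1, max_eq_left h2.2]
      · intro v w hvw ho
        refine le_trans ?_ (h.hess_scaled hd hy h2.1 hvw ho)
        exact mul_le_mul_of_nonneg_right (by linarith [min_le_left (c₀ / 4) η]) (sq_nonneg _)
    · refine ⟨q, hqc.contDiffAt, Eventually.of_forall hqφ, ?_, ?_⟩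
      · by_cases h3 : bd D y < e
        · rw [hφnear y h3, max_eq_right]
          exact (not_le.1 fun h4 => h2 ⟨h3, h4⟩).le
        · rw [hφin y hy (by linarith)]
      · intro v w hvw ho
        rw [hessQ_norm_sq, hessQ_norm_sq, ← hvw]
        have := mul_le_mul_of_nonneg_right (min_le_right (c₀ / 4) η) (sq_nonneg ‖v‖)
        nlinarith
  · intro y hy
    have hb := bd_nonneg (D := D) y
    by_cases h2 : bd D y < e
    · have h3 := h.neg_u_le hd hy (by rw [he] at h2; linarith)
      have h4 : u y ≤ φ y := by rw [hφnear y h2]; exact le_max_left _ _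
      nlinarith [mul_nonneg hm.le hb]
    · rw [hφin y hy (by linarith)]
      have := hqlow y
      have h5 : m / 4 * (e / 2) ≤ m * bd D y :=
        mul_le_mul (by linarith) (by linarith) (by positivity) hm.le
      nlinarith [mul_nonneg hM.le hb]

/-- The two lower bounds on the minimal metric: every vector costs at least its length divided by
the square root of the distance to the boundary, and its normal component costs at least its length
divided by the distance itself. -/
lemma BdryData.exists_lower (hd : 3 ≤ d) (h : BdryData D u ε m M c₀) :
    ∃ C : ℝ, 0 < C ∧ (∀ x ∈ D, ∀ v, ‖v‖ ≤ C * √(bd D x) * minMetric D x v) ∧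
      ∀ x ∈ D, bd D x < ε / 4 → ∀ v, |fderiv ℝ u x v| ≤ C * bd D x * minMetric D x v := by
  obtain ⟨φ, c, hφ, hφb⟩ := h.exists_psh hd
  have hc := hφ.pos
  have hm := h.m_pos
  have hM := h.M_pos
  have hε := h.ε_pos
  set F := (2 * M + m) / c with hF
  have hF0 : 0 < F := by positivity
  have hφc : ∀ x ∈ D, -φ x / c ≤ F * bd D x := by
    intro x hx
    rw [hF, div_mul_eq_mul_div]
    exact div_le_div_of_nonneg_right (hφb x hx) hc.le
  set K := M + M / (ε / 4) with hK
  have hK0 : 0 < K := by positivity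
  refine ⟨8 * √F + 16 * (2 * M + K * F), by positivity, fun x hx v => ?_, fun x hx hxε v => ?_⟩
  · refine (hφ.norm_le_minMetric hd h.isOpen hx v).trans ?_
    refine mul_le_mul_of_nonneg_right ?_ (minMetric_nonneg _ _)
    have h1 : √(-φ x / c) ≤ √F * √(bd D x) := by
      rw [← Real.sqrt_mul hF0.le]; exact Real.sqrt_le_sqrt (hφc x hx)
    have h2 : 0 ≤ 16 * (2 * M + K * F) * √(bd D x) := by positivity
    linarith
  · obtain ⟨p, hp, -, hxb, hnb⟩ := h.near hd hx hxε
    have hN : 0 ≤ -u x := by linarith [h.u_neg hd hx hxε]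
    refine (hφ.abs_le_minMetric hd h.isOpen hx (fderiv ℝ u x) hN hK0.le ?_ v).trans ?_
    · intro y hy
      by_cases hyx : ‖y - x‖ < ε / 4
      · have hyb := hnb y (by rw [dist_eq_norm]; linarith)
        have h1 := (abs_le.1 (h.taylor p hp x hxb y hyb)).1
        have h2 := (h.sign p hp y hyb).1 hy
        have h3 : 0 ≤ M / (ε / 4) * ‖y - x‖ ^ 2 := by positivity
        rw [hK, add_mul]
        linarith
      · have h1 : fderiv ℝ u x (y - x) ≤ M * ‖y - x‖ :=
          (le_abs_self _).trans (((fderiv ℝ u x).le_opNorm _).trans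
            (mul_le_mul_of_nonneg_right (h.grad_upper p hp x hxb) (norm_nonneg _)))
        have h2 : M * ‖y - x‖ ≤ M / (ε / 4) * ‖y - x‖ ^ 2 := by
          rw [div_mul_eq_mul_div, le_div_iff₀ (by positivity)]
          have := mul_le_mul_of_nonneg_left (not_lt.1 hyx)
            (mul_nonneg hM.le (norm_nonneg (y - x)))
          nlinarith
        have h3 : 0 ≤ M * ‖y - x‖ ^ 2 := by positivity
        rw [hK, add_mul]
        linarith
    · refine mul_le_mul_of_nonneg_right ?_ (minMetric_nonneg _ _)
      have h1 := h.neg_u_le hd hx (by linarith)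
      have h2 := mul_le_mul_of_nonneg_left (hφc x hx) hK0.le
      have h3 : 0 ≤ 8 * √F * bd D x := by have := bd_nonneg (D := D) x; positivity
      nlinarith

/-! ### A `C¹` function comparable to the distance to the boundary -/

lemma hasDerivAt_max_sq (t : ℝ) : HasDerivAt (fun t : ℝ => (max t 0) ^ 2) (2 * max t 0) t := by
  rcases lt_trichotomy t 0 with ht | rfl | ht
  · rw [max_eq_right ht.le, mul_zero]
    refine (hasDerivAt_const t (0 : ℝ)).congr_of_eventuallyEq ?_
    filter_upwards [gt_mem_nhds ht] with s hs
    rw [max_eq_right hs.le]; norm_num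
  · rw [hasDerivAt_iff_isLittleO_nhds_zero]
    have h1 : (fun s : ℝ => s ^ 2) =o[nhds 0] fun s => s := by
      simpa using Asymptotics.isLittleO_pow_pow (𝕜 := ℝ) (m := 1) (n := 2) (by norm_num)
    refine Asymptotics.IsBigO.trans_isLittleO (Asymptotics.IsBigO.of_bound 1 ?_) h1
    refine Eventually.of_forall fun s => ?_
    rcases le_total s 0 with hs | hs
    · simp [max_eq_right hs]; positivity
    · simp [max_eq_left hs]
  · rw [max_eq_left ht.le]
    have : HasDerivAt (fun t : ℝ => t ^ 2) (2 * t) t := by simpa using hasDerivAt_pow 2 t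
    refine this.congr_of_eventuallyEq ?_
    filter_upwards [lt_mem_nhds ht] with s hs
    rw [max_eq_left hs.le]

lemma contDiff_max_sq : ContDiff ℝ 1 (fun t : ℝ => (max t 0) ^ 2) := by
  rw [contDiff_one_iff_deriv]
  refine ⟨fun t => (hasDerivAt_max_sq t).differentiableAt, ?_⟩
  rw [show deriv (fun t : ℝ => (max t 0) ^ 2) = fun t => 2 * max t 0 from
    funext fun t => (hasDerivAt_max_sq t).deriv]
  fun_prop

/-- A positive `C¹` function on `D` comparable to the distance to the boundary, whose logarithm is
Lipschitz for the minimal metric. -/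
structure HeightData (D : Set (Euc d)) (S : Euc d → ℝ) (c C : ℝ) : Prop where
  c_pos : 0 < c
  C_pos : 0 < C
  lower : ∀ x ∈ D, c * bd D x ≤ S x
  upper : ∀ x ∈ D, S x ≤ C * bd D x
  smooth : ContDiffOn ℝ 1 (fun x => Real.log (S x)) D
  grad : ∀ x ∈ D, ∀ v, |fderiv ℝ (fun x => Real.log (S x)) x v| ≤ C * minMetric D x v
  norm_le : ∀ x ∈ D, ∀ v, ‖v‖ ≤ C * √(bd D x) * minMetric D x v

lemma BdryData.exists_height (hd : 3 ≤ d) (h : BdryData D u ε m M c₀) :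
    ∃ S c C, HeightData D S c C := by
  obtain ⟨C₂, hC₂, hnorm, hgrad⟩ := h.exists_lower hd
  obtain ⟨o, ho⟩ := h.conn.nonempty
  obtain ⟨R, hR⟩ : ∃ R, ∀ x ∈ D, bd D x ≤ R := by
    obtain ⟨R, hR⟩ := h.bdd.exists_norm_le
    obtain ⟨z, hz⟩ := h.compl_nonempty hd
    refine ⟨R + ‖z‖, fun x hx => (infDist_le_dist_of_mem hz).trans ?_⟩
    rw [dist_eq_norm]
    exact (norm_sub_le _ _).trans (by linarith [hR x hx])
  have hR0 : 0 < R := (h.bd_pos hd ho).trans_le (hR o ho)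
  have hm := h.m_pos
  have hε := h.ε_pos
  have hM := h.M_pos
  set e := ε / 4 with he
  have he0 : 0 < e := by positivity
  set ε₁ := m / 4 * (e / 2) with hε₁
  have hε₁0 : 0 < ε₁ := by positivity
  -- the profile is concave, equals `ε₁` beyond `ε₁`, and lies between `min t ε₁` and `2 * t`
  set S : Euc d → ℝ := fun x => if bd D x < e then ε₁ - (max (ε₁ + u x) 0) ^ 2 / ε₁ else ε₁ with hS
  have hnear : ∀ x, bd D x < e → S x = ε₁ - (max (ε₁ + u x) 0) ^ 2 / ε₁ := fun x hx => by
    simp only [hS, if_pos hx]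
  have hin : ∀ x ∈ D, e / 2 ≤ bd D x → S x = ε₁ := by
    intro x hx h1
    by_cases h2 : bd D x < e
    · have h3 := h.le_neg_u hd hx (by rw [he] at h2; linarith)
      have h4 : ε₁ ≤ m / 4 * bd D x := mul_le_mul_of_nonneg_left h1 (by positivity)
      rw [hnear x h2, max_eq_right (by linarith)]; simp
    · simp only [hS, if_neg h2]
  have hnear_ev : ∀ x, bd D x < e → S =ᶠ[nhds x] fun x => ε₁ - (max (ε₁ + u x) 0) ^ 2 / ε₁ := by
    intro x hx
    filter_upwards [(continuous_bd (D := D)).continuousAt.eventually_lt_const hx] with z hz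
    exact hnear z hz
  have hin_ev : ∀ x ∈ D, ¬ bd D x < e → S =ᶠ[nhds x] fun _ => ε₁ := by
    intro x hx h2
    filter_upwards [(continuous_bd (D := D)).continuousAt.eventually_const_lt
        (show e / 2 < bd D x by linarith), h.isOpen.mem_nhds hx] with z hz hzD
    exact hin z hzD hz.le
  have hlow1 : ∀ x ∈ D, bd D x < e → m / 8 * bd D x ≤ S x := by
    intro x hx h2
    have h3 := h.le_neg_u hd hx (by rw [he] at h2; linarith)
    have hb := h.bd_pos hd hx
    rw [hnear x h2]
    rcases le_total (ε₁ + u x) 0 with h4 | h4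
    · rw [max_eq_right h4]
      have : m / 8 * bd D x ≤ m / 8 * e := mul_le_mul_of_nonneg_left h2.le (by positivity)
      have : ε₁ = m / 8 * e := by rw [hε₁]; ring
      simp; linarith
    · rw [max_eq_left h4]
      have h5 : (ε₁ + u x) ^ 2 / ε₁ ≤ ε₁ + u x := by
        rw [div_le_iff₀ hε₁0, pow_two]
        exact mul_le_mul_of_nonneg_left (by linarith [h.u_neg hd hx h2]) h4
      nlinarith
  set c := min (m / 8) (ε₁ / R) with hc
  have hc0 : 0 < c := lt_min (by positivity) (by positivity)
  have hlow : ∀ x ∈ D, c * bd D x ≤ S x := by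
    intro x hx
    have hb := h.bd_pos hd hx
    by_cases h2 : bd D x < e
    · exact (mul_le_mul_of_nonneg_right (min_le_left _ _) hb.le).trans (hlow1 x hx h2)
    · rw [hin x hx (by linarith)]
      calc c * bd D x ≤ ε₁ / R * R := mul_le_mul (min_le_right _ _) (hR x hx) hb.le (by positivity)
        _ = ε₁ := by field_simp
  have hSpos : ∀ x ∈ D, 0 < S x := fun x hx => (mul_pos hc0 (h.bd_pos hd hx)).trans_le (hlow x hx)
  have hSc : ∀ x ∈ D, ContDiffAt ℝ 1 S x := by
    intro x hx
    by_cases h2 : bd D x < e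
    · refine ContDiffAt.congr_of_eventuallyEq ?_ (hnear_ev x h2)
      have hu : ContDiffAt ℝ 1 u x := (h.contDiffAt hd hx h2).of_le (by norm_num)
      have h3 : ContDiffAt ℝ 1 (fun x => (max (ε₁ + u x) 0) ^ 2) x :=
        contDiff_max_sq.contDiffAt.comp x (contDiffAt_const.add hu)
      exact contDiffAt_const.sub (h3.div_const ε₁)
    · exact contDiffAt_const.congr_of_eventuallyEq (hin_ev x hx h2)
  refine ⟨S, c, 4 * M + m + 2 * C₂ / c + C₂, hc0, by positivity, hlow, ?_, ?_, ?_, ?_⟩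
  · intro x hx
    have hb := h.bd_pos hd hx
    have hp : 0 ≤ (2 * C₂ / c + C₂) * bd D x := by positivity
    by_cases h2 : bd D x < e
    · have h3 := h.neg_u_le hd hx (by rw [he] at h2; linarith)
      have h4 : S x ≤ 2 * (-u x) := by
        rw [hnear x h2]
        rcases le_total (ε₁ + u x) 0 with h4 | h4
        · rw [max_eq_right h4]; simp; linarith
        · rw [max_eq_left h4]
          have : (ε₁ + u x) ^ 2 / ε₁ = ε₁ + 2 * u x + u x ^ 2 / ε₁ := by field_simp; ring
          have : 0 ≤ u x ^ 2 / ε₁ := by positivity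
          linarith
      nlinarith [mul_pos hm hb]
    · rw [hin x hx (by linarith)]
      have : ε₁ ≤ m * bd D x := mul_le_mul (by linarith) (by linarith) (by positivity) hm.le
      nlinarith [mul_pos hM hb]
  · intro x hx
    exact ((hSc x hx).log (hSpos x hx).ne').contDiffWithinAt
  · intro x hx v
    have hb := h.bd_pos hd hx
    have hg := minMetric_nonneg (D := D) x v
    have hSd : DifferentiableAt ℝ S x := (hSc x hx).differentiableAt (by norm_num)
    rw [fderiv.log hSd (hSpos x hx).ne', smul_apply, smul_eq_mul, abs_mul,
      abs_of_pos (inv_pos.2 (hSpos x hx))]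
    by_cases h2 : bd D x < e
    · have hu : DifferentiableAt ℝ u x := (h.contDiffAt hd hx h2).differentiableAt (by norm_num)
      have h4 := (((hasDerivAt_max_sq (ε₁ + u x)).comp_hasFDerivAt x
        (hu.hasFDerivAt.const_add ε₁)).mul_const ε₁⁻¹).const_sub ε₁
      have h5 : fderiv ℝ S x v = -(ε₁⁻¹ * (2 * max (ε₁ + u x) 0 * fderiv ℝ u x v)) := by
        rw [(h4.congr_of_eventuallyEq ((hnear_ev x h2).trans (Eventually.of_forall fun z => by
          simp [div_eq_mul_inv]))).fderiv]
        simp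
      have h6 : |fderiv ℝ S x v| ≤ 2 * (C₂ * bd D x * minMetric D x v) := by
        rw [h5, abs_neg, abs_mul, abs_mul, abs_of_pos (inv_pos.2 hε₁0), ← mul_assoc]
        refine mul_le_mul ?_ (hgrad x hx h2 v) (abs_nonneg _) (by norm_num)
        rw [abs_of_nonneg (by positivity), inv_mul_le_iff₀ hε₁0]
        have : max (ε₁ + u x) 0 ≤ ε₁ := max_le (by linarith [h.u_neg hd hx h2]) hε₁0.le
        linarith
      have h7 : (S x)⁻¹ ≤ (c * bd D x)⁻¹ := inv_anti₀ (by positivity) (hlow x hx)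
      calc (S x)⁻¹ * |fderiv ℝ S x v|
          ≤ (c * bd D x)⁻¹ * (2 * (C₂ * bd D x * minMetric D x v)) :=
            mul_le_mul h7 h6 (abs_nonneg _) (by positivity)
        _ = 2 * C₂ / c * minMetric D x v := by field_simp
        _ ≤ _ := mul_le_mul_of_nonneg_right (by linarith) hg
    · rw [(hin_ev x hx h2).fderiv_eq]
      simp
      positivity
  · intro x hx v
    refine (hnorm x hx v).trans (mul_le_mul_of_nonneg_right
      (mul_le_mul_of_nonneg_right ?_ (Real.sqrt_nonneg _)) (minMetric_nonneg _ _))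
    have : 0 ≤ 2 * C₂ / c := by positivity
    linarith

variable {S : Euc d → ℝ} {c C : ℝ}

lemma HeightData.pos (hd : 3 ≤ d) (h : BdryData D u ε m M c₀) (hS : HeightData D S c C) {x : Euc d}
    (hx : x ∈ D) : 0 < S x :=
  (mul_pos hS.c_pos (h.bd_pos hd hx)).trans_le (hS.lower x hx)

/-- Points at minimal distance at most one are at bounded distance for the filling. -/
lemma HeightData.fill_le (hd : 3 ≤ d) (h : BdryData D u ε m M c₀) (hS : HeightData D S c C) :
    ∃ L₀, ∀ x y : D, minDist D x y ≤ 1 → fill (fun z : D => √(S z)) x y ≤ L₀ := by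
  have hC := hS.C_pos
  have hc := hS.c_pos
  set E := Real.exp (2 * C) with hE
  have hE0 : 0 < E := Real.exp_pos _
  set K := C * √(E / c) with hK
  have hK0 : 0 < K := by positivity
  refine ⟨2 * Real.log (2 * K + (1 + √E)) + C, fun x y hxy => ?_⟩
  obtain ⟨ℓ, hℓ, γ, a, b, hγ, hm, hga, hgb, hlen⟩ :=
    exists_joined_lt hd h.isOpen h.conn x.2 y.2 (hxy.trans_lt one_lt_two)
  have hab := hγ.le
  have hlenle : ∀ t ∈ Icc a b, len D γ a t ≤ 2 := by
    intro t ht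
    have h1 := hγ.mono le_rfl ht.1 ht.2
    have h2 := hγ.mono ht.1 ht.2 le_rfl
    have h3 := PW.len_add hd h.isOpen h1 h2 hm
    have h4 : 0 ≤ len D γ t b := len_nonneg h2.le
    linarith
  have hvar : ∀ t ∈ Icc a b, |Real.log (S (γ t)) - Real.log (S x)| ≤ 2 * C := by
    intro t ht
    have h1 := hγ.mono le_rfl ht.1 ht.2
    have h2 := norm_sub_le_len hd h.isOpen hS.smooth h1
      (fun s hs => hm s ⟨hs.1, hs.2.trans ht.2⟩) (K := C)
      (fun s hs v => hS.grad _ (hm s ⟨hs.1, hs.2.trans ht.2⟩) v)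
    rw [hga, Real.norm_eq_abs] at h2
    nlinarith [hlenle t ht]
  have hxS := hS.pos hd h x.2
  have hyS := hS.pos hd h y.2
  have hSle : ∀ t ∈ Icc a b, S (γ t) ≤ E * S x := by
    intro t ht
    have h1 := (abs_le.1 (hvar t ht)).2
    rw [← Real.log_le_log_iff (hS.pos hd h (hm t ht)) (by positivity),
      Real.log_mul hE0.ne' hxS.ne', hE, Real.log_exp]
    linarith
  have hdist : ‖(y : Euc d) - x‖ ≤ K * √(S x) * 2 := by
    have h2 := norm_sub_le_len hd h.isOpen (contDiffOn_id (s := D)) hγ hm (K := K * √(S x)) (by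
      intro t ht v
      rw [fderiv_id, ContinuousLinearMap.id_apply]
      refine (hS.norm_le _ (hm t ht) v).trans (mul_le_mul_of_nonneg_right ?_ (minMetric_nonneg _ _))
      rw [hK, mul_assoc, ← Real.sqrt_mul (by positivity)]
      refine mul_le_mul_of_nonneg_left (Real.sqrt_le_sqrt ?_) hC.le
      rw [div_mul_eq_mul_div, le_div_iff₀ hc, mul_comm]
      exact (hS.lower _ (hm t ht)).trans (hSle t ht))
    rw [hga, hgb, hlen] at h2
    exact h2.trans (mul_le_mul_of_nonneg_left hℓ.le (by positivity))
  have hy : √(S y) ≤ √E * √(S x) := by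
    rw [← Real.sqrt_mul hE0.le]
    have := hSle b (right_mem_Icc.2 hab)
    rw [hgb] at this
    exact Real.sqrt_le_sqrt this
  have hx0 : 0 < √(S x) := Real.sqrt_pos.2 hxS
  have hy0 : 0 < √(S y) := Real.sqrt_pos.2 hyS
  have hrr : rr (fun z : D => √(S z)) x y ≤ (2 * K + (1 + √E)) * √(S x) := by
    have h1 : dist x y = ‖(y : Euc d) - x‖ := by rw [Subtype.dist_eq, dist_comm, dist_eq_norm]
    have h2 : max (√(S x)) (√(S y)) ≤ (1 + √E) * √(S x) :=
      max_le (by nlinarith [Real.sqrt_nonneg E]) (by linarith)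
    show dist x y + max (√(S x)) (√(S y)) ≤ _
    rw [h1]; linarith
  have hrr0 : 0 < rr (fun z : D => √(S z)) x y := by
    show 0 < dist x y + max (√(S x)) (√(S y))
    have := dist_nonneg (x := x) (y := y)
    have := le_max_left (√(S x)) (√(S y))
    linarith
  have hlog := Real.log_le_log hrr0 hrr
  rw [Real.log_mul (by positivity) hx0.ne'] at hlog
  have hv := (abs_le.1 (hvar b (right_mem_Icc.2 hab))).1
  rw [hgb] at hv
  have e1 : Real.log (√(S x)) = Real.log (S x) / 2 := Real.log_sqrt hxS.le
  have e2 : Real.log (√(S y)) = Real.log (S y) / 2 := Real.log_sqrt hyS.le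
  show 2 * Real.log (rr (fun z : D => √(S z)) x y) - Real.log (√(S x)) - Real.log (√(S y)) ≤ _
  rw [e1] at hlog ⊢
  rw [e2]
  linarith

end

/-! ### Upper bounds on the minimal distance -/

section
variable {d : ℕ} {D : Set (Euc d)} {u : Euc d → ℝ} {ε m M c₀ : ℝ}

lemma BdryData.bd_le_dist (h : BdryData D u ε m M c₀) {p : Euc d} (hp : p ∈ frontier D) (x : Euc d) :
    bd D x ≤ dist x p := by
  rw [h.isOpen.frontier_eq] at hp
  exact infDist_le_dist_of_mem hp.2

/-- A vertical segment of length comparable to the distance to the boundary has bounded length. -/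
lemma BdryData.vertical (hd : 3 ≤ d) (h : BdryData D u ε m M c₀) {p x n : Euc d}
    (hp : p ∈ frontier D) (hx : x ∈ D) (hxb : bd D x < ε / 2) (hn : ‖n‖ = 1)
    (hmn : m ≤ fderiv ℝ u x n) {a : ℝ} (ha : 0 ≤ a) (hap : dist x p + a < ε) :
    x - a • n ∈ D ∧ u (x - a • n) ≤ u x - m / 2 * a ∧
      minDist D x (x - a • n) ≤ a * (8 * M / (m * bd D x)) := by
  have hm := h.m_pos
  have hM := h.M_pos
  have hpos := h.bd_pos hd hx
  have hdist := dist_nonneg (x := x) (y := p)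
  have hxp : x ∈ ball p ε := by rw [mem_ball]; linarith
  have hux : u x < 0 := (h.sign p hp x hxp).1 hx
  have hpt : ∀ t, 0 ≤ t → t ≤ a → x - t • n ∈ ball p ε ∧ x - t • n ∈ D ∧
      u (x - t • n) ≤ u x - m / 2 * t ∧ m / (8 * M) * bd D x ≤ bd D (x - t • n) := by
    intro t ht hta
    have h0 : dist (x - t • n) p ≤ t + dist x p := by
      refine (dist_triangle _ x _).trans (add_le_add_left ?_ _)
      rw [dist_eq_norm, sub_sub_cancel_left, norm_neg, norm_smul, hn, mul_one,
        Real.norm_of_nonneg ht]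
    have h1 : x - t • n ∈ ball p ε := by rw [mem_ball]; linarith
    have h2 := h.inward hp hxp hn hmn ht (by linarith) h1
    have h3 : 0 ≤ m / 2 * t := by positivity
    have h4 : x - t • n ∈ D := (h.sign p hp _ h1).2 (by linarith)
    refine ⟨h1, h4, h2, ?_⟩
    have h5 := h.neg_u_le hd h4 ((h.bd_le_dist hp _).trans_lt h1)
    have h6 := h.le_neg_u hd hx hxb
    rw [div_mul_eq_mul_div, div_le_iff₀ (by positivity)]
    linarith
  refine ⟨(hpt a ha le_rfl).2.1, (hpt a ha le_rfl).2.2.1, ?_⟩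
  have hseg : ∀ t : ℝ, x + t • (x - a • n - x) = x - (t * a) • n := by intro t; module
  have hta : ∀ t ∈ Icc (0 : ℝ) 1, 0 ≤ t * a ∧ t * a ≤ a := fun t ht =>
    ⟨mul_nonneg ht.1 ha, mul_le_of_le_one_left ha ht.2⟩
  obtain ⟨ℓ, hℓ, hj⟩ := joined_segment hd h.isOpen (x := x) (y := x - a • n)
    (B := a * (8 * M / (m * bd D x)))
    (fun t ht => by rw [hseg]; exact (hpt _ (hta t ht).1 (hta t ht).2).2.1)
    (fun t ht => by
      rw [hseg]
      have h1 := (hpt _ (hta t ht).1 (hta t ht).2).2.2.2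
      have h2 : 0 < m / (8 * M) * bd D x := by positivity
      refine (minMetric_le_of_ball hd h2 ((ball_subset_ball h1).trans (ball_bd_subset _))).trans_eq ?_
      rw [sub_sub_cancel_left, norm_neg, norm_smul, hn, mul_one, Real.norm_of_nonneg ha]
      field_simp)
  exact (minDist_le hj).trans hℓ

/-- A segment of length `r` at depth of order `r ^ 2` is covered by flat conformal discs of radius
comparable to `r`: each disc is spanned by the direction of the segment and by a second direction
orthogonal to it and tangent to the level set of `u`. This is where `3 ≤ d` enters. -/
lemma BdryData.horizontal (hd : 3 ≤ d) (h : BdryData D u ε m M c₀) {p x y : Euc d}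
    (hp : p ∈ frontier D) {r L : ℝ} (hL : 0 ≤ L) (hxy : ‖y - x‖ ≤ r)
    (hux : u x ≤ -(4 * M * r ^ 2)) (huy : u y ≤ -(4 * M * r ^ 2)) (hL' : |u y - u x| ≤ L * r ^ 2)
    (hr : 0 < r) (hball : ∀ z, dist z x ≤ 2 * r → z ∈ ball p ε) :
    minDist D x y ≤ (L + 3 * M) / M := by
  have hM := h.M_pos
  set v := y - x with hv
  set κ := M / (L + 3 * M) with hκ
  have hκ0 : 0 < κ := by positivity
  have hκ1 : κ ≤ 1 := by rw [hκ, div_le_one (by positivity)]; linarith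
  have hκM : κ * (L + 3 * M) = M := by rw [hκ]; field_simp
  have hvr : ‖v‖ ^ 2 ≤ r ^ 2 := pow_le_pow_left₀ (norm_nonneg _) hxy 2
  have hxb : x ∈ ball p ε := hball x (by rw [dist_self]; linarith)
  have hyb : y ∈ ball p ε := hball y (by rw [dist_eq_norm]; linarith)
  have hpt : ∀ t ∈ Icc (0 : ℝ) 1, x + t • v ∈ ball p ε ∧ u (x + t • v) ≤ -(3 * M * r ^ 2) ∧
      |fderiv ℝ u (x + t • v) v| ≤ (L + 2 * M) * r ^ 2 := by
    intro t ht
    set q := x + t • v with hq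
    have hqb : q ∈ ball p ε := hball q (by
      rw [dist_eq_norm, hq, add_sub_cancel_left, norm_smul, Real.norm_of_nonneg ht.1]
      nlinarith [norm_nonneg v, ht.2])
    have ex : x - q = (-t) • v := by rw [hq]; module
    have ey : y - q = (1 - t) • v := by rw [hq, hv]; module
    have h1 := h.taylor p hp q hqb x hxb
    have h2 := h.taylor p hp q hqb y hyb
    rw [ex, map_smul, smul_eq_mul, norm_smul, mul_pow, Real.norm_eq_abs, sq_abs] at h1
    rw [ey, map_smul, smul_eq_mul, norm_smul, mul_pow, Real.norm_eq_abs, sq_abs] at h2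
    set T := fderiv ℝ u q v
    have hMr : M * ‖v‖ ^ 2 ≤ M * r ^ 2 := mul_le_mul_of_nonneg_left hvr hM.le
    have hMv : 0 ≤ M * ‖v‖ ^ 2 := by positivity
    have ht0 := ht.1
    have ht1 : 0 ≤ 1 - t := by linarith [ht.2]
    have h1' : M * ((-t) ^ 2 * ‖v‖ ^ 2) ≤ M * r ^ 2 := by
      have : (-t) ^ 2 ≤ 1 := by nlinarith
      have := mul_le_of_le_one_left hMv this
      linarith
    have h2' : M * ((1 - t) ^ 2 * ‖v‖ ^ 2) ≤ M * r ^ 2 := by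
      have : (1 - t) ^ 2 ≤ 1 := by nlinarith
      have := mul_le_of_le_one_left hMv this
      linarith
    obtain ⟨h1a, h1b⟩ := abs_le.1 (h1.trans h1')
    obtain ⟨h2a, h2b⟩ := abs_le.1 (h2.trans h2')
    refine ⟨hqb, ?_, ?_⟩
    · have a1 := mul_le_mul_of_nonneg_left h1a ht1
      have a2 := mul_le_mul_of_nonneg_left h2a ht0
      have a3 := mul_le_mul_of_nonneg_left hux ht1
      have a4 := mul_le_mul_of_nonneg_left huy ht0
      linarith
    · obtain ⟨h3, h4⟩ := abs_le.1 hL'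
      rw [abs_le]
      constructor <;> linarith
  have hdisc : ∀ t ∈ Icc (0 : ℝ) 1, x + t • v ∈ D ∧ minMetric D (x + t • v) v ≤ κ⁻¹ := by
    intro t ht
    obtain ⟨hqb, hq1, hq2⟩ := hpt t ht
    have hdq : dist (x + t • v) x ≤ ‖v‖ := by
      rw [dist_eq_norm, add_sub_cancel_left, norm_smul, Real.norm_of_nonneg ht.1]
      exact mul_le_of_le_one_left (norm_nonneg _) ht.2
    set q := x + t • v
    have hr2 : 0 < M * r ^ 2 := by positivity
    have hqD : q ∈ D := (h.sign p hp q hqb).2 (by linarith)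
    refine ⟨hqD, ?_⟩
    rcases eq_or_ne v 0 with hv0 | hv0
    · rw [hv0, minMetric_zero hqD]; positivity
    have hvp : 0 < ‖v‖ := norm_pos_iff.2 hv0
    set T := fderiv ℝ u q
    obtain ⟨w, hw, hvw, hTw⟩ := exists_unit_orthogonal hd v
      ((InnerProductSpace.toDual ℝ (Euc d)).symm T)
    rw [InnerProductSpace.toDual_symm_apply] at hTw
    have hR : 0 < κ * ‖v‖ := by positivity
    refine (minMetric_le_of_flat hR hw hvw ?_).trans_eq (by field_simp)
    intro a b hab
    have hnorm : ‖a • v + b • w‖ ^ 2 = (a * ‖v‖) ^ 2 + b ^ 2 := by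
      rw [norm_add_sq_real, real_inner_smul_left, real_inner_smul_right, hvw, norm_smul, norm_smul,
        hw, mul_pow, mul_pow, mul_pow, Real.norm_eq_abs, Real.norm_eq_abs, sq_abs, sq_abs]
      ring
    have hlt : ‖a • v + b • w‖ < κ * ‖v‖ := by
      rw [← hnorm] at hab
      exact lt_of_pow_lt_pow_left₀ 2 hR.le hab
    have hle : κ * ‖v‖ ≤ ‖v‖ := mul_le_of_le_one_left (norm_nonneg _) hκ1
    have hzb : q + (a • v + b • w) ∈ ball p ε := hball _ (by
      have h1 := dist_triangle (q + (a • v + b • w)) q x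
      have h2 : dist (q + (a • v + b • w)) q = ‖a • v + b • w‖ := by
        rw [dist_eq_norm, add_sub_cancel_left]
      linarith)
    refine (h.sign p hp _ hzb).2 ?_
    have h1 := (abs_le.1 (h.taylor p hp q hqb _ hzb)).2
    rw [add_sub_cancel_left, hnorm, map_add, map_smul, map_smul, hTw, smul_zero, add_zero,
      smul_eq_mul] at h1
    have ha : |a| ≤ κ := by
      have h2 : (a * ‖v‖) ^ 2 ≤ (κ * ‖v‖) ^ 2 := by linarith [sq_nonneg b]
      have h3 := abs_le_of_sq_le_sq h2 hR.le
      rw [abs_mul, abs_of_pos hvp] at h3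
      exact le_of_mul_le_mul_right h3 hvp
    have h2 : a * T v ≤ κ * ((L + 2 * M) * r ^ 2) := by
      refine (le_abs_self _).trans ?_
      rw [abs_mul]
      exact mul_le_mul ha hq2 (abs_nonneg _) hκ0.le
    have h3 : M * ((a * ‖v‖) ^ 2 + b ^ 2) ≤ κ * (M * r ^ 2) := by
      have h5 : (κ * ‖v‖) ^ 2 ≤ κ * r ^ 2 := by
        rw [mul_pow]
        exact mul_le_mul (pow_le_of_le_one hκ0.le hκ1 two_ne_zero) hvr (sq_nonneg _) hκ0.le
      have h6 := mul_le_mul_of_nonneg_left (hab.le.trans h5) hM.le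
      linarith
    have h4 : κ * ((L + 2 * M) * r ^ 2) + κ * (M * r ^ 2) = M * r ^ 2 := by
      calc _ = κ * (L + 3 * M) * r ^ 2 := by ring
        _ = _ := by rw [hκM]
    linarith
  obtain ⟨ℓ, hℓ, hj⟩ := joined_segment hd h.isOpen (x := x) (y := y) (B := κ⁻¹)
    (fun t ht => (hdisc t ht).1) (fun t ht => (hdisc t ht).2)
  refine (minDist_le hj).trans (hℓ.trans_eq ?_)
  rw [hκ, inv_div]

/-- Two points at depth of order `s ^ 2` and at Euclidean distance of order `s` are at bounded
minimal distance: move both up by a large multiple of `s ^ 2`, then across. -/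
lemma BdryData.dist_le_small (hd : 3 ≤ d) (h : BdryData D u ε m M c₀) {k B C₀ : ℝ} (hk : 0 < k)
    (hB : 0 < B) (hC₀ : 0 < C₀) : ∃ s₂ C₁ : ℝ, 0 < s₂ ∧ ∀ x ∈ D, ∀ y ∈ D, ∀ s, 0 < s → s ≤ s₂ →
      k * s ^ 2 ≤ bd D x → bd D x ≤ B * s ^ 2 → k * s ^ 2 ≤ bd D y → bd D y ≤ B * s ^ 2 →
      dist x y ≤ C₀ * s → minDist D x y ≤ C₁ := by
  have hm := h.m_pos
  have hM := h.M_pos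
  have hε := h.ε_pos
  have hε1 := h.ε_le
  set V := C₀ + 1 with hV
  have hV0 : 0 < V := by positivity
  set A := 8 * M * V ^ 2 / m with hA
  have hA0 : 0 < A := by positivity
  have hmA : m / 2 * A = 4 * M * V ^ 2 := by rw [hA]; field_simp; norm_num
  set Q := B + C₀ + 2 * A + 2 * V + 1 with hQ
  have hQ0 : 0 < Q := by positivity
  set L := 2 * M * (B + A) / V ^ 2 with hL
  have hL0 : 0 ≤ L := by positivity
  refine ⟨ε / (4 * Q), A * (8 * M / (m * k)) + (L + 3 * M) / M + A * (8 * M / (m * k)),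
    by positivity, fun x hx y hy s hs hs2 hkx hxB hky hyB hxy => ?_⟩
  have hQs : Q * s ≤ ε / 4 := by
    rw [le_div_iff₀ (by positivity)] at hs2; linarith
  have hs1 : s ≤ 1 := by nlinarith
  have hss : s ^ 2 ≤ s := by nlinarith
  have hBs : B * s ^ 2 ≤ B * s := mul_le_mul_of_nonneg_left hss hB.le
  have hAs : A * s ^ 2 ≤ A * s := mul_le_mul_of_nonneg_left hss hA0.le
  have hBs0 : 0 < B * s := by positivity
  have hCs0 : 0 < C₀ * s := by positivity
  have hAs0 : 0 < A * s := by positivity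
  have hVs0 : 0 < V * s := by positivity
  have hQs' : B * s + C₀ * s + 2 * (A * s) + 2 * (V * s) + s ≤ ε / 4 := by
    calc _ = Q * s := by rw [hQ]; ring
      _ ≤ _ := hQs
  obtain ⟨p, hp, hxp⟩ := h.exists_nearest hd hx
  have hyp : dist y p ≤ C₀ * s + B * s := by
    have := dist_triangle y x p
    rw [dist_comm y x] at this; linarith
  obtain ⟨n, hn, hmn⟩ := h.exists_normal hp (a := x) (by rw [mem_ball]; linarith)
  obtain ⟨n', hn', hmn'⟩ := h.exists_normal hp (a := y) (by rw [mem_ball]; linarith)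
  have hAs2 : 0 ≤ A * s ^ 2 := by positivity
  obtain ⟨hx'D, hux', hxx'⟩ := h.vertical hd hp hx (by linarith) hn hmn hAs2 (by linarith)
  obtain ⟨hy'D, huy', hyy'⟩ := h.vertical hd hp hy (by linarith) hn' hmn' hAs2 (by linarith)
  set x' := x - (A * s ^ 2) • n with hx'
  set y' := y - (A * s ^ 2) • n' with hy'
  have hux0 : u x < 0 := (h.sign p hp x (by rw [mem_ball]; linarith)).1 hx
  have huy0 : u y < 0 := (h.sign p hp y (by rw [mem_ball]; linarith)).1 hy
  have hdx : dist x' x = A * s ^ 2 := by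
    rw [dist_eq_norm, hx', sub_sub_cancel_left, norm_neg, norm_smul, hn, mul_one,
      Real.norm_of_nonneg hAs2]
  have hdy : dist y' y = A * s ^ 2 := by
    rw [dist_eq_norm, hy', sub_sub_cancel_left, norm_neg, norm_smul, hn', mul_one,
      Real.norm_of_nonneg hAs2]
  have hbx := bd_le_add (D := D) x x'
  have hby := bd_le_add (D := D) y y'
  have hnx := h.neg_u_le hd hx'D (by linarith)
  have hny := h.neg_u_le hd hy'D (by linarith)
  have hbx' : 2 * M * bd D x' ≤ 2 * M * ((B + A) * s ^ 2) :=
    mul_le_mul_of_nonneg_left (by linarith) (by positivity)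
  have hby' : 2 * M * bd D y' ≤ 2 * M * ((B + A) * s ^ 2) :=
    mul_le_mul_of_nonneg_left (by linarith) (by positivity)
  have hLr : L * (V * s) ^ 2 = 2 * M * ((B + A) * s ^ 2) := by rw [hL]; field_simp
  have hmr : m / 2 * (A * s ^ 2) = 4 * M * (V * s) ^ 2 := by
    rw [← mul_assoc, hmA]; ring
  have hMr : 0 < 4 * M * (V * s) ^ 2 := by positivity
  have hhor := h.horizontal hd hp (x := x') (y := y') (r := V * s) (L := L) hL0
    (by
      rw [← dist_eq_norm]
      have h1 := dist_triangle4 y' y x x'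
      rw [hdy, dist_comm x x', hdx, dist_comm y x] at h1
      have : A * s ^ 2 + A * s ^ 2 ≤ s := by
        have : A * s * s ≤ 1 / 4 * s := mul_le_mul_of_nonneg_right (by linarith) hs.le
        have e : A * s ^ 2 = A * s * s := by ring
        linarith
      rw [hV, add_mul]; linarith)
    (by linarith) (by linarith)
    (by rw [hLr, abs_le]; constructor <;> linarith) hVs0
    (by
      intro z hz
      rw [mem_ball]
      have := dist_triangle4 z x' x p
      linarith)
  have hver : ∀ b, k * s ^ 2 ≤ b → A * s ^ 2 * (8 * M / (m * b)) ≤ A * (8 * M / (m * k)) := by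
    intro b hb
    have hks : 0 < k * s ^ 2 := by positivity
    calc A * s ^ 2 * (8 * M / (m * b)) ≤ A * s ^ 2 * (8 * M / (m * (k * s ^ 2))) := by gcongr
      _ = _ := by field_simp
  have t1 := minDist_triangle hd h.isOpen h.conn hx hx'D hy
  have t2 := minDist_triangle hd h.isOpen h.conn hx'D hy'D hy
  rw [minDist_symm hd h.isOpen y' y] at t2
  linarith [hver _ hkx, hver _ hky]

lemma BdryData.dist_le_large (hd : 3 ≤ d) (h : BdryData D u ε m M c₀) {k : ℝ} (hk : 0 < k) :
    ∃ C₁ : ℝ, ∀ x ∈ D, ∀ y ∈ D, k ≤ bd D x → k ≤ bd D y → minDist D x y ≤ C₁ := by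
  obtain ⟨o, ho⟩ := h.conn.nonempty
  have hKD : {x | k ≤ bd D x} ⊆ D := fun x hx =>
    ball_bd_subset x (mem_ball_self (hk.trans_le hx))
  have hK : IsCompact {x | k ≤ bd D x} :=
    Metric.isCompact_of_isClosed_isBounded (isClosed_le continuous_const continuous_bd)
      (h.bdd.subset hKD)
  obtain ⟨C, hC⟩ := minDist_bounded_on_compact hd h.isOpen h.conn ho hK hKD
  refine ⟨C + C, fun x hx y hy hkx hky => ?_⟩
  have := minDist_triangle hd h.isOpen h.conn hx ho hy
  rw [minDist_symm hd h.isOpen x o] at this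
  linarith [hC x hkx, hC y hky]

lemma le_sqrt_mul_sqrt {K s t : ℝ} (hK : 0 ≤ K) (h : s ^ 2 ≤ K * t) : s ≤ √K * √t := by
  rw [← Real.sqrt_mul hK]; exact Real.le_sqrt_of_sq_le h

lemma sqrt_le_sqrt_mul {K s t : ℝ} (hK : 0 ≤ K) (hs : 0 ≤ s) (h : t ≤ K * s ^ 2) : √t ≤ √K * s := by
  have := Real.sqrt_le_sqrt h
  rwa [Real.sqrt_mul hK, Real.sqrt_sq hs] at this

variable {S : Euc d → ℝ} {c C : ℝ}

/-- Points of prescribed height `s` above any point. -/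
lemma HeightData.exists_above (hd : 3 ≤ d) (h : BdryData D u ε m M c₀) (hS : HeightData D S c C)
    (Smax : ℝ) : ∃ C' : ℝ, 1 ≤ C' ∧ ∀ x ∈ D, ∀ s, √(S x) ≤ s → s ≤ Smax → ∃ p ∈ D,
      s ≤ C' * √(S p) ∧ √(S p) ≤ C' * s ∧ dist x p ≤ C' * s := by
  obtain ⟨o, ho⟩ := h.conn.nonempty
  obtain ⟨R, hR⟩ := h.bdd.exists_norm_le
  have hR0 : 0 ≤ R := (norm_nonneg _).trans (hR o ho)
  have hm := h.m_pos
  have hM := h.M_pos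
  have hε := h.ε_pos
  have hε1 := h.ε_le
  have hc := hS.c_pos
  have hC := hS.C_pos
  set σ := min (c * ε / 8) (ε / 8) with hσ
  have hσ0 : 0 < σ := lt_min (by positivity) (by positivity)
  have hs1 : 0 < √σ := Real.sqrt_pos.2 hσ0
  have hSo : 0 < √(S o) := Real.sqrt_pos.2 (hS.pos hd h ho)
  set K₁ := √(4 * M / (m * c))
  set K₂ := √(C * (1 / c + 1))
  set K₃ := |Smax| / √(S o)
  set K₄ := √(S o) / √σ
  set K₅ := 2 * R / √σ
  have hK₁ : 0 ≤ K₁ := by positivity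
  have hK₂ : 0 ≤ K₂ := by positivity
  have hK₃ : 0 ≤ K₃ := by positivity
  have hK₄ : 0 ≤ K₄ := by positivity
  have hK₅ : 0 ≤ K₅ := by positivity
  refine ⟨1 + K₁ + K₂ + K₃ + K₄ + K₅, by linarith, fun x hx s hxs hsS => ?_⟩
  have hs0 : 0 < s := (Real.sqrt_pos.2 (hS.pos hd h hx)).trans_le hxs
  rcases lt_or_ge s (√σ) with hs | hs
  · have hsσ : s ^ 2 < σ := (Real.lt_sqrt hs0.le).1 hs
    have hs2 : S x ≤ s ^ 2 := (Real.sqrt_le_left hs0.le).1 hxs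
    have hbx : c * bd D x ≤ s ^ 2 := (hS.lower x hx).trans hs2
    have hbx' : bd D x ≤ 1 / c * s ^ 2 := by
      rw [one_div, ← div_eq_inv_mul, le_div_iff₀ hc]; linarith
    have hbε : bd D x < ε / 8 := by
      have : c * bd D x < c * (ε / 8) := by
        have := hsσ.trans_le (min_le_left _ _); linarith
      exact lt_of_mul_lt_mul_left this hc.le
    have hsε : s ^ 2 < ε / 8 := hsσ.trans_le (min_le_right _ _)
    obtain ⟨p, hp, hxp⟩ := h.exists_nearest hd hx
    obtain ⟨n, hn, hmn⟩ := h.exists_normal hp (a := x) (by rw [mem_ball]; linarith)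
    obtain ⟨hx'D, hux', -⟩ := h.vertical hd hp hx (by linarith) hn hmn (sq_nonneg s) (by linarith)
    set x' := x - (s ^ 2) • n with hx'
    have hdx : dist x' x = s ^ 2 := by
      rw [dist_eq_norm, hx', sub_sub_cancel_left, norm_neg, norm_smul, hn, mul_one,
        Real.norm_of_nonneg (sq_nonneg s)]
    have hux0 : u x < 0 := (h.sign p hp x (by rw [mem_ball]; linarith)).1 hx
    have hb := bd_le_add (D := D) x x'
    have hnu := h.neg_u_le hd hx'D (by linarith)
    refine ⟨x', hx'D, ?_, ?_, ?_⟩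
    · have h1 : s ≤ K₁ * √(S x') := le_sqrt_mul_sqrt (by positivity) (by
        rw [div_mul_eq_mul_div, le_div_iff₀ (by positivity)]
        have h2 := hS.lower x' hx'D
        have h3 : m * s ^ 2 ≤ 4 * M * bd D x' := by linarith
        have h4 := mul_le_mul_of_nonneg_right h3 hc.le
        have h5 := mul_le_mul_of_nonneg_left h2 (show 0 ≤ 4 * M by positivity)
        linarith)
      refine h1.trans (mul_le_mul_of_nonneg_right (by linarith) (Real.sqrt_nonneg _))
    · have h1 : √(S x') ≤ K₂ * s := sqrt_le_sqrt_mul (by positivity) hs0.le (by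
        refine (hS.upper x' hx'D).trans ?_
        rw [mul_assoc]
        exact mul_le_mul_of_nonneg_left (by linarith) hC.le)
      exact h1.trans (mul_le_mul_of_nonneg_right (by linarith) hs0.le)
    · rw [dist_comm, hdx, pow_two]
      refine mul_le_mul_of_nonneg_right ?_ hs0.le
      nlinarith
  · refine ⟨o, ho, ?_, ?_, ?_⟩
    · have h1 : s ≤ K₃ * √(S o) := by
        rw [div_mul_cancel₀ _ hSo.ne']; exact hsS.trans (le_abs_self _)
      exact h1.trans (mul_le_mul_of_nonneg_right (by linarith) hSo.le)
    · have h1 : √(S o) ≤ K₄ * s := by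
        rw [div_mul_eq_mul_div, le_div_iff₀ hs1]
        exact mul_le_mul_of_nonneg_left hs hSo.le
      exact h1.trans (mul_le_mul_of_nonneg_right (by linarith) hs0.le)
    · have h1 : dist x o ≤ K₅ * s := by
        rw [div_mul_eq_mul_div, le_div_iff₀ hs1]
        refine mul_le_mul ?_ hs hs1.le (by positivity)
        rw [dist_eq_norm]
        exact (norm_sub_le _ _).trans (by linarith [hR x hx, hR o ho])
      exact h1.trans (mul_le_mul_of_nonneg_right (by linarith) hs0.le)

lemma HeightData.dist_le (hd : 3 ≤ d) (h : BdryData D u ε m M c₀) (hS : HeightData D S c C)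
    {C₀ : ℝ} (hC₀ : 1 ≤ C₀) : ∃ C₁ : ℝ, ∀ x ∈ D, ∀ y ∈ D, ∀ s, 0 < s → s ≤ C₀ * √(S x) →
      s ≤ C₀ * √(S y) → √(S x) ≤ C₀ * s → √(S y) ≤ C₀ * s → dist x y ≤ C₀ * s →
      minDist D x y ≤ C₁ := by
  have hc := hS.c_pos
  have hC := hS.C_pos
  have hC₀0 : 0 < C₀ := by linarith
  set k := 1 / (C * C₀ ^ 2) with hk
  have hk0 : 0 < k := by positivity
  set B := C₀ ^ 2 / c with hB
  have hB0 : 0 < B := by positivity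
  obtain ⟨s₂, C₁, hs₂, h1⟩ := h.dist_le_small hd hk0 hB0 hC₀0
  obtain ⟨C₂, h2⟩ := h.dist_le_large hd (k := k * s₂ ^ 2) (by positivity)
  have hlow : ∀ x ∈ D, ∀ s, 0 < s → s ≤ C₀ * √(S x) → k * s ^ 2 ≤ bd D x := by
    intro x hx s hs hsx
    have h3 : s ^ 2 ≤ C₀ ^ 2 * S x := by
      have := pow_le_pow_left₀ hs.le hsx 2
      rwa [mul_pow, Real.sq_sqrt (hS.pos hd h hx).le] at this
    have h4 := mul_le_mul_of_nonneg_left (hS.upper x hx) (sq_nonneg C₀)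
    rw [hk, div_mul_eq_mul_div, one_mul, div_le_iff₀ (by positivity)]
    linarith
  have hup : ∀ x ∈ D, ∀ s, 0 < s → √(S x) ≤ C₀ * s → bd D x ≤ B * s ^ 2 := by
    intro x hx s hs hsx
    have h3 : S x ≤ C₀ ^ 2 * s ^ 2 := by
      have := pow_le_pow_left₀ (Real.sqrt_nonneg _) hsx 2
      rwa [mul_pow, Real.sq_sqrt (hS.pos hd h hx).le] at this
    have h4 := hS.lower x hx
    rw [hB, div_mul_eq_mul_div, le_div_iff₀ hc]
    linarith
  refine ⟨max C₁ C₂, fun x hx y hy s hs a1 a2 a3 a4 a5 => ?_⟩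
  rcases le_total s s₂ with hss | hss
  · exact (h1 x hx y hy s hs hss (hlow x hx s hs a1) (hup x hx s hs a3) (hlow y hy s hs a2)
      (hup y hy s hs a4) a5).trans (le_max_left _ _)
  · have h5 : k * s₂ ^ 2 ≤ k * s ^ 2 :=
      mul_le_mul_of_nonneg_left (pow_le_pow_left₀ hs₂.le hss 2) hk0.le
    exact (h2 x hx y hy (h5.trans (hlow x hx s hs a1)) (h5.trans (hlow y hy s hs a2))).trans
      (le_max_right _ _)

lemma HeightData.rr_bounded (hd : 3 ≤ d) (h : BdryData D u ε m M c₀) (hS : HeightData D S c C) :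
    ∃ Smax, ∀ x y : D, rr (fun z : D => √(S z)) x y ≤ Smax := by
  obtain ⟨R, hR⟩ := h.bdd.exists_norm_le
  obtain ⟨z, hz⟩ := h.compl_nonempty hd
  have hC := hS.C_pos
  have hSle : ∀ x : D, √(S x) ≤ √(C * (R + ‖z‖)) := by
    intro x
    refine Real.sqrt_le_sqrt ((hS.upper x x.2).trans (mul_le_mul_of_nonneg_left ?_ hC.le))
    refine (infDist_le_dist_of_mem hz).trans ?_
    rw [dist_eq_norm]
    exact (norm_sub_le _ _).trans (by linarith [hR x x.2])
  refine ⟨2 * R + √(C * (R + ‖z‖)), fun x y => ?_⟩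
  refine add_le_add ?_ (max_le (hSle x) (hSle y))
  rw [Subtype.dist_eq, dist_eq_norm]
  exact (norm_sub_le _ _).trans (by linarith [hR x x.2, hR y y.2])

end

/-- Every bounded strongly minimally convex domain `D ⊆ ℝ^d` (`d ≥ 3`)
is Gromov hyperbolic with respect to the minimal distance `ρ_D`. -/
theorem minimal_metric_gromov_hyperbolic (d : ℕ) (hd : 3 ≤ d) (D : Set (Euc d))
    (hD : IsStronglyMinimallyConvex D) :
    ∃ δ : ℝ, 0 ≤ δ ∧ ∀ x ∈ D, ∀ y ∈ D, ∀ z ∈ D, ∀ o ∈ D,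
      min (gromovProd D o x z) (gromovProd D o y z) - δ ≤ gromovProd D o x y := by
  obtain ⟨u, ε, m, M, c₀, h⟩ := exists_bdryData hD
  obtain ⟨S, c, C, hS⟩ := h.exists_height hd
  obtain ⟨L₀, hL₀⟩ := hS.fill_le hd h
  obtain ⟨Smax, hSmax⟩ := hS.rr_bounded hd h
  obtain ⟨C', hC', hV⟩ := hS.exists_above hd h Smax
  obtain ⟨K, L, hcomp⟩ := comparison_of_filling (X := D) (h := fun z : D => √(S z))
    (ρ := fun a b : D => minDist D a b)
    (fun x => Real.sqrt_pos.2 (hS.pos hd h x.2))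
    (fun x y => minDist_nonneg _ _)
    (fun x => minDist_self x.2)
    (fun x y => minDist_symm hd h.isOpen x y)
    (fun x y z => minDist_triangle hd h.isOpen h.conn x.2 y.2 z.2)
    (fun x y => exists_roughChain hd h.isOpen h.conn x y)
    Smax C' hC' hSmax
    (fun x s hs hs' => by
      obtain ⟨p, hp, h1, h2, h3⟩ := hV x x.2 s hs hs'
      exact ⟨⟨p, hp⟩, h1, h2, h3⟩)
    (fun C₀ hC₀ => by
      obtain ⟨C₁, h1⟩ := hS.dist_le hd h hC₀
      exact ⟨C₁, fun x y s hs a1 a2 a3 a4 a5 => h1 x x.2 y y.2 s hs a1 a2 a3 a4 a5⟩)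
    L₀ hL₀
  obtain ⟨δ, hδ, hyp⟩ := hcomp.hyperbolic
  exact ⟨δ, hδ, fun x hx y hy z hz o ho => hyp ⟨x, hx⟩ ⟨y, hy⟩ ⟨z, hz⟩ ⟨o, ho⟩⟩
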